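/- For each n ≥ 2 there exists a critical angle θ₀ ∈ [π/2, π] with the following property: for every θ ∈ (θ₀, 2π) the cone 𝒪_θ ⊆ ℝⁿ has the backward uniqueness property (BU), and for every θ ∈ (0, θ₀) the cone 𝒪_θ does not have the backward uniqueness property. -/

import Mathlib

open Real Set Filter

/-- The Laplacian of `f` at `x`, computed as the sum of the second partial
derivatives in the coordinate directions. -/
noncomputable def lap {n : ℕ} (f : EuclideanSpace ℝ (Fin n) → ℝ)
    (x : EuclideanSpace ℝ (Fin n)) : ℝ :=
  ∑ i, fderiv ℝ (fun y => fderiv ℝ f y (EuclideanSpace.single i 1)) x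
      (EuclideanSpace.single i 1)

/-- The open cone `𝒪_θ = {x : x₁ > |x| cos (θ/2)}` in `ℝⁿ`. -/
def cone (n : ℕ) [NeZero n] (θ : ℝ) : Set (EuclideanSpace ℝ (Fin n)) :=
  {x | ‖x‖ * Real.cos (θ / 2) < x 0}

/-- The backward uniqueness property (BU) for an open set `Ω ⊆ ℝⁿ`:
every bounded smooth solution of `|∂ₜ u - Δ u| ≤ c₁ (|∇u| + |u|)` on `Ω × (0, T)`
whose continuous extension vanishes at time `T` vanishes identically. -/
def HasBU (n : ℕ) (Ω : Set (EuclideanSpace ℝ (Fin n))) : Prop :=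
  ∀ T : ℝ, 0 < T → ∀ c₁ : ℝ, 0 ≤ c₁ →
    ∀ u : EuclideanSpace ℝ (Fin n) → ℝ → ℝ,
      ContDiffOn ℝ (⊤ : ℕ∞) (fun p : EuclideanSpace ℝ (Fin n) × ℝ => u p.1 p.2)
        (Ω ×ˢ Set.Ioo 0 T) →
      (∃ M : ℝ, ∀ x ∈ Ω, ∀ t ∈ Set.Ioo (0 : ℝ) T, |u x t| ≤ M) →
      (∀ x ∈ Ω, ∀ t ∈ Set.Ioo (0 : ℝ) T,
        |deriv (u x) t - lap (fun y => u y t) x| ≤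
          c₁ * (‖gradient (fun y => u y t) x‖ + |u x t|)) →
      (∀ x ∈ Ω, Filter.Tendsto (u x) (nhdsWithin T (Set.Iio T)) (nhds 0)) →
      ∀ x ∈ Ω, ∀ t ∈ Set.Ioo (0 : ℝ) T, u x t = 0

/-!
After reversing time, backward uniqueness for the half-space `x_o > 0` says that a bounded solution
of `|∂ₜu + Δu| ≤ c (|∇u| + |u|)` with zero initial data vanishes. No boundary values are prescribed,
so cutting `u` off near `x_o = 0` produces an error there. A Carleman inequality with the weight
`γ ((L - t) + 16 μ (L - t)²) x_o - ((2 + L - t) / 100) |x|²` absorbs it: as `γ → ∞` the weight is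
larger at any fixed interior point with `t < L / 2` than on the cut-off layers `x_o ≈ 0` and
`t ≈ L`, while its Gaussian part makes the contribution of large `|x|` negligible.

A cone is a union of rotated copies of any narrower cone, so backward uniqueness passes to wider
cones. For `θ < π / 2` it fails: choose a linear form `ℓ x = α x₁ + i β xⱼ` with `α² - β² = -1/4`
such that `Re (ℓ x + α)²` has a positive lower bound on the cone; then the real part of
`(1 - t)^(-1/2) exp (-(ℓ x + α)² / (1 - t))` is a solution tending to `0` as `t → 1`. The critical
angle is the infimum of the angles having the property.
-/

namespace BackwardUniqueness

open MeasureTheory Topology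
open scoped ContDiff

section DirectionalDerivative

variable {X : Type*} [NormedAddCommGroup X] [NormedSpace ℝ X]

/-- The derivative of `f` in the constant direction `v`, as a function of the base point. -/
noncomputable def dirDeriv (v : X) (f : X → ℝ) : X → ℝ := fun p => fderiv ℝ f p v

@[fun_prop]
theorem differentiableAt_of_smooth {f : X → ℝ} (hf : ContDiff ℝ ∞ f) (p : X) :
    DifferentiableAt ℝ f p :=
  hf.differentiable (by simp) p

@[fun_prop]
theorem contDiff_dirDeriv {f : X → ℝ} (hf : ContDiff ℝ ∞ f) (v : X) :
    ContDiff ℝ ∞ (dirDeriv v f) :=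
  (hf.fderiv_right (m := ∞) (by simp)).clm_apply contDiff_const

theorem hasCompactSupport_dirDeriv {f : X → ℝ} (hf : HasCompactSupport f) (v : X) :
    HasCompactSupport (dirDeriv v f) :=
  hf.fderiv_apply ℝ v

variable {f g : X → ℝ} {p : X}

theorem dirDeriv_congr (h : f =ᶠ[𝓝 p] g) (v : X) : dirDeriv v f p = dirDeriv v g p := by
  rw [dirDeriv, dirDeriv, h.fderiv_eq]

theorem dirDeriv_const (c : ℝ) (v p : X) : dirDeriv v (fun _ => c) p = 0 := by
  simp [dirDeriv]

theorem dirDeriv_add (hf : DifferentiableAt ℝ f p) (hg : DifferentiableAt ℝ g p) (v : X) :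
    dirDeriv v (fun x => f x + g x) p = dirDeriv v f p + dirDeriv v g p := by
  simp [dirDeriv, fderiv_fun_add hf hg]

theorem dirDeriv_sub (hf : DifferentiableAt ℝ f p) (hg : DifferentiableAt ℝ g p) (v : X) :
    dirDeriv v (fun x => f x - g x) p = dirDeriv v f p - dirDeriv v g p := by
  simp [dirDeriv, fderiv_fun_sub hf hg]

theorem dirDeriv_sum {ι : Type*} (s : Finset ι) {f : ι → X → ℝ}
    (hf : ∀ i ∈ s, DifferentiableAt ℝ (f i) p) (v : X) :
    dirDeriv v (fun x => ∑ i ∈ s, f i x) p = ∑ i ∈ s, dirDeriv v (f i) p := by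
  simp [dirDeriv, fderiv_fun_sum hf]

theorem dirDeriv_mul (hf : DifferentiableAt ℝ f p) (hg : DifferentiableAt ℝ g p) (v : X) :
    dirDeriv v (fun x => f x * g x) p = dirDeriv v f p * g p + f p * dirDeriv v g p := by
  simp only [dirDeriv, fderiv_fun_mul hf hg, add_apply, smul_apply, smul_eq_mul]
  ring

theorem dirDeriv_const_mul (hf : DifferentiableAt ℝ f p) (c : ℝ) (v : X) :
    dirDeriv v (fun x => c * f x) p = c * dirDeriv v f p := by
  rw [dirDeriv_mul (differentiableAt_const c) hf, dirDeriv_const, zero_mul, zero_add]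

theorem dirDeriv_affine (hf : DifferentiableAt ℝ f p) (a b : ℝ) (v : X) :
    dirDeriv v (fun x => a * f x + b) p = a * dirDeriv v f p := by
  rw [dirDeriv_add (hf.const_mul a) (differentiableAt_const b), dirDeriv_const_mul hf,
    dirDeriv_const, add_zero]

theorem dirDeriv_sq (hf : DifferentiableAt ℝ f p) (v : X) :
    dirDeriv v (fun x => f x ^ 2) p = 2 * f p * dirDeriv v f p := by
  simp only [pow_two, dirDeriv_mul hf hf]
  ring

theorem dirDeriv_comp {s : ℝ → ℝ} (hs : DifferentiableAt ℝ s (f p)) (hf : DifferentiableAt ℝ f p)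
    (v : X) : dirDeriv v (fun x => s (f x)) p = deriv s (f p) * dirDeriv v f p := by
  have h := hs.hasDerivAt.comp_hasFDerivAt p hf.hasFDerivAt
  change fderiv ℝ (s ∘ f) p v = _
  rw [h.fderiv]
  rfl

theorem dirDeriv_exp (hf : DifferentiableAt ℝ f p) (v : X) :
    dirDeriv v (fun x => Real.exp (f x)) p = Real.exp (f p) * dirDeriv v f p := by
  rw [dirDeriv_comp Real.differentiableAt_exp hf, Real.deriv_exp]

theorem dirDeriv_comm (hf : ContDiff ℝ ∞ f) (v w p : X) :
    dirDeriv v (dirDeriv w f) p = dirDeriv w (dirDeriv v f) p := by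
  have hsymm : IsSymmSndFDerivAt ℝ f p :=
    hf.contDiffAt.isSymmSndFDerivAt (by simpa using ENat.LEInfty.out)
  have hdiff : DifferentiableAt ℝ (fderiv ℝ f) p :=
    (hf.fderiv_right (m := ∞) (by simp)).differentiable (by simp) p
  have hsecond (a b : X) : dirDeriv a (dirDeriv b f) p = fderiv ℝ (fderiv ℝ f) p a b := by
    unfold dirDeriv
    simp [fderiv_clm_apply hdiff (differentiableAt_const b)]
  rw [hsecond, hsecond]
  exact hsymm v w

theorem dirDeriv_comp_add_right (f : X → ℝ) (a v : X) :
    dirDeriv v (fun x => f (x + a)) = fun p => dirDeriv v f (p + a) := by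
  ext p
  rw [dirDeriv, dirDeriv, fderiv_comp_add_right]

theorem dirDeriv_comp_equiv {Y : Type*} [NormedAddCommGroup Y] [NormedSpace ℝ Y] (A : X ≃L[ℝ] Y)
    (f : Y → ℝ) (v : X) : dirDeriv v (fun x => f (A x)) = fun p => dirDeriv (A v) f (A p) := by
  ext p
  rw [dirDeriv, show (fun x => f (A x)) = f ∘ A from rfl, A.comp_right_fderiv]
  rfl

theorem dirDeriv_neg_left (f : X → ℝ) (v p : X) : dirDeriv (-v) f p = -dirDeriv v f p :=
  map_neg (fderiv ℝ f p) v

end DirectionalDerivative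

section FrameOperators

variable {X : Type*} [NormedAddCommGroup X] [NormedSpace ℝ X] {ι : Type*} [Fintype ι]

/-- The Laplacian `∑ᵢ ∂ᵢ²` along the finite family `e` of directions. On space-time, `e` consists
of the spatial directions only. -/
noncomputable def frameLap (e : ι → X) (f : X → ℝ) : X → ℝ :=
  fun p => ∑ i, dirDeriv (e i) (dirDeriv (e i) f) p

/-- The product `∇f · ∇g` of the gradients along the family `e`. -/
noncomputable def gradDot (e : ι → X) (f g : X → ℝ) : X → ℝ :=
  fun p => ∑ i, dirDeriv (e i) f p * dirDeriv (e i) g p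

/-- The squared length `|∇f|²` of the gradient along the family `e`. -/
noncomputable def gradSq (e : ι → X) (f : X → ℝ) : X → ℝ :=
  fun p => ∑ i, dirDeriv (e i) f p ^ 2

/-- The Hessian of `φ` along `e`, evaluated on the gradient of `f`. -/
noncomputable def hessForm (e : ι → X) (φ f : X → ℝ) : X → ℝ :=
  fun p => ∑ i, ∑ j,
    dirDeriv (e i) (dirDeriv (e j) φ) p * dirDeriv (e i) f p * dirDeriv (e j) f p

/-- The backward heat operator `∂ₛ + Δ`. -/
noncomputable def backwardHeat (e : ι → X) (s : X) (f : X → ℝ) : X → ℝ :=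
  fun p => dirDeriv s f p + frameLap e f p

/-- The differential inequality `|∂ₛu + Δu| ≤ c (|∇u| + |u|)` at the point `p`. -/
def BackwardHeatBound (e : ι → X) (s : X) (c : ℝ) (u : X → ℝ) (p : X) : Prop :=
  |backwardHeat e s u p| ≤ c * (√(gradSq e u p) + |u p|)

@[fun_prop]
theorem contDiff_frameLap {f : X → ℝ} (hf : ContDiff ℝ ∞ f) (e : ι → X) :
    ContDiff ℝ ∞ (frameLap e f) := by
  unfold frameLap
  fun_prop

@[fun_prop]
theorem contDiff_gradSq {f : X → ℝ} (hf : ContDiff ℝ ∞ f) (e : ι → X) :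
    ContDiff ℝ ∞ (gradSq e f) := by
  unfold gradSq
  fun_prop

@[fun_prop]
theorem contDiff_backwardHeat {f : X → ℝ} (hf : ContDiff ℝ ∞ f) (e : ι → X) (s : X) :
    ContDiff ℝ ∞ (backwardHeat e s f) := by
  unfold backwardHeat
  fun_prop

variable (e : ι → X) {f g : X → ℝ} {p : X}

theorem gradSq_nonneg (f : X → ℝ) (p : X) : 0 ≤ gradSq e f p :=
  Finset.sum_nonneg fun _ _ => sq_nonneg _

theorem sq_gradDot_le (f g : X → ℝ) (p : X) :
    gradDot e f g p ^ 2 ≤ gradSq e f p * gradSq e g p :=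
  Finset.sum_mul_sq_le_sq_mul_sq _ _ _

theorem two_mul_abs_gradDot_le (f g : X → ℝ) (p : X) :
    2 * |gradDot e f g p| ≤ gradSq e f p + gradSq e g p := by
  have hf := gradSq_nonneg e f p
  have hg := gradSq_nonneg e g p
  refine le_of_sq_le_sq ?_ (add_nonneg hf hg)
  calc (2 * |gradDot e f g p|) ^ 2 = 4 * gradDot e f g p ^ 2 := by rw [mul_pow, sq_abs]; ring
    _ ≤ 4 * (gradSq e f p * gradSq e g p) := by gcongr; exact sq_gradDot_le e f g p
    _ ≤ (gradSq e f p + gradSq e g p) ^ 2 := by nlinarith [sq_nonneg (gradSq e f p - gradSq e g p)]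

theorem BackwardHeatBound.sq_le {s : X} {c : ℝ} (h : BackwardHeatBound e s c f p) :
    backwardHeat e s f p ^ 2 ≤ 2 * c ^ 2 * (gradSq e f p + f p ^ 2) := by
  calc backwardHeat e s f p ^ 2 = |backwardHeat e s f p| ^ 2 := (sq_abs _).symm
    _ ≤ (c * (√(gradSq e f p) + |f p|)) ^ 2 := pow_le_pow_left₀ (abs_nonneg _) h 2
    _ ≤ c ^ 2 * (2 * (√(gradSq e f p) ^ 2 + |f p| ^ 2)) := by
      rw [mul_pow]; gcongr; exact add_sq_le
    _ = 2 * c ^ 2 * (gradSq e f p + f p ^ 2) := by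
      rw [Real.sq_sqrt (gradSq_nonneg _ _ _), sq_abs]; ring

theorem gradSq_eq_gradDot (f : X → ℝ) (p : X) : gradSq e f p = gradDot e f f p := by
  simp only [gradSq, gradDot, pow_two]

theorem gradSq_congr (h : f =ᶠ[𝓝 p] g) : gradSq e f p = gradSq e g p := by
  simp only [gradSq, dirDeriv_congr h]

theorem frameLap_congr (h : f =ᶠ[𝓝 p] g) : frameLap e f p = frameLap e g p := by
  refine Finset.sum_congr rfl fun i _ => dirDeriv_congr ?_ _
  filter_upwards [h.eventuallyEq_nhds] with q hq using dirDeriv_congr hq _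

theorem backwardHeat_congr (s : X) (h : f =ᶠ[𝓝 p] g) :
    backwardHeat e s f p = backwardHeat e s g p := by
  rw [backwardHeat, backwardHeat, dirDeriv_congr h, frameLap_congr e h]

theorem gradSq_const (c : ℝ) (p : X) : gradSq e (fun _ => c) p = 0 := by
  simp [gradSq, dirDeriv_const]

theorem frameLap_const (c : ℝ) (p : X) : frameLap e (fun _ => c) p = 0 := by
  simp [frameLap, funext (dirDeriv_const c _), dirDeriv_const]

theorem backwardHeat_const (s : X) (c : ℝ) (p : X) : backwardHeat e s (fun _ => c) p = 0 := by
  rw [backwardHeat, dirDeriv_const, frameLap_const, add_zero]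

theorem gradSq_affine (hf : DifferentiableAt ℝ f p) (a b : ℝ) :
    gradSq e (fun x => a * f x + b) p = a ^ 2 * gradSq e f p := by
  simp only [gradSq, dirDeriv_affine hf, mul_pow, Finset.mul_sum]

theorem frameLap_affine (hf : ContDiff ℝ ∞ f) (a b : ℝ) (p : X) :
    frameLap e (fun x => a * f x + b) p = a * frameLap e f p := by
  have hfst (i : ι) : dirDeriv (e i) (fun x => a * f x + b) = fun x => a * dirDeriv (e i) f x :=
    funext fun x => dirDeriv_affine (by fun_prop) a b _
  simp only [frameLap, hfst, Finset.mul_sum]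
  exact Finset.sum_congr rfl fun i _ => dirDeriv_const_mul (by fun_prop) a _

theorem gradSq_mul_le (hf : DifferentiableAt ℝ f p) (hg : DifferentiableAt ℝ g p) :
    gradSq e (fun x => f x * g x) p ≤ 2 * g p ^ 2 * gradSq e f p + 2 * f p ^ 2 * gradSq e g p := by
  simp only [gradSq, Finset.mul_sum, ← Finset.sum_add_distrib]
  refine Finset.sum_le_sum fun i _ => ?_
  rw [dirDeriv_mul hf hg]
  nlinarith [sq_nonneg (dirDeriv (e i) f p * g p - f p * dirDeriv (e i) g p)]

theorem dirDeriv_gradSq (hf : ContDiff ℝ ∞ f) (v p : X) :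
    dirDeriv v (gradSq e f) p = 2 * gradDot e (dirDeriv v f) f p := by
  unfold gradSq
  rw [dirDeriv_sum _ (fun i _ => by fun_prop), gradDot, Finset.mul_sum]
  refine Finset.sum_congr rfl fun i _ => ?_
  rw [dirDeriv_sq (by fun_prop), dirDeriv_comm hf]
  ring

theorem frameLap_mul (hf : ContDiff ℝ ∞ f) (hg : ContDiff ℝ ∞ g) (p : X) :
    frameLap e (fun x => f x * g x) p =
      frameLap e f p * g p + f p * frameLap e g p + 2 * gradDot e f g p := by
  simp only [frameLap, gradDot, Finset.sum_mul, Finset.mul_sum, ← Finset.sum_add_distrib]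
  refine Finset.sum_congr rfl fun i _ => ?_
  have hfst : dirDeriv (e i) (fun x => f x * g x) =
      fun x => dirDeriv (e i) f x * g x + f x * dirDeriv (e i) g x :=
    funext fun x => dirDeriv_mul (by fun_prop) (by fun_prop) _
  rw [hfst, dirDeriv_add (by fun_prop) (by fun_prop), dirDeriv_mul (by fun_prop) (by fun_prop),
    dirDeriv_mul (by fun_prop) (by fun_prop)]
  ring

theorem gradSq_comp {s : ℝ → ℝ} (hs : DifferentiableAt ℝ s (f p)) (hf : DifferentiableAt ℝ f p) :
    gradSq e (fun x => s (f x)) p = deriv s (f p) ^ 2 * gradSq e f p := by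
  simp only [gradSq, dirDeriv_comp hs hf, mul_pow, Finset.mul_sum]

theorem frameLap_comp {s : ℝ → ℝ} (hs : ContDiff ℝ ∞ s) (hf : ContDiff ℝ ∞ f) (p : X) :
    frameLap e (fun x => s (f x)) p =
      deriv (deriv s) (f p) * gradSq e f p + deriv s (f p) * frameLap e f p := by
  simp only [frameLap, gradSq, Finset.mul_sum, ← Finset.sum_add_distrib]
  refine Finset.sum_congr rfl fun i _ => ?_
  have hfst : dirDeriv (e i) (fun x => s (f x)) = fun x => deriv s (f x) * dirDeriv (e i) f x :=
    funext fun x => dirDeriv_comp (by fun_prop) (by fun_prop) _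
  rw [hfst, dirDeriv_mul (by fun_prop) (by fun_prop), dirDeriv_comp (by fun_prop) (by fun_prop)]
  ring

end FrameOperators

section ZeroIntegral

variable {X : Type*} [MeasurableSpace X] {μ : Measure X} {f g : X → ℝ}

/-- `f` is integrable and has integral zero. Divergences of compactly supported fields have this
property, so it records the outcome of an integration by parts. -/
def HasZeroIntegral (μ : Measure X) (f : X → ℝ) : Prop :=
  Integrable f μ ∧ ∫ x, f x ∂μ = 0

theorem HasZeroIntegral.congr (hf : HasZeroIntegral μ f) (h : ∀ x, g x = f x) :
    HasZeroIntegral μ g :=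
  funext h ▸ hf

theorem HasZeroIntegral.add (hf : HasZeroIntegral μ f) (hg : HasZeroIntegral μ g) :
    HasZeroIntegral μ (fun x => f x + g x) :=
  ⟨hf.1.add hg.1, by rw [integral_add hf.1 hg.1, hf.2, hg.2, add_zero]⟩

theorem HasZeroIntegral.sub (hf : HasZeroIntegral μ f) (hg : HasZeroIntegral μ g) :
    HasZeroIntegral μ (fun x => f x - g x) :=
  ⟨hf.1.sub hg.1, by rw [integral_sub hf.1 hg.1, hf.2, hg.2, sub_zero]⟩

theorem HasZeroIntegral.const_mul (hf : HasZeroIntegral μ f) (c : ℝ) :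
    HasZeroIntegral μ (fun x => c * f x) :=
  ⟨hf.1.const_mul c, by rw [integral_const_mul, hf.2, mul_zero]⟩

theorem HasZeroIntegral.sum {ι : Type*} (s : Finset ι) {f : ι → X → ℝ}
    (hf : ∀ i ∈ s, HasZeroIntegral μ (f i)) : HasZeroIntegral μ (fun x => ∑ i ∈ s, f i x) :=
  ⟨integrable_finsetSum _ fun i hi => (hf i hi).1, by
    rw [integral_finsetSum _ fun i hi => (hf i hi).1]
    exact Finset.sum_eq_zero fun i hi => (hf i hi).2⟩

theorem HasZeroIntegral.integral_nonpos_of_eq_neg_add {F : X → ℝ} (hf : HasZeroIntegral μ f)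
    (hF : Integrable F μ) (hF0 : ∀ x, 0 ≤ F x) (hg : ∀ x, g x = -(f x + F x)) :
    Integrable g μ ∧ ∫ x, g x ∂μ ≤ 0 := by
  obtain rfl : g = fun x => -(f x + F x) := funext hg
  refine ⟨(hf.1.add hF).neg, ?_⟩
  rw [integral_neg, integral_add hf.1 hF, hf.2, zero_add, neg_nonpos]
  exact integral_nonneg hF0

theorem integrable_of_eq_zero_of_eventuallyEq [TopologicalSpace X] [OpensMeasurableSpace X]
    [IsFiniteMeasureOnCompacts μ] (hf : Continuous f)
    (hg : HasCompactSupport g) (h : ∀ p, g =ᶠ[𝓝 p] (fun _ => 0) → f p = 0) : Integrable f μ :=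
  hf.integrable_of_hasCompactSupport <| .intro' hg (isClosed_tsupport g) fun p hp =>
    h p (notMem_tsupport_iff_eventuallyEq.mp hp)

theorem hasZeroIntegral_dirDeriv [NormedAddCommGroup X] [NormedSpace ℝ X] [FiniteDimensional ℝ X]
    [BorelSpace X] [μ.IsAddHaarMeasure] (hf : ContDiff ℝ ∞ f) (hc : HasCompactSupport f) (v : X) :
    HasZeroIntegral μ (dirDeriv v f) := by
  have hint : Integrable (dirDeriv v f) μ :=
    (contDiff_dirDeriv hf v).continuous.integrable_of_hasCompactSupport
      (hasCompactSupport_dirDeriv hc v)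
  refine ⟨hint, ?_⟩
  have hparts := integral_mul_fderiv_eq_neg_fderiv_mul_of_integrable (μ := μ)
    (f := fun _ : X => (1 : ℝ)) (g := f) (v := v) (by simp) (by simp only [one_mul]; exact hint)
    (by simpa using hf.continuous.integrable_of_hasCompactSupport hc)
    (by fun_prop) (fun x _ => differentiableAt_of_smooth hf x)
  simpa [dirDeriv] using hparts

end ZeroIntegral

section IntegrationByParts

variable {X : Type*} [NormedAddCommGroup X] [NormedSpace ℝ X] [FiniteDimensional ℝ X]
  [MeasurableSpace X] [BorelSpace X] {ν : Measure X} [ν.IsAddHaarMeasure]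
  {ι : Type*} [Fintype ι] {e : ι → X} {v ζ φ U a g : X → ℝ}

theorem hasZeroIntegral_frameLap_mul_dirDeriv (hv : ContDiff ℝ ∞ v) (hc : HasCompactSupport v)
    (hζ : ContDiff ℝ ∞ ζ) (hζe : ∀ i p, dirDeriv (e i) ζ p = 0) (s : X) :
    HasZeroIntegral ν fun p =>
      2 * ζ p * frameLap e v p * dirDeriv s v p - dirDeriv s ζ p * gradSq e v p := by
  have hterm (i : ι) : HasZeroIntegral ν fun p =>
      2 * ζ p * dirDeriv (e i) (dirDeriv (e i) v) p * dirDeriv s v p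
        - dirDeriv s ζ p * dirDeriv (e i) v p ^ 2 := by
    have hci := hasCompactSupport_dirDeriv hc (e i)
    refine ((hasZeroIntegral_dirDeriv
      (f := fun p => 2 * ζ p * dirDeriv s v p * dirDeriv (e i) v p) (by fun_prop)
        hci.mul_left (e i)).sub
      (hasZeroIntegral_dirDeriv (f := fun p => ζ p * dirDeriv (e i) v p * dirDeriv (e i) v p)
        (by fun_prop) hci.mul_left s)).congr fun p => ?_
    repeat rw [dirDeriv_mul (by fun_prop) (by fun_prop)]
    rw [dirDeriv_const, hζe, dirDeriv_comm hv s (e i)]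
    ring
  refine (HasZeroIntegral.sum Finset.univ fun i _ => hterm i).congr fun p => ?_
  simp only [frameLap, gradSq, Finset.mul_sum, Finset.sum_mul, Finset.sum_sub_distrib]

theorem hasZeroIntegral_rellich (hv : ContDiff ℝ ∞ v) (hc : HasCompactSupport v)
    (hφ : ContDiff ℝ ∞ φ) (hζ : ContDiff ℝ ∞ ζ) (hζe : ∀ i p, dirDeriv (e i) ζ p = 0) :
    HasZeroIntegral ν fun p =>
      ζ p * (2 * frameLap e v p * gradDot e φ v p + 2 * hessForm e φ v p
        - frameLap e φ p * gradSq e v p) := by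
  have hterm (i j : ι) : HasZeroIntegral ν fun p =>
      2 * ζ p * dirDeriv (e i) (dirDeriv (e i) v) p * (dirDeriv (e j) φ p * dirDeriv (e j) v p)
        + 2 * ζ p * (dirDeriv (e i) (dirDeriv (e j) φ) p * dirDeriv (e i) v p * dirDeriv (e j) v p)
        - ζ p * dirDeriv (e i) v p ^ 2 * dirDeriv (e j) (dirDeriv (e j) φ) p := by
    have hci := hasCompactSupport_dirDeriv hc (e i)
    refine ((hasZeroIntegral_dirDeriv
      (f := fun p => 2 * ζ p * dirDeriv (e j) φ p * dirDeriv (e j) v p * dirDeriv (e i) v p)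
        (by fun_prop) hci.mul_left (e i)).sub
      (hasZeroIntegral_dirDeriv
        (f := fun p => ζ p * dirDeriv (e j) φ p * dirDeriv (e i) v p * dirDeriv (e i) v p)
        (by fun_prop) hci.mul_left (e j))).congr fun p => ?_
    repeat rw [dirDeriv_mul (by fun_prop) (by fun_prop)]
    rw [dirDeriv_const, hζe, hζe, dirDeriv_comm hv (e i) (e j)]
    ring
  refine (HasZeroIntegral.sum Finset.univ fun i _ =>
    HasZeroIntegral.sum Finset.univ fun j _ => hterm i j).congr fun p => ?_
  simp only [Finset.sum_add_distrib, Finset.sum_sub_distrib, ← Finset.mul_sum, ← Finset.sum_mul]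
  simp only [frameLap, gradSq, gradDot, hessForm]
  ring

theorem hasZeroIntegral_mul_frameLap_add_gradSq (hv : ContDiff ℝ ∞ v) (hc : HasCompactSupport v)
    (ha : ContDiff ℝ ∞ a) (hae : ∀ i p, dirDeriv (e i) a p = 0) :
    HasZeroIntegral ν fun p => a p * (v p * frameLap e v p + gradSq e v p) := by
  have hterm (i : ι) : HasZeroIntegral ν fun p =>
      a p * (v p * dirDeriv (e i) (dirDeriv (e i) v) p + dirDeriv (e i) v p ^ 2) := by
    refine (hasZeroIntegral_dirDeriv (f := fun p => a p * v p * dirDeriv (e i) v p)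
      (by fun_prop) (hasCompactSupport_dirDeriv hc (e i)).mul_left (e i)).congr fun p => ?_
    repeat rw [dirDeriv_mul (by fun_prop) (by fun_prop)]
    rw [hae]
    ring
  refine (HasZeroIntegral.sum Finset.univ fun i _ => hterm i).congr fun p => ?_
  simp only [frameLap, gradSq, Finset.mul_sum, ← Finset.sum_add_distrib]

theorem hasZeroIntegral_dirDeriv_mul_sq (hv : ContDiff ℝ ∞ v) (hc : HasCompactSupport v)
    (ha : ContDiff ℝ ∞ a) (s : X) :
    HasZeroIntegral ν fun p => dirDeriv s a p * v p ^ 2 + 2 * a p * v p * dirDeriv s v p := by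
  refine (hasZeroIntegral_dirDeriv (f := fun p => a p * v p * v p) (by fun_prop)
    hc.mul_left s).congr fun p => ?_
  repeat rw [dirDeriv_mul (by fun_prop) (by fun_prop)]
  ring

theorem hasZeroIntegral_div_mul_gradient (hv : ContDiff ℝ ∞ v) (hc : HasCompactSupport v)
    (hφ : ContDiff ℝ ∞ φ) (hU : ContDiff ℝ ∞ U) (hζ : ContDiff ℝ ∞ ζ)
    (hζe : ∀ i p, dirDeriv (e i) ζ p = 0) :
    HasZeroIntegral ν fun p =>
      ζ p * (gradDot e U φ p * v p ^ 2 + U p * frameLap e φ p * v p ^ 2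
        + 2 * U p * v p * gradDot e φ v p) := by
  have hterm (i : ι) : HasZeroIntegral ν fun p =>
      ζ p * (dirDeriv (e i) U p * dirDeriv (e i) φ p * v p ^ 2
        + U p * dirDeriv (e i) (dirDeriv (e i) φ) p * v p ^ 2
        + 2 * U p * v p * (dirDeriv (e i) φ p * dirDeriv (e i) v p)) := by
    refine (hasZeroIntegral_dirDeriv_mul_sq (a := fun p => ζ p * U p * dirDeriv (e i) φ p)
      hv hc (by fun_prop) (e i)).congr fun p => ?_
    repeat rw [dirDeriv_mul (by fun_prop) (by fun_prop)]
    rw [hζe]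
    ring
  refine (HasZeroIntegral.sum Finset.univ fun i _ => hterm i).congr fun p => ?_
  simp only [frameLap, gradDot, Finset.mul_sum, Finset.sum_mul, ← Finset.sum_add_distrib]

end IntegrationByParts

section Carleman

section ExpConj

variable {X : Type*} [TopologicalSpace X] {φ w : X → ℝ} {p : X}

/-- The conjugate `e^φ w` of `w` by the weight `e^φ`. -/
noncomputable def expConj {X : Type*} (φ w : X → ℝ) : X → ℝ := fun p => Real.exp (φ p) * w p

theorem hasCompactSupport_expConj (hw : HasCompactSupport w) : HasCompactSupport (expConj φ w) :=
  hw.mul_left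

theorem expConj_eventuallyEq_zero (h : w =ᶠ[𝓝 p] fun _ => 0) :
    expConj φ w =ᶠ[𝓝 p] fun _ => 0 := by
  filter_upwards [h] with q hq
  rw [expConj, hq, mul_zero]

end ExpConj

variable {X : Type*} [NormedAddCommGroup X] [NormedSpace ℝ X] {ι : Type*} [Fintype ι]

/-- The zeroth-order part `U = |∇φ|² - ∂ₛφ + m` of the symmetric part of the conjugated operator
`e^φ (∂ₛ + Δ) e^{-φ}`. The constant `m` shifts weight between the symmetric and antisymmetric
parts. -/
noncomputable def carlemanPotential (e : ι → X) (s : X) (φ : X → ℝ) (m : ℝ) : X → ℝ :=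
  fun p => gradSq e φ p - dirDeriv s φ p + m

/-- The coefficient of `v²` in the commutator of the symmetric and antisymmetric parts of
`e^φ (∂ₛ + Δ) e^{-φ}`, corrected for the shift `m`. -/
noncomputable def carlemanCoeff (e : ι → X) (s : X) (φ : X → ℝ) (m : ℝ) : X → ℝ :=
  fun p => -dirDeriv s (carlemanPotential e s φ m) p
    + 2 * gradDot e (carlemanPotential e s φ m) φ p - 2 * m * carlemanPotential e s φ m p

/-- The commutator form of the Carleman inequality, evaluated at `v = e^φ w`, minus half the square
of `e^φ (∂ₛ + Δ) w`. -/
noncomputable def carlemanBulk (e : ι → X) (s : X) (φ : X → ℝ) (m : ℝ) (w : X → ℝ) : X → ℝ :=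
  fun p => 4 * hessForm e φ (expConj φ w) p + 2 * m * gradSq e (expConj φ w) p
    + carlemanCoeff e s φ m p * expConj φ w p ^ 2
    - 1 / 2 * (Real.exp (φ p) * backwardHeat e s w p) ^ 2

variable {e : ι → X} {s : X} {v w φ ζ U : X → ℝ} {m : ℝ} {p : X}

@[fun_prop]
theorem contDiff_expConj (hφ : ContDiff ℝ ∞ φ) (hw : ContDiff ℝ ∞ w) :
    ContDiff ℝ ∞ (expConj φ w) := by
  unfold expConj
  fun_prop

@[fun_prop]
theorem contDiff_carlemanPotential (hφ : ContDiff ℝ ∞ φ) :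
    ContDiff ℝ ∞ (carlemanPotential e s φ m) := by
  unfold carlemanPotential
  fun_prop

theorem hessForm_eq_zero_of_eventuallyEq_zero (h : v =ᶠ[𝓝 p] fun _ => 0) :
    hessForm e φ v p = 0 := by
  simp only [hessForm, dirDeriv_congr h, dirDeriv_const, mul_zero, Finset.sum_const_zero]

theorem carlemanBulk_eq_zero (h : w =ᶠ[𝓝 p] fun _ => 0) : carlemanBulk e s φ m w p = 0 := by
  have hv := expConj_eventuallyEq_zero (φ := φ) h
  rw [carlemanBulk, hessForm_eq_zero_of_eventuallyEq_zero hv, gradSq_congr e hv, gradSq_const,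
    hv.eq_of_nhds, backwardHeat_congr e s h, backwardHeat_const]
  ring

theorem dirDeriv_expConj (hφ : ContDiff ℝ ∞ φ) (hw : ContDiff ℝ ∞ w) (a p : X) :
    dirDeriv a (expConj φ w) p = Real.exp (φ p) * (dirDeriv a w p + dirDeriv a φ p * w p) := by
  unfold expConj
  rw [dirDeriv_mul (by fun_prop) (by fun_prop), dirDeriv_exp (by fun_prop)]
  ring

theorem gradDot_expConj (hφ : ContDiff ℝ ∞ φ) (hw : ContDiff ℝ ∞ w) (p : X) :
    gradDot e φ (expConj φ w) p =
      Real.exp (φ p) * (gradDot e φ w p + gradSq e φ p * w p) := by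
  simp only [gradDot, gradSq, dirDeriv_expConj hφ hw, Finset.mul_sum, Finset.sum_mul,
    ← Finset.sum_add_distrib]
  exact Finset.sum_congr rfl fun i _ => by ring

theorem frameLap_expConj (hφ : ContDiff ℝ ∞ φ) (hw : ContDiff ℝ ∞ w) (p : X) :
    frameLap e (expConj φ w) p = Real.exp (φ p) *
      (frameLap e w p + 2 * gradDot e φ w p + gradSq e φ p * w p + frameLap e φ p * w p) := by
  simp only [frameLap, gradDot, gradSq, funext (dirDeriv_expConj hφ hw _), Finset.mul_sum,
    Finset.sum_mul, ← Finset.sum_add_distrib]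
  refine Finset.sum_congr rfl fun i _ => ?_
  rw [dirDeriv_mul (by fun_prop) (by fun_prop), dirDeriv_exp (by fun_prop),
    dirDeriv_add (by fun_prop) (by fun_prop), dirDeriv_mul (by fun_prop) (by fun_prop)]
  ring

theorem exp_mul_backwardHeat_eq (hφ : ContDiff ℝ ∞ φ) (hw : ContDiff ℝ ∞ w) (m : ℝ) (p : X) :
    Real.exp (φ p) * backwardHeat e s w p =
      (frameLap e (expConj φ w) p + carlemanPotential e s φ m p * expConj φ w p)
      + (dirDeriv s (expConj φ w) p - 2 * gradDot e φ (expConj φ w) p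
        - (frameLap e φ p + m) * expConj φ w p) := by
  rw [gradDot_expConj hφ hw, frameLap_expConj hφ hw, dirDeriv_expConj hφ hw, backwardHeat,
    carlemanPotential, expConj]
  ring

theorem exp_sq_mul_gradSq_le (hφ : ContDiff ℝ ∞ φ) (hw : ContDiff ℝ ∞ w) (p : X) :
    Real.exp (φ p) ^ 2 * gradSq e w p ≤
      2 * gradSq e (expConj φ w) p + 2 * gradSq e φ p * expConj φ w p ^ 2 := by
  simp only [gradSq, Finset.mul_sum, Finset.sum_mul, ← Finset.sum_add_distrib,
    dirDeriv_expConj hφ hw, expConj]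
  refine Finset.sum_le_sum fun i _ => ?_
  nlinarith [sq_nonneg (Real.exp (φ p) * (dirDeriv (e i) w p + 2 * dirDeriv (e i) φ p * w p))]

theorem half_sq_exp_mul_backwardHeat_le {c : ℝ} (hφ : ContDiff ℝ ∞ φ) (hw : ContDiff ℝ ∞ w)
    (h : BackwardHeatBound e s c w p) :
    1 / 2 * (Real.exp (φ p) * backwardHeat e s w p) ^ 2 ≤
      2 * c ^ 2 * gradSq e (expConj φ w) p
        + (2 * c ^ 2 * gradSq e φ p + c ^ 2) * expConj φ w p ^ 2 := by
  have hexp := mul_le_mul_of_nonneg_left h.sq_le (sq_nonneg (Real.exp (φ p)))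
  have hgrad := mul_le_mul_of_nonneg_left (exp_sq_mul_gradSq_le (e := e) hφ hw p) (sq_nonneg c)
  have hconj : expConj φ w p ^ 2 = Real.exp (φ p) ^ 2 * w p ^ 2 := by rw [expConj, mul_pow]
  rw [hconj] at hgrad ⊢
  rw [mul_pow]
  linarith

theorem dirDeriv_carlemanPotential (hφ : ContDiff ℝ ∞ φ) (a p : X) :
    dirDeriv a (carlemanPotential e s φ m) p =
      2 * gradDot e (dirDeriv a φ) φ p - dirDeriv a (dirDeriv s φ) p := by
  unfold carlemanPotential
  rw [dirDeriv_add (by fun_prop) (by fun_prop), dirDeriv_sub (by fun_prop) (by fun_prop),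
    dirDeriv_gradSq e hφ, dirDeriv_const, add_zero]

theorem carlemanCoeff_eq (hφ : ContDiff ℝ ∞ φ) (p : X) :
    carlemanCoeff e s φ m p = 4 * hessForm e φ φ p - 2 * m * gradSq e φ p
      - 4 * gradDot e (dirDeriv s φ) φ p + dirDeriv s (dirDeriv s φ) p
      + 2 * m * dirDeriv s φ p - 2 * m ^ 2 := by
  have hgrad : gradDot e (carlemanPotential e s φ m) φ p =
      2 * hessForm e φ φ p - gradDot e (dirDeriv s φ) φ p := by
    simp only [gradDot, hessForm, dirDeriv_carlemanPotential hφ, sub_mul, Finset.sum_sub_distrib,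
      Finset.mul_sum, Finset.sum_mul]
    refine congrArg (· - _) (Finset.sum_congr rfl fun i _ => Finset.sum_congr rfl fun j _ => ?_)
    rw [dirDeriv_comm hφ (e j) (e i)]
    ring
  rw [carlemanCoeff, hgrad, dirDeriv_carlemanPotential hφ, carlemanPotential]
  ring

variable [FiniteDimensional ℝ X] [MeasurableSpace X] [BorelSpace X] {ν : Measure X}
  [ν.IsAddHaarMeasure]

theorem hasZeroIntegral_carleman (hv : ContDiff ℝ ∞ v) (hc : HasCompactSupport v)
    (hφ : ContDiff ℝ ∞ φ) (hζ : ContDiff ℝ ∞ ζ) (hU : ContDiff ℝ ∞ U)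
    (hζe : ∀ i p, dirDeriv (e i) ζ p = 0) (hΔ : ∀ i p, dirDeriv (e i) (frameLap e φ) p = 0)
    (s : X) (m : ℝ) :
    HasZeroIntegral ν fun p =>
      ζ p * (2 * (frameLap e v p + U p * v p) *
        (dirDeriv s v p - 2 * gradDot e φ v p - (frameLap e φ p + m) * v p))
      - ζ p * (4 * hessForm e φ v p + 2 * m * gradSq e v p
        + (-dirDeriv s U p + 2 * gradDot e U φ p - 2 * m * U p) * v p ^ 2)
      - dirDeriv s ζ p * (gradSq e v p - U p * v p ^ 2) := by
  have htime := hasZeroIntegral_frameLap_mul_dirDeriv (ν := ν) hv hc hζ hζe s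
  have hrellich := hasZeroIntegral_rellich (ν := ν) (e := e) hv hc hφ hζ hζe
  have henergy := hasZeroIntegral_mul_frameLap_add_gradSq (ν := ν) (e := e)
    (a := fun p => ζ p * (frameLap e φ p + m)) hv hc (by fun_prop) fun i p => by
      rw [dirDeriv_mul (by fun_prop) (by fun_prop), dirDeriv_add (by fun_prop) (by fun_prop),
        hζe, hΔ, dirDeriv_const, add_zero, zero_mul, mul_zero, add_zero]
  have hpotential := hasZeroIntegral_dirDeriv_mul_sq (ν := ν) (a := fun p => ζ p * U p) hv hc
    (by fun_prop) s
  have hdrift := hasZeroIntegral_div_mul_gradient (ν := ν) hv hc hφ hU hζ hζe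
  refine ((((htime.sub (hrellich.const_mul 2)).sub (henergy.const_mul 2)).add hpotential).sub
    (hdrift.const_mul 2)).congr fun p => ?_
  rw [dirDeriv_mul (by fun_prop) (by fun_prop)]
  ring

theorem carleman_inequality (hw : ContDiff ℝ ∞ w) (hc : HasCompactSupport w)
    (hφ : ContDiff ℝ ∞ φ) (hζ : ContDiff ℝ ∞ ζ) (hζ0 : ∀ p, 0 ≤ ζ p)
    (hζe : ∀ i p, dirDeriv (e i) ζ p = 0) (hΔ : ∀ i p, dirDeriv (e i) (frameLap e φ) p = 0)
    (s : X) (m : ℝ) :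
    let I := fun p => ζ p * carlemanBulk e s φ m w p + dirDeriv s ζ p *
      (gradSq e (expConj φ w) p - carlemanPotential e s φ m p * expConj φ w p ^ 2)
    Integrable I ν ∧ ∫ p, I p ∂ν ≤ 0 := by
  intro I
  let F : X → ℝ := fun p => 1 / 2 * ζ p * (Real.exp (φ p) * backwardHeat e s w p
    - 2 * (frameLap e (expConj φ w) p + carlemanPotential e s φ m p * expConj φ w p)) ^ 2
  have hF : Integrable F ν := by
    refine integrable_of_eq_zero_of_eventuallyEq (ContDiff.continuous (n := ∞) (by fun_prop)) hc
      fun p hp => ?_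
    have hv := expConj_eventuallyEq_zero (φ := φ) hp
    simp only [F]
    rw [backwardHeat_congr e s hp, backwardHeat_const, frameLap_congr e hv, frameLap_const,
      hv.eq_of_nhds]
    ring
  have hpotential : ContDiff ℝ ∞ (carlemanPotential e s φ m) := contDiff_carlemanPotential hφ
  refine (hasZeroIntegral_carleman (contDiff_expConj hφ hw) (hasCompactSupport_expConj hc) hφ hζ
    hpotential hζe hΔ s m).integral_nonpos_of_eq_neg_add hF
      (fun p => by have := hζ0 p; positivity) fun p => ?_
  simp only [I, F, carlemanBulk, carlemanCoeff, exp_mul_backwardHeat_eq hφ hw m p]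
  ring

end Carleman

section Caccioppoli

variable {X : Type*} [NormedAddCommGroup X] [NormedSpace ℝ X] {ι : Type*} [Fintype ι]
  {e : ι → X} {s : X} {u g : X → ℝ} {p : X} {c : ℝ}

theorem neg_mul_backwardHeat_le (hc : 0 ≤ c)
    (h : BackwardHeatBound e s c u p) :
    -(u p * backwardHeat e s u p) ≤ gradSq e u p / 4 + (c ^ 2 + c) * u p ^ 2 := by
  have hroot : √(gradSq e u p) ^ 2 = gradSq e u p := Real.sq_sqrt (gradSq_nonneg e u p)
  have habs : |u p| ^ 2 = u p ^ 2 := sq_abs _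
  calc -(u p * backwardHeat e s u p) ≤ |u p| * |backwardHeat e s u p| := by
        rw [← abs_mul]; exact neg_le_abs _
    _ ≤ |u p| * (c * (√(gradSq e u p) + |u p|)) := mul_le_mul_of_nonneg_left h (abs_nonneg _)
    _ ≤ gradSq e u p / 4 + (c ^ 2 + c) * u p ^ 2 := by
        nlinarith [sq_nonneg (√(gradSq e u p) / 2 - c * |u p|)]

theorem neg_mul_mul_gradDot_le (u g : X → ℝ) (p : X) :
    -(2 * g p * u p * gradDot e g u p) ≤
      g p ^ 2 * gradSq e u p / 4 + 4 * u p ^ 2 * gradSq e g p := by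
  simp only [gradDot, gradSq, Finset.mul_sum, Finset.sum_div, ← Finset.sum_add_distrib,
    ← Finset.sum_neg_distrib]
  refine Finset.sum_le_sum fun i _ => ?_
  nlinarith [sq_nonneg (g p * dirDeriv (e i) u p / 2 + 2 * u p * dirDeriv (e i) g p)]

variable [FiniteDimensional ℝ X] [MeasurableSpace X] [BorelSpace X] {ν : Measure X}
  [ν.IsAddHaarMeasure]

theorem hasZeroIntegral_sq_mul_gradSq (hu : ContDiff ℝ ∞ u) (hg : ContDiff ℝ ∞ g)
    (hgc : HasCompactSupport g) :
    HasZeroIntegral ν fun p => g p ^ 2 * gradSq e u p + g p ^ 2 * u p * frameLap e u p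
      + 2 * g p * u p * gradDot e g u p := by
  have hterm (i : ι) : HasZeroIntegral ν fun p => g p ^ 2 * dirDeriv (e i) u p ^ 2
      + g p ^ 2 * u p * dirDeriv (e i) (dirDeriv (e i) u) p
      + 2 * g p * u p * (dirDeriv (e i) g p * dirDeriv (e i) u p) := by
    refine (hasZeroIntegral_dirDeriv (f := fun p => g p * u p * dirDeriv (e i) u p * g p)
      (by fun_prop) hgc.mul_left (e i)).congr fun p => ?_
    repeat rw [dirDeriv_mul (by fun_prop) (by fun_prop)]
    ring
  refine (HasZeroIntegral.sum Finset.univ fun i _ => hterm i).congr fun p => ?_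
  simp only [gradSq, frameLap, gradDot, Finset.mul_sum, ← Finset.sum_add_distrib]

theorem caccioppoli_inequality (hu : ContDiff ℝ ∞ u) (hg : ContDiff ℝ ∞ g)
    (hgc : HasCompactSupport g) (hc : 0 ≤ c)
    (hP : ∀ p, g p ≠ 0 → BackwardHeatBound e s c u p) :
    let W := fun p => u p ^ 2 * (-2 * g p * dirDeriv s g p
      + (2 * (c ^ 2 + c) + 1) * g p ^ 2 + 8 * gradSq e g p)
    Integrable W ν ∧ ∫ p, g p ^ 2 * (gradSq e u p + u p ^ 2) ∂ν ≤ ∫ p, W p ∂ν := by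
  intro W
  have hgrad := hasZeroIntegral_sq_mul_gradSq (ν := ν) (e := e) hu hg hgc
  have htime := hasZeroIntegral_dirDeriv_mul_sq (ν := ν) (v := g) (a := fun p => u p ^ 2)
    hg hgc (by fun_prop) s
  obtain ⟨hint, hzero⟩ := (hgrad.const_mul 2).add htime
  have hright : Integrable W ν := by
    refine integrable_of_eq_zero_of_eventuallyEq (ContDiff.continuous (n := ∞) (by fun_prop)) hgc
      fun p hp => ?_
    simp only [W]
    rw [gradSq_congr e hp, gradSq_const, hp.eq_of_nhds]
    ring
  have hleft : Integrable (fun p => g p ^ 2 * (gradSq e u p + u p ^ 2)) ν :=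
    integrable_of_eq_zero_of_eventuallyEq (ContDiff.continuous (n := ∞) (by fun_prop)) hgc
      fun p hp => by rw [hp.eq_of_nhds]; ring
  refine ⟨hright, ?_⟩
  rw [← zero_add (∫ p, W p ∂ν), ← hzero, ← integral_add hint hright]
  refine integral_mono hleft (hint.add hright) fun p => ?_
  have hcross := neg_mul_mul_gradDot_le (e := e) u g p
  have hheat : -(g p ^ 2 * (u p * backwardHeat e s u p)) ≤
      g p ^ 2 * (gradSq e u p / 4 + (c ^ 2 + c) * u p ^ 2) := by
    by_cases hgp : g p = 0
    · simp [hgp]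
    · rw [← mul_neg]
      exact mul_le_mul_of_nonneg_left (neg_mul_backwardHeat_le hc (hP p hgp)) (sq_nonneg _)
  simp only [W, dirDeriv_sq (differentiableAt_of_smooth hu p), backwardHeat] at hheat ⊢
  linarith

end Caccioppoli

/-- The space-time `ℝⁿ × ℝ`, points being pairs `(x, t)`. -/
abbrev SpaceTime (n : ℕ) := EuclideanSpace ℝ (Fin n) × ℝ

namespace SpaceTime

variable {n : ℕ}

section Coordinates

/-- The `i`-th spatial coordinate direction. -/
noncomputable def dir (i : Fin n) : SpaceTime n := (EuclideanSpace.single i 1, 0)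

/-- The time direction. -/
def timeDir : SpaceTime n := (0, 1)

/-- The `i`-th spatial coordinate. -/
def crd (i : Fin n) (p : SpaceTime n) : ℝ := p.1 i

/-- The time coordinate. -/
def time (p : SpaceTime n) : ℝ := p.2

/-- The squared length of the spatial component. -/
noncomputable def nsq (p : SpaceTime n) : ℝ := ∑ i, crd i p ^ 2

@[fun_prop]
theorem contDiff_crd (i : Fin n) : ContDiff ℝ ∞ (crd i) := by
  unfold crd
  fun_prop

@[fun_prop]
theorem contDiff_time : ContDiff ℝ ∞ (time : SpaceTime n → ℝ) := contDiff_snd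

@[fun_prop]
theorem contDiff_nsq : ContDiff ℝ ∞ (nsq : SpaceTime n → ℝ) := by
  unfold nsq
  fun_prop

@[fun_prop]
theorem continuous_crd (i : Fin n) : Continuous (crd i) := (contDiff_crd i).continuous

@[fun_prop]
theorem continuous_time : Continuous (time : SpaceTime n → ℝ) := contDiff_time.continuous

@[fun_prop]
theorem continuous_nsq : Continuous (nsq : SpaceTime n → ℝ) := contDiff_nsq.continuous

theorem dirDeriv_crd (v p : SpaceTime n) (i : Fin n) : dirDeriv v (crd i) p = v.1 i :=
  congrArg (fun A : SpaceTime n →L[ℝ] ℝ => A v) <|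
    ((EuclideanSpace.proj i : EuclideanSpace ℝ (Fin n) →L[ℝ] ℝ).comp (.fst ℝ _ ℝ)).fderiv

theorem dirDeriv_time (v p : SpaceTime n) : dirDeriv v time p = v.2 :=
  congrArg (fun A : SpaceTime n →L[ℝ] ℝ => A v) <|
    (ContinuousLinearMap.snd ℝ (EuclideanSpace ℝ (Fin n)) ℝ).fderiv

theorem dirDeriv_dir_crd (i j : Fin n) (p : SpaceTime n) :
    dirDeriv (dir i) (crd j) p = if j = i then 1 else 0 := by
  simp [dirDeriv_crd, dir]

theorem dirDeriv_timeDir_crd (j : Fin n) (p : SpaceTime n) : dirDeriv timeDir (crd j) p = 0 := by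
  simp [dirDeriv_crd, timeDir]

theorem dirDeriv_dir_time (i : Fin n) (p : SpaceTime n) : dirDeriv (dir i) time p = 0 :=
  dirDeriv_time _ _

theorem dirDeriv_dir_comp_time {a : ℝ → ℝ} {p : SpaceTime n}
    (ha : DifferentiableAt ℝ a (time p)) (i : Fin n) :
    dirDeriv (dir i) (fun p => a (time p)) p = 0 := by
  rw [dirDeriv_comp ha (by fun_prop), dirDeriv_dir_time, mul_zero]

theorem dirDeriv_timeDir_time (p : SpaceTime n) : dirDeriv timeDir time p = 1 :=
  dirDeriv_time _ _

theorem dirDeriv_nsq (v p : SpaceTime n) : dirDeriv v nsq p = ∑ i, 2 * crd i p * v.1 i := by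
  unfold nsq
  rw [dirDeriv_sum _ (fun i _ => by fun_prop)]
  exact Finset.sum_congr rfl fun i _ => by rw [dirDeriv_sq (by fun_prop), dirDeriv_crd]

theorem dirDeriv_dir_nsq (i : Fin n) (p : SpaceTime n) :
    dirDeriv (dir i) nsq p = 2 * crd i p := by
  simp [dirDeriv_nsq, dir]

theorem dirDeriv_timeDir_nsq (p : SpaceTime n) : dirDeriv timeDir nsq p = 0 := by
  simp [dirDeriv_nsq, timeDir]

theorem nsq_eq (p : SpaceTime n) : nsq p = ‖p.1‖ ^ 2 := by
  simp [EuclideanSpace.norm_sq_eq, nsq, crd]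

theorem nsq_nonneg (p : SpaceTime n) : 0 ≤ nsq p := Finset.sum_nonneg fun _ _ => sq_nonneg _

theorem crd_sq_le (i : Fin n) (p : SpaceTime n) : crd i p ^ 2 ≤ nsq p :=
  Finset.single_le_sum (f := fun i => crd i p ^ 2) (fun _ _ => sq_nonneg _) (Finset.mem_univ i)

instance : (volume : Measure (SpaceTime n)).IsAddHaarMeasure := by
  rw [Measure.volume_eq_prod]
  infer_instance

end Coordinates

section Quadratic

/-- The function `a(t) x_o + b(t) |x|²`. -/
noncomputable def quad (o : Fin n) (a b : ℝ → ℝ) : SpaceTime n → ℝ :=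
  fun p => a (time p) * crd o p + b (time p) * nsq p

variable {o : Fin n} {a b : ℝ → ℝ}

@[fun_prop]
theorem contDiff_quad (ha : ContDiff ℝ ∞ a) (hb : ContDiff ℝ ∞ b) :
    ContDiff ℝ ∞ (quad o a b) := by
  unfold quad
  fun_prop

theorem dirDeriv_timeDir_quad (ha : ContDiff ℝ ∞ a) (hb : ContDiff ℝ ∞ b) :
    dirDeriv timeDir (quad o a b) = quad o (deriv a) (deriv b) := by
  funext p
  unfold quad
  rw [dirDeriv_add (by fun_prop) (by fun_prop), dirDeriv_mul (by fun_prop) (by fun_prop),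
    dirDeriv_mul (by fun_prop) (by fun_prop), dirDeriv_comp (by fun_prop) (by fun_prop),
    dirDeriv_comp (by fun_prop) (by fun_prop), dirDeriv_timeDir_crd, dirDeriv_timeDir_nsq,
    dirDeriv_timeDir_time]
  ring

theorem dirDeriv_dir_quad (ha : ContDiff ℝ ∞ a) (hb : ContDiff ℝ ∞ b) (i : Fin n) :
    dirDeriv (dir i) (quad o a b) =
      fun p => a (time p) * (if o = i then 1 else 0) + 2 * b (time p) * crd i p := by
  funext p
  unfold quad
  rw [dirDeriv_add (by fun_prop) (by fun_prop), dirDeriv_mul (by fun_prop) (by fun_prop),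
    dirDeriv_mul (by fun_prop) (by fun_prop), dirDeriv_dir_comp_time (by fun_prop),
    dirDeriv_dir_comp_time (by fun_prop), dirDeriv_dir_crd, dirDeriv_dir_nsq]
  ring

theorem dirDeriv_dir_dirDeriv_dir_quad (ha : ContDiff ℝ ∞ a) (hb : ContDiff ℝ ∞ b) (i j : Fin n)
    (p : SpaceTime n) : dirDeriv (dir i) (dirDeriv (dir j) (quad o a b)) p =
      if j = i then 2 * b (time p) else 0 := by
  rw [dirDeriv_dir_quad ha hb, dirDeriv_add (by fun_prop) (by fun_prop),
    dirDeriv_mul (by fun_prop) (by fun_prop), dirDeriv_const, dirDeriv_dir_comp_time (by fun_prop),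
    dirDeriv_mul (by fun_prop) (by fun_prop), dirDeriv_const_mul (by fun_prop),
    dirDeriv_dir_comp_time (by fun_prop), dirDeriv_dir_crd]
  split_ifs <;> ring

theorem hessForm_quad (ha : ContDiff ℝ ∞ a) (hb : ContDiff ℝ ∞ b) (f : SpaceTime n → ℝ)
    (p : SpaceTime n) : hessForm dir (quad o a b) f p = 2 * b (time p) * gradSq dir f p := by
  simp only [hessForm, gradSq, dirDeriv_dir_dirDeriv_dir_quad ha hb, ite_mul, zero_mul,
    Finset.sum_ite_eq', Finset.mem_univ, if_true, Finset.mul_sum, pow_two, mul_assoc]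

theorem dirDeriv_dir_frameLap_quad (ha : ContDiff ℝ ∞ a) (hb : ContDiff ℝ ∞ b) (i : Fin n)
    (p : SpaceTime n) : dirDeriv (dir i) (frameLap dir (quad o a b)) p = 0 := by
  have hlap : frameLap dir (quad o a b) = fun p => n * (2 * b (time p)) := by
    funext q
    simp [frameLap, dirDeriv_dir_dirDeriv_dir_quad ha hb]
  rw [hlap, dirDeriv_const_mul (by fun_prop), dirDeriv_const_mul (by fun_prop),
    dirDeriv_dir_comp_time (by fun_prop), mul_zero, mul_zero]

variable {a' b' : ℝ → ℝ} {p : SpaceTime n}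

theorem gradDot_quad (ha : ContDiff ℝ ∞ a) (hb : ContDiff ℝ ∞ b) (ha' : ContDiff ℝ ∞ a')
    (hb' : ContDiff ℝ ∞ b') :
    gradDot dir (quad o a b) (quad o a' b') p = a (time p) * a' (time p)
      + 2 * (a (time p) * b' (time p) + a' (time p) * b (time p)) * crd o p
      + 4 * b (time p) * b' (time p) * nsq p := by
  have hterm (i : Fin n) : dirDeriv (dir i) (quad o a b) p * dirDeriv (dir i) (quad o a' b') p =
      (if o = i then a (time p) * a' (time p)
        + 2 * (a (time p) * b' (time p) + a' (time p) * b (time p)) * crd i p else 0)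
      + 4 * b (time p) * b' (time p) * crd i p ^ 2 := by
    rw [dirDeriv_dir_quad ha hb, dirDeriv_dir_quad ha' hb']
    split_ifs <;> ring
  simp only [gradDot, nsq, hterm, Finset.sum_add_distrib, Finset.sum_ite_eq, Finset.mem_univ,
    if_true, Finset.mul_sum]

theorem gradSq_quad (ha : ContDiff ℝ ∞ a) (hb : ContDiff ℝ ∞ b) :
    gradSq dir (quad o a b) p = a (time p) ^ 2 + 4 * a (time p) * b (time p) * crd o p
      + 4 * b (time p) ^ 2 * nsq p := by
  rw [gradSq_eq_gradDot, gradDot_quad ha hb ha hb]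
  ring

theorem gradSq_quad_le (ha : ContDiff ℝ ∞ a) (hb : ContDiff ℝ ∞ b) :
    gradSq dir (quad o a b) p ≤ 2 * a (time p) ^ 2 + 8 * b (time p) ^ 2 * nsq p := by
  rw [gradSq_quad ha hb]
  nlinarith [sq_nonneg (a (time p) - 2 * b (time p) * crd o p),
    mul_le_mul_of_nonneg_left (crd_sq_le o p) (sq_nonneg (b (time p)))]

theorem abs_quad_le (o : Fin n) (a b : ℝ → ℝ) (p : SpaceTime n) :
    |quad o a b p| ≤ (|a (time p)| + |b (time p)|) * (1 + nsq p) := by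
  have hN := nsq_nonneg p
  have hcrd : |crd o p| ≤ 1 + nsq p := by
    nlinarith [crd_sq_le o p, sq_abs (crd o p), sq_nonneg (|crd o p| - 1)]
  calc |quad o a b p| ≤ |a (time p)| * |crd o p| + |b (time p)| * nsq p :=
        (abs_add_le _ _).trans_eq (by rw [abs_mul, abs_mul, abs_of_nonneg hN])
    _ ≤ |a (time p)| * (1 + nsq p) + |b (time p)| * (1 + nsq p) := by gcongr; linarith
    _ = (|a (time p)| + |b (time p)|) * (1 + nsq p) := by ring

end Quadratic

section Weight

/-- The coefficient `γ (τ + 16 μ τ²)`, `τ = L - t`, of `x_o` in the Carleman weight. -/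
noncomputable def weightSlope (γ μ L : ℝ) : ℝ → ℝ :=
  fun t => γ * ((L - t) + 16 * μ * (L - t) ^ 2)

/-- The coefficient `-(2 + τ) / 100`, `τ = L - t`, of `|x|²` in the Carleman weight. -/
noncomputable def weightCurv (L : ℝ) : ℝ → ℝ := fun t => -(2 + (L - t)) / 100

/-- The Carleman weight on the half-space `x_o > 0`. It is large where `x_o` is large and `t < L`,
and the quadratic term makes it decay at spatial infinity. -/
noncomputable def weight (o : Fin n) (γ μ L : ℝ) : SpaceTime n → ℝ :=
  quad o (weightSlope γ μ L) (weightCurv L)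

variable {o : Fin n} {γ μ L c : ℝ} {p : SpaceTime n} {w : SpaceTime n → ℝ}

@[fun_prop]
theorem contDiff_weightSlope : ContDiff ℝ ∞ (weightSlope γ μ L) := by
  unfold weightSlope
  fun_prop

@[fun_prop]
theorem contDiff_weightCurv : ContDiff ℝ ∞ (weightCurv L) := by
  unfold weightCurv
  fun_prop

@[fun_prop]
theorem contDiff_weight : ContDiff ℝ ∞ (weight o γ μ L) := by
  unfold weight
  fun_prop

theorem deriv_weightSlope :
    deriv (weightSlope γ μ L) = fun t => -(γ * (1 + 32 * μ * (L - t))) := by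
  funext t
  have h := (((hasDerivAt_id t).const_sub L).add
    ((((hasDerivAt_id t).const_sub L).pow 2).const_mul (16 * μ))).const_mul γ
  refine (h.congr_deriv ?_).deriv
  simp only [id, Nat.cast_ofNat]
  ring

theorem deriv_deriv_weightSlope : deriv (deriv (weightSlope γ μ L)) = fun _ => 32 * γ * μ := by
  rw [deriv_weightSlope]
  funext t
  have h := (((((hasDerivAt_id t).const_sub L).const_mul (32 * μ)).const_add 1).const_mul γ).neg
  exact (h.congr_deriv (by ring)).deriv

theorem deriv_weightCurv : deriv (weightCurv L) = fun _ => 1 / 100 := by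
  funext t
  have h := ((((hasDerivAt_id t).const_sub L).const_add 2).neg).div_const 100
  exact (h.congr_deriv (by ring)).deriv

theorem dirDeriv_timeDir_weight : dirDeriv timeDir (weight o γ μ L) =
    quad o (fun t => -(γ * (1 + 32 * μ * (L - t)))) fun _ => 1 / 100 := by
  rw [weight, dirDeriv_timeDir_quad (by fun_prop) (by fun_prop), deriv_weightSlope,
    deriv_weightCurv]

theorem dirDeriv_timeDir_dirDeriv_timeDir_weight :
    dirDeriv timeDir (dirDeriv timeDir (weight o γ μ L)) =
      quad o (fun _ => 32 * γ * μ) fun _ => 0 := by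
  rw [weight, dirDeriv_timeDir_quad (by fun_prop) (by fun_prop),
    dirDeriv_timeDir_quad (by fun_prop) (by fun_prop), deriv_deriv_weightSlope, deriv_weightCurv,
    deriv_const']

theorem hessForm_weight (f : SpaceTime n → ℝ) :
    hessForm dir (weight o γ μ L) f p = 2 * weightCurv L (time p) * gradSq dir f p :=
  hessForm_quad (by fun_prop) (by fun_prop) f p

theorem carlemanBulk_weight : carlemanBulk dir timeDir (weight o γ μ L) μ w p =
    (2 * μ + 8 * weightCurv L (time p)) * gradSq dir (expConj (weight o γ μ L) w) p
      + carlemanCoeff dir timeDir (weight o γ μ L) μ p * expConj (weight o γ μ L) w p ^ 2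
      - 1 / 2 * (Real.exp (weight o γ μ L p) * backwardHeat dir timeDir w p) ^ 2 := by
  rw [carlemanBulk, hessForm_weight]
  ring

theorem carlemanCoeff_weight : carlemanCoeff dir timeDir (weight o γ μ L) μ p =
    (8 * weightCurv L (time p) - 2 * μ) * gradSq dir (weight o γ μ L) p
      - 4 * gradDot dir (dirDeriv timeDir (weight o γ μ L)) (weight o γ μ L) p
      + quad o (fun _ => 32 * γ * μ) (fun _ => 0) p
      + 2 * μ * dirDeriv timeDir (weight o γ μ L) p - 2 * μ ^ 2 := by
  rw [carlemanCoeff_eq (by fun_prop), hessForm_weight, dirDeriv_timeDir_dirDeriv_timeDir_weight]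
  ring

theorem mul_le_weight_form {l N h q B P : ℝ} (hμ : 1 ≤ μ) (hγ : 0 ≤ γ) (hl : 0 ≤ l) (hN : 0 ≤ N)
    (hh : 0 ≤ h) (hh1 : h ≤ 1 / 50) (hq : 1 / 50 ≤ q) (hq1 : q ≤ 101 / 5000) (hB : 1 ≤ B)
    (hB1 : B ≤ 3 / 2) (hP : 0 ≤ P) (hP1 : P ≤ 4 * μ + 1 / 5) (hPh : P * h ≤ 4) :
    γ * l ≤ γ ^ 2 * h * (4 * B - P * h)
      + γ * l * (4 * (P * h * q) - 8 * (h / 100 + q * B) + 32 * μ - 2 * μ * B)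
      + N * (16 / 100 * q + 2 * μ / 100 - 4 * (P * q ^ 2)) := by
  have hγγ : 0 ≤ γ ^ 2 * h * (4 * B - P * h) := by
    have : 0 ≤ 4 * B - P * h := by linarith
    positivity
  have hγl : γ * l * 1 ≤
      γ * l * (4 * (P * h * q) - 8 * (h / 100 + q * B) + 32 * μ - 2 * μ * B) := by
    have hPhq : 0 ≤ P * h * q := by positivity
    have hqB : q * B ≤ 101 / 5000 * (3 / 2) := by gcongr
    have hμB : μ * B ≤ μ * (3 / 2) := by gcongr
    gcongr
    linarith
  have hqN : 0 ≤ N * (16 / 100 * q + 2 * μ / 100 - 4 * (P * q ^ 2)) := by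
    have hPq : P * q ^ 2 ≤ (4 * μ + 1 / 5) * (101 / 5000) ^ 2 := by gcongr
    have : 0 ≤ 16 / 100 * q + 2 * μ / 100 - 4 * (P * q ^ 2) := by linarith
    positivity
  linarith

theorem add_le_carlemanCoeff_weight (hμ : 1 + c ^ 2 ≤ μ) (hL : 64 * μ * (L - time p) ≤ 1)
    (htL : time p ≤ L) (hγ : 0 ≤ γ) (hl : 0 ≤ crd o p) :
    γ * crd o p - 2 * μ ^ 2 + 2 * c ^ 2 * gradSq dir (weight o γ μ L) p ≤
      carlemanCoeff dir timeDir (weight o γ μ L) μ p := by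
  rw [carlemanCoeff_weight, dirDeriv_timeDir_weight, weight,
    gradDot_quad (by fun_prop) (by fun_prop) (by fun_prop) (by fun_prop),
    gradSq_quad (by fun_prop) (by fun_prop)]
  simp only [quad, weightSlope, weightCurv]
  obtain ⟨τ, hτ⟩ : ∃ τ, τ = L - time p := ⟨_, rfl⟩
  rw [← hτ] at hL ⊢
  have hτ0 : 0 ≤ τ := by linarith
  have hμ1 : 1 ≤ μ := by nlinarith [sq_nonneg c]
  have hμτ0 : 0 ≤ μ * τ := by positivity
  have hτ1 : τ ≤ 1 / 64 := by nlinarith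
  have hh0 : 0 ≤ τ + 16 * μ * τ ^ 2 := by positivity
  have hhτ : τ + 16 * μ * τ ^ 2 ≤ 5 / 4 * τ := by nlinarith
  have hP0 : 0 ≤ 8 * ((2 + τ) / 100) + 2 * μ + 2 * c ^ 2 := by positivity
  have hPh : (8 * ((2 + τ) / 100) + 2 * μ + 2 * c ^ 2) * (τ + 16 * μ * τ ^ 2) ≤ 4 :=
    calc (8 * ((2 + τ) / 100) + 2 * μ + 2 * c ^ 2) * (τ + 16 * μ * τ ^ 2)
        ≤ 5 * μ * (5 / 4 * τ) := by gcongr; linarith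
      _ ≤ 4 := by linarith
  have hform := mul_le_weight_form (q := (2 + τ) / 100) (B := 1 + 32 * μ * τ) hμ1 hγ hl
    (nsq_nonneg p) hh0 (by linarith) (by linarith) (by linarith) (by linarith) (by linarith)
    hP0 (by linarith) hPh
  linarith

theorem weight_coeff_bounds (hμ : 1 ≤ μ) {t : ℝ} (hL : 64 * μ * |L - t| ≤ 1) (hγ : 0 ≤ γ) :
    |weightSlope γ μ L t| ≤ γ / 4 ∧ |γ * (1 + 32 * μ * (L - t))| ≤ 3 / 2 * γ ∧
      0 ≤ -weightCurv L t ∧ -weightCurv L t ≤ 1 / 40 := by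
  have hμτ : |μ * (L - t)| ≤ 1 / 64 := by
    rw [abs_mul, abs_of_nonneg (by positivity)]
    linarith
  have hτ : |L - t| ≤ 1 / 64 := by nlinarith [abs_nonneg (L - t)]
  obtain ⟨hμτ0, hμτ1⟩ := abs_le.mp hμτ
  obtain ⟨hτ0, hτ1⟩ := abs_le.mp hτ
  refine ⟨?_, ?_, by rw [weightCurv]; linarith, by rw [weightCurv]; linarith⟩
  · have hfac : |1 + 16 * (μ * (L - t))| ≤ 2 := abs_le.mpr ⟨by linarith, by linarith⟩
    calc |weightSlope γ μ L t| = γ * (|L - t| * |1 + 16 * (μ * (L - t))|) := by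
          rw [← abs_mul, ← abs_of_nonneg hγ, ← abs_mul, abs_of_nonneg hγ, weightSlope]
          congr 1
          ring
      _ ≤ γ * (1 / 64 * 2) := by gcongr
      _ ≤ γ / 4 := by linarith
  · rw [abs_mul, abs_of_nonneg hγ, mul_comm]
    gcongr
    exact abs_le.mpr ⟨by linarith, by linarith⟩

theorem gradSq_weight_le (hμ : 1 ≤ μ) (hL : 64 * μ * |L - time p| ≤ 1) (hγ : 1 ≤ γ) :
    gradSq dir (weight o γ μ L) p ≤ γ ^ 2 * (1 + nsq p) := by
  obtain ⟨hslope, -, hcurv0, hcurv1⟩ := weight_coeff_bounds hμ hL (zero_le_one.trans hγ)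
  have hslope_sq : weightSlope γ μ L (time p) ^ 2 ≤ (γ / 4) ^ 2 :=
    sq_le_sq' (neg_le_of_abs_le hslope) (le_of_abs_le hslope)
  have hcurv_sq : weightCurv L (time p) ^ 2 ≤ (1 / 40) ^ 2 := by nlinarith
  have hcurv_nsq := mul_le_mul_of_nonneg_right hcurv_sq (nsq_nonneg p)
  have hγ2 : 1 ≤ γ ^ 2 := one_le_pow₀ hγ
  have := mul_le_mul_of_nonneg_right hγ2 (nsq_nonneg p)
  refine (gradSq_quad_le (by fun_prop) (by fun_prop)).trans ?_
  linarith [nsq_nonneg p]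

theorem abs_dirDeriv_timeDir_weight_le (hμ : 1 ≤ μ) (hL : 64 * μ * |L - time p| ≤ 1)
    (hγ : 1 ≤ γ) : |dirDeriv timeDir (weight o γ μ L) p| ≤ 2 * γ ^ 2 * (1 + nsq p) := by
  obtain ⟨-, hrate, -, -⟩ := weight_coeff_bounds hμ hL (zero_le_one.trans hγ)
  rw [dirDeriv_timeDir_weight]
  refine (abs_quad_le _ _ _ _).trans (mul_le_mul_of_nonneg_right ?_ ?_)
  · rw [abs_neg, abs_of_pos (by norm_num : (0 : ℝ) < 1 / 100)]
    nlinarith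
  · linarith [nsq_nonneg p]

theorem gradSq_dirDeriv_timeDir_weight_le (hμ : 1 ≤ μ) (hL : 64 * μ * |L - time p| ≤ 1)
    (hγ : 1 ≤ γ) :
    gradSq dir (dirDeriv timeDir (weight o γ μ L)) p ≤ 5 * γ ^ 2 * (1 + nsq p) := by
  obtain ⟨-, hrate, -, -⟩ := weight_coeff_bounds hμ hL (zero_le_one.trans hγ)
  have hrate_sq : (γ * (1 + 32 * μ * (L - time p))) ^ 2 ≤ (3 / 2 * γ) ^ 2 :=
    sq_le_sq' (neg_le_of_abs_le hrate) (le_of_abs_le hrate)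
  have hγ2 : 1 ≤ γ ^ 2 := one_le_pow₀ hγ
  have := mul_le_mul_of_nonneg_right hγ2 (nsq_nonneg p)
  rw [dirDeriv_timeDir_weight]
  refine (gradSq_quad_le (by fun_prop) (by fun_prop)).trans ?_
  linarith [nsq_nonneg p]

theorem neg_le_carlemanCoeff_weight (hμ : 1 ≤ μ) (hL : 64 * μ * |L - time p| ≤ 1) (hγ : 1 ≤ γ) :
    -(64 * μ ^ 2 * (γ ^ 2 * (1 + nsq p))) ≤ carlemanCoeff dir timeDir (weight o γ μ L) μ p := by
  obtain ⟨-, -, -, hcurv⟩ := weight_coeff_bounds hμ hL (zero_le_one.trans hγ)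
  have hgrad := gradSq_weight_le (o := o) hμ hL hγ
  have hgrad' := gradSq_dirDeriv_timeDir_weight_le (o := o) hμ hL hγ
  have htime := neg_le_of_abs_le (abs_dirDeriv_timeDir_weight_le (o := o) hμ hL hγ)
  have hmixed := two_mul_abs_gradDot_le dir
    (dirDeriv timeDir (weight o γ μ L)) (weight o γ μ L) p
  have hsecond := neg_le_of_abs_le (abs_quad_le o (fun _ => 32 * γ * μ) (fun _ => 0) p)
  rw [abs_zero, add_zero, abs_of_nonneg (by positivity)] at hsecond
  have hN : 1 ≤ 1 + nsq p := by linarith [nsq_nonneg p]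
  have hscale : 1 ≤ γ ^ 2 * (1 + nsq p) := one_le_mul_of_one_le_of_one_le (one_le_pow₀ hγ) hN
  have hγγ : γ * (1 + nsq p) ≤ γ ^ 2 * (1 + nsq p) := by gcongr; nlinarith
  set G := γ ^ 2 * (1 + nsq p)
  have hsecond' : μ * (γ * (1 + nsq p)) ≤ μ * G := by gcongr
  have hzeroth : (2 * μ - 8 * weightCurv L (time p)) * gradSq dir (weight o γ μ L) p ≤
      (2 * μ + 1 / 5) * G := by
    gcongr
    · exact gradSq_nonneg _ _ _
    · linarith
  have htime' := mul_le_mul_of_nonneg_left htime (zero_le_one.trans hμ)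
  have hμμ : μ * G ≤ μ ^ 2 * G := by gcongr; nlinarith
  have hμG : 1 * G ≤ μ * G := by gcongr
  have hμ2 : μ ^ 2 * 1 ≤ μ ^ 2 * G := by gcongr
  rw [carlemanCoeff_weight]
  linarith [le_abs_self (gradDot dir (dirDeriv timeDir (weight o γ μ L)) (weight o γ μ L) p)]

theorem carlemanPotential_weight_le (hμ : 1 ≤ μ) (hL : 64 * μ * |L - time p| ≤ 1) (hγ : 1 ≤ γ) :
    carlemanPotential dir timeDir (weight o γ μ L) μ p ≤ 64 * μ ^ 2 * (γ ^ 2 * (1 + nsq p)) := by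
  have hgrad := gradSq_weight_le (o := o) hμ hL hγ
  have htime := neg_le_of_abs_le (abs_dirDeriv_timeDir_weight_le (o := o) hμ hL hγ)
  have hscale : 1 ≤ γ ^ 2 * (1 + nsq p) :=
    one_le_mul_of_one_le_of_one_le (one_le_pow₀ hγ) (by linarith [nsq_nonneg p])
  rw [carlemanPotential]
  have hμμ : μ ≤ μ ^ 2 := by nlinarith
  have := mul_le_mul_of_nonneg_left hscale (sq_nonneg μ)
  nlinarith

theorem sq_le_carlemanBulk_weight (hw : ContDiff ℝ ∞ w) (hμ : 1 + c ^ 2 ≤ μ)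
    (hL : 64 * μ * (L - time p) ≤ 1) (htL : time p ≤ L) (hγ : 0 ≤ γ) (hl : 0 ≤ crd o p)
    (hγl : 1 + 2 * μ ^ 2 + c ^ 2 ≤ γ * crd o p) (hP : BackwardHeatBound dir timeDir c w p) :
    expConj (weight o γ μ L) w p ^ 2 ≤ carlemanBulk dir timeDir (weight o γ μ L) μ w p := by
  have hcoeff := add_le_carlemanCoeff_weight hμ hL htL hγ hl
  have hheat := half_sq_exp_mul_backwardHeat_le (φ := weight o γ μ L) (by fun_prop) hw hP
  have hcurv : 0 ≤ 2 * μ + 8 * weightCurv L (time p) - 2 * c ^ 2 := by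
    have : L - time p ≤ 1 / 64 := by nlinarith [sq_nonneg c]
    rw [weightCurv]
    linarith
  have hgrad := mul_nonneg hcurv (gradSq_nonneg dir (expConj (weight o γ μ L) w) p)
  have hzeroth := mul_le_mul_of_nonneg_right
    (show 1 + c ^ 2 + 2 * c ^ 2 * gradSq dir (weight o γ μ L) p ≤
      carlemanCoeff dir timeDir (weight o γ μ L) μ p by linarith)
    (sq_nonneg (expConj (weight o γ μ L) w p))
  rw [carlemanBulk_weight]
  linarith

theorem neg_le_carlemanBulk_weight (hμ : 1 ≤ μ) (hL : 64 * μ * |L - time p| ≤ 1) (hγ : 1 ≤ γ)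
    {F : ℝ} (hF : backwardHeat dir timeDir w p ^ 2 ≤ F) :
    -(64 * μ ^ 2 * (γ ^ 2 * (1 + nsq p))) * expConj (weight o γ μ L) w p ^ 2 -
      1 / 2 * Real.exp (weight o γ μ L p) ^ 2 * F ≤
        carlemanBulk dir timeDir (weight o γ μ L) μ w p := by
  obtain ⟨-, -, -, hcurv⟩ := weight_coeff_bounds hμ hL (zero_le_one.trans hγ)
  have hgrad := mul_nonneg (show 0 ≤ 2 * μ + 8 * weightCurv L (time p) by linarith)
    (gradSq_nonneg dir (expConj (weight o γ μ L) w) p)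
  have hzeroth := mul_le_mul_of_nonneg_right (neg_le_carlemanCoeff_weight (o := o) hμ hL hγ)
    (sq_nonneg (expConj (weight o γ μ L) w p))
  have hsource := mul_le_mul_of_nonneg_left hF (sq_nonneg (Real.exp (weight o γ μ L p)))
  rw [carlemanBulk_weight, mul_pow]
  linarith

end Weight
end SpaceTime

section ParabolicallyBounded

theorem deriv_smoothTransition_of_notMem {x : ℝ} (hx : x ∉ Icc (0 : ℝ) 1) :
    deriv smoothTransition x = 0 := by
  have hconst : smoothTransition =ᶠ[𝓝 x] fun _ => smoothTransition x := by
    rw [mem_Icc, not_and_or, not_le, not_le] at hx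
    rcases hx with hx | hx
    · filter_upwards [Iio_mem_nhds hx] with y hy
      rw [smoothTransition.zero_of_nonpos hx.le, smoothTransition.zero_of_nonpos (le_of_lt hy)]
    · filter_upwards [Ioi_mem_nhds hx] with y hy
      rw [smoothTransition.one_of_one_le hx.le, smoothTransition.one_of_one_le (le_of_lt hy)]
  rw [hconst.deriv_eq, deriv_const]

theorem deriv_deriv_smoothTransition_of_notMem {x : ℝ} (hx : x ∉ Icc (0 : ℝ) 1) :
    deriv (deriv smoothTransition) x = 0 := by
  have hzero : deriv smoothTransition =ᶠ[𝓝 x] fun _ => 0 := by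
    filter_upwards [isClosed_Icc.isOpen_compl.mem_nhds hx] with y hy
    exact deriv_smoothTransition_of_notMem hy
  rw [hzero.deriv_eq, deriv_const]

theorem exists_abs_deriv_smoothTransition_le : ∃ C, ∀ x,
    |deriv smoothTransition x| ≤ C ∧ |deriv (deriv smoothTransition) x| ≤ C := by
  obtain ⟨A, hA⟩ := (ContDiff.continuous (n := ∞) (f := deriv smoothTransition)
    (by fun_prop)).bounded_above_of_compact_support
    (.intro isCompact_Icc fun _ hx => deriv_smoothTransition_of_notMem hx)
  obtain ⟨B, hB⟩ := (ContDiff.continuous (n := ∞) (f := deriv (deriv smoothTransition))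
    (by fun_prop)).bounded_above_of_compact_support
    (.intro isCompact_Icc fun _ hx => deriv_deriv_smoothTransition_of_notMem hx)
  exact ⟨max A B, fun x => ⟨(hA x).trans (le_max_left _ _), (hB x).trans (le_max_right _ _)⟩⟩

variable {X : Type*} [NormedAddCommGroup X] [NormedSpace ℝ X] {ι : Type*} [Fintype ι]
  {e : ι → X} {s : X} {C D : ℝ} {f g : X → ℝ}

/-- Smooth functions bounded by `C` together with the derivatives entering the heat operator. The
point of the notion is that `C` can be chosen uniformly in a family of cutoff functions. -/
structure ParabolicBdd (e : ι → X) (s : X) (C : ℝ) (f : X → ℝ) : Prop where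
  smooth : ContDiff ℝ ∞ f
  abs_le : ∀ p, |f p| ≤ C
  abs_dirDeriv_le : ∀ p, |dirDeriv s f p| ≤ C
  gradSq_le : ∀ p, gradSq e f p ≤ C
  abs_frameLap_le : ∀ p, |frameLap e f p| ≤ C

theorem ParabolicBdd.nonneg (h : ParabolicBdd e s C f) : 0 ≤ C :=
  (abs_nonneg _).trans (h.abs_le 0)

theorem ParabolicBdd.sq_le (h : ParabolicBdd e s C f) (p : X) : f p ^ 2 ≤ C ^ 2 :=
  sq_le_sq' (neg_le_of_abs_le (h.abs_le p)) (le_of_abs_le (h.abs_le p))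

theorem ParabolicBdd.mul (hf : ParabolicBdd e s C f) (hg : ParabolicBdd e s D g) :
    ParabolicBdd e s (2 * (C * D) + 2 * D ^ 2 * C + 2 * C ^ 2 * D + C + D)
      (fun p => f p * g p) := by
  have hC := hf.nonneg
  have hD := hg.nonneg
  have hCD : 0 ≤ C * D := by positivity
  have hDDC : 0 ≤ D ^ 2 * C := by positivity
  have hCCD : 0 ≤ C ^ 2 * D := by positivity
  have hmul {a b : ℝ} (ha : |a| ≤ C) (hb : |b| ≤ D) : |a * b| ≤ C * D := by
    rw [abs_mul]
    gcongr
  have hsf := hf.smooth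
  have hsg := hg.smooth
  refine ⟨by fun_prop, fun p => ?_, fun p => ?_, fun p => ?_, fun p => ?_⟩
  · linarith [hmul (hf.abs_le p) (hg.abs_le p)]
  · rw [dirDeriv_mul (by fun_prop) (by fun_prop)]
    linarith [abs_add_le (dirDeriv s f p * g p) (f p * dirDeriv s g p),
      hmul (hf.abs_dirDeriv_le p) (hg.abs_le p), hmul (hf.abs_le p) (hg.abs_dirDeriv_le p)]
  · have hfirst := mul_le_mul (hg.sq_le p) (hf.gradSq_le p) (gradSq_nonneg _ _ _) (sq_nonneg D)
    have hsecond := mul_le_mul (hf.sq_le p) (hg.gradSq_le p) (gradSq_nonneg _ _ _) (sq_nonneg C)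
    linarith [gradSq_mul_le e (hsf.differentiable (by simp) p) (hsg.differentiable (by simp) p)]
  · have hcross : |2 * gradDot e f g p| = 2 * |gradDot e f g p| := by rw [abs_mul, abs_two]
    rw [frameLap_mul e hsf hsg]
    linarith [abs_add_three (frameLap e f p * g p) (f p * frameLap e g p) (2 * gradDot e f g p),
      two_mul_abs_gradDot_le e f g p,
      hmul (hf.abs_frameLap_le p) (hg.abs_le p), hmul (hf.abs_le p) (hg.abs_frameLap_le p),
      hf.gradSq_le p, hg.gradSq_le p]

theorem exists_parabolicBdd_smoothTransition_comp (e : ι → X) (s : X) (A : ℝ) :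
    ∃ C, ∀ f : X → ℝ, ContDiff ℝ ∞ f →
      (∀ p, 0 ≤ f p → |dirDeriv s f p| ≤ A ∧ gradSq e f p ≤ A ∧ |frameLap e f p| ≤ A) →
      ParabolicBdd e s C (fun p => smoothTransition (f p)) := by
  obtain ⟨B, hB⟩ := exists_abs_deriv_smoothTransition_le
  have hB0 : 0 ≤ B := (abs_nonneg _).trans (hB 0).1
  have hmul {x a b : ℝ} (hb : |b| ≤ B) (hb0 : x ∉ Icc (0 : ℝ) 1 → b = 0)
      (ha : 0 ≤ x → |a| ≤ A) : |b * a| ≤ B * |A| := by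
    rcases lt_or_ge x 0 with hx | hx
    · rw [hb0 fun h => hx.not_ge h.1, zero_mul, abs_zero]
      positivity
    · rw [abs_mul]
      exact mul_le_mul hb ((ha hx).trans (le_abs_self A)) (abs_nonneg _) hB0
  have hBA : 0 ≤ B * |A| := by positivity
  have hBBA : 0 ≤ B * (B * |A|) := by positivity
  refine ⟨1 + 2 * (B * |A|) + B * (B * |A|), fun f hf hA => ?_⟩
  have hgrad (p : X) (hp : 0 ≤ f p) : |gradSq e f p| ≤ A :=
    (abs_of_nonneg (gradSq_nonneg e f p)).trans_le (hA p hp).2.1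
  refine ⟨by fun_prop, fun p => ?_, fun p => ?_, fun p => ?_, fun p => ?_⟩
  · rw [abs_of_nonneg (smoothTransition.nonneg _)]
    linarith [smoothTransition.le_one (f p)]
  · rw [dirDeriv_comp (by fun_prop) (by fun_prop)]
    linarith [hmul (hB (f p)).1 deriv_smoothTransition_of_notMem fun h => (hA p h).1]
  · rw [gradSq_comp e (by fun_prop) (by fun_prop), sq, mul_assoc]
    have hfirst := hmul (hB (f p)).1 deriv_smoothTransition_of_notMem (hgrad p)
    have hsecond := mul_le_mul (hB (f p)).1 hfirst (abs_nonneg _) hB0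
    rw [← abs_mul] at hsecond
    linarith [le_of_abs_le hsecond]
  · rw [frameLap_comp e (by fun_prop) hf]
    linarith [abs_add_le (deriv (deriv smoothTransition) (f p) * gradSq e f p)
        (deriv smoothTransition (f p) * frameLap e f p),
      hmul (hB (f p)).2 deriv_deriv_smoothTransition_of_notMem (hgrad p),
      hmul (hB (f p)).1 deriv_smoothTransition_of_notMem fun h => (hA p h).2.2]

theorem ParabolicBdd.sq_backwardHeat_mul_le {c : ℝ} {χ u : X → ℝ} {p : X}
    (hχ : ParabolicBdd e s C χ) (hu : ContDiff ℝ ∞ u) (hP : BackwardHeatBound e s c u p) :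
    backwardHeat e s (fun p => χ p * u p) p ^ 2 ≤
      (6 * C ^ 2 * c ^ 2 + 12 * C ^ 2 + 12 * C) * (gradSq e u p + u p ^ 2) := by
  have hC := hχ.nonneg
  have hG := gradSq_nonneg e u p
  have hsχ := hχ.smooth
  have hexpand : backwardHeat e s (fun p => χ p * u p) p =
      χ p * backwardHeat e s u p + backwardHeat e s χ p * u p + 2 * gradDot e χ u p := by
    simp only [backwardHeat]
    rw [dirDeriv_mul (by fun_prop) (by fun_prop), frameLap_mul e hsχ hu]
    ring
  have hheat : (χ p * backwardHeat e s u p) ^ 2 ≤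
      C ^ 2 * (2 * c ^ 2 * (gradSq e u p + u p ^ 2)) := by
    rw [mul_pow]
    exact mul_le_mul (hχ.sq_le p) (BackwardHeatBound.sq_le e hP) (sq_nonneg _) (sq_nonneg _)
  have hzeroth : (backwardHeat e s χ p * u p) ^ 2 ≤ (2 * C) ^ 2 * u p ^ 2 := by
    rw [mul_pow, ← sq_abs (backwardHeat e s χ p)]
    gcongr
    exact (abs_add_le _ _).trans (by linarith [hχ.abs_dirDeriv_le p, hχ.abs_frameLap_le p])
  have hcross : (2 * gradDot e χ u p) ^ 2 ≤ 4 * C * gradSq e u p := by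
    rw [mul_pow]
    linarith [sq_gradDot_le e χ u p, mul_le_mul_of_nonneg_right (hχ.gradSq_le p) hG]
  have hsum (a b d : ℝ) : (a + b + d) ^ 2 ≤ 3 * (a ^ 2 + b ^ 2 + d ^ 2) := by
    nlinarith [sq_nonneg (a - b), sq_nonneg (a - d), sq_nonneg (b - d)]
  rw [hexpand]
  have hCG : 0 ≤ C ^ 2 * gradSq e u p := by positivity
  have hCu : 0 ≤ C * u p ^ 2 := by positivity
  linarith [hsum (χ p * backwardHeat e s u p) (backwardHeat e s χ p * u p) (2 * gradDot e χ u p)]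

end ParabolicallyBounded

namespace SpaceTime

variable {n : ℕ} {o : Fin n} {δ r L : ℝ} {p : SpaceTime n}

section Cutoff

theorem gradSq_crd (o : Fin n) (p : SpaceTime n) : gradSq dir (crd o) p = 1 := by
  simp [gradSq, dirDeriv_dir_crd]

theorem frameLap_crd (o : Fin n) (p : SpaceTime n) : frameLap dir (crd o) p = 0 := by
  have hfst (i : Fin n) : dirDeriv (dir i) (crd o) = fun _ => if o = i then 1 else 0 :=
    funext fun p => dirDeriv_dir_crd i o p
  simp [frameLap, hfst, dirDeriv_const]

theorem gradSq_time (p : SpaceTime n) : gradSq dir time p = 0 := by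
  simp [gradSq, dirDeriv_dir_time]

theorem frameLap_time (p : SpaceTime n) : frameLap dir time p = 0 := by
  have hfst (i : Fin n) : dirDeriv (dir i) time = fun _ => 0 := funext (dirDeriv_dir_time i)
  simp [frameLap, hfst, dirDeriv_const]

theorem gradSq_nsq (p : SpaceTime n) : gradSq dir nsq p = 4 * nsq p := by
  simp only [gradSq, dirDeriv_dir_nsq, nsq, Finset.mul_sum]
  exact Finset.sum_congr rfl fun i _ => by ring

theorem frameLap_nsq (p : SpaceTime n) : frameLap dir nsq p = 2 * n := by
  have hfst (i : Fin n) : dirDeriv (dir i) nsq = fun p => 2 * crd i p :=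
    funext (dirDeriv_dir_nsq i)
  have hsnd (i : Fin n) : dirDeriv (dir i) (fun p => 2 * crd i p) p = 2 := by
    rw [dirDeriv_const_mul (by fun_prop), dirDeriv_dir_crd, if_pos rfl, mul_one]
  simp [frameLap, hfst, hsnd, mul_comm]

/-- The cutoff function to the region `x_o > δ`, `|x|² < 2r²`, `t < 2L`; it equals `1` where
`x_o ≥ 2δ`, `|x| ≤ r` and `t ≤ L`. -/
noncomputable def cutoff (o : Fin n) (δ r L : ℝ) (p : SpaceTime n) : ℝ :=
  smoothTransition (crd o p / δ - 1) * smoothTransition (2 - nsq p / r ^ 2) *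
    smoothTransition (2 - time p / L)

@[fun_prop]
theorem contDiff_cutoff (o : Fin n) (δ r L : ℝ) : ContDiff ℝ ∞ (cutoff o δ r L) := by
  unfold cutoff
  fun_prop

theorem cutoff_nonneg (o : Fin n) (δ r L : ℝ) (p : SpaceTime n) : 0 ≤ cutoff o δ r L p :=
  mul_nonneg (mul_nonneg (smoothTransition.nonneg _) (smoothTransition.nonneg _))
    (smoothTransition.nonneg _)

theorem cutoff_le_one (o : Fin n) (δ r L : ℝ) (p : SpaceTime n) : cutoff o δ r L p ≤ 1 :=
  mul_le_one₀ (mul_le_one₀ (smoothTransition.le_one _) (smoothTransition.nonneg _)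
    (smoothTransition.le_one _)) (smoothTransition.nonneg _) (smoothTransition.le_one _)

theorem cutoff_eq_one (hδ : 0 < δ) (hr : 0 < r) (hL : 0 < L) (hl : 2 * δ ≤ crd o p)
    (hN : nsq p ≤ r ^ 2) (ht : time p ≤ L) : cutoff o δ r L p = 1 := by
  have hl' := (le_div_iff₀ hδ).mpr hl
  have hN' := (div_le_one (by positivity)).mpr hN
  have ht' := (div_le_one hL).mpr ht
  rw [cutoff, smoothTransition.one_of_one_le (by linarith),
    smoothTransition.one_of_one_le (by linarith), smoothTransition.one_of_one_le (by linarith),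
    one_mul, one_mul]

theorem cutoff_eq_zero (hδ : 0 < δ) (hr : 0 < r) (hL : 0 < L)
    (h : crd o p ≤ δ ∨ 2 * r ^ 2 ≤ nsq p ∨ 2 * L ≤ time p) : cutoff o δ r L p = 0 := by
  rw [cutoff, mul_eq_zero, mul_eq_zero, or_assoc]
  refine h.imp (fun hl => ?_) (Or.imp (fun hN => ?_) fun ht => ?_) <;>
    apply smoothTransition.zero_of_nonpos
  · linarith [(div_le_one hδ).mpr hl]
  · linarith [(le_div_iff₀ (by positivity)).mpr hN]
  · linarith [(le_div_iff₀ hL).mpr ht]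

theorem exists_parabolicBdd_smoothTransition_crd (o : Fin n) (δ : ℝ) :
    ∃ C, ParabolicBdd dir timeDir C (fun p => smoothTransition (crd o p / δ - 1)) := by
  obtain ⟨C, hC⟩ := exists_parabolicBdd_smoothTransition_comp (dir (n := n)) timeDir ((1 / δ) ^ 2)
  refine ⟨C, hC _ (by fun_prop) fun p _ => ?_⟩
  rw [show (fun p : SpaceTime n => crd o p / δ - 1) = fun p => 1 / δ * crd o p + -1 from
      funext fun p => by ring, dirDeriv_affine (by fun_prop), gradSq_affine _ (by fun_prop),
    frameLap_affine _ (by fun_prop), dirDeriv_timeDir_crd, gradSq_crd, frameLap_crd, mul_zero,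
    mul_one, abs_zero]
  exact ⟨sq_nonneg _, le_rfl, sq_nonneg _⟩

theorem exists_parabolicBdd_smoothTransition_nsq (n : ℕ) : ∃ C, ∀ r, 1 ≤ r →
    ParabolicBdd (dir (n := n)) timeDir C (fun p => smoothTransition (2 - nsq p / r ^ 2)) := by
  obtain ⟨C, hC⟩ := exists_parabolicBdd_smoothTransition_comp (dir (n := n)) timeDir (8 + 2 * n)
  refine ⟨C, fun r hr => hC _ (by fun_prop) fun p hp => ?_⟩
  obtain ⟨k, hk⟩ : ∃ k, k = (r ^ 2)⁻¹ := ⟨_, rfl⟩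
  have hk0 : 0 ≤ k := by rw [hk]; positivity
  have hk1 : k ≤ 1 := by rw [hk]; exact inv_le_one_of_one_le₀ (one_le_pow₀ hr)
  simp only [div_eq_mul_inv, ← hk] at hp ⊢
  rw [show (fun p : SpaceTime n => 2 - nsq p * k) = fun p => -k * nsq p + 2 from
      funext fun p => by ring, dirDeriv_affine (by fun_prop), gradSq_affine _ (by fun_prop),
    frameLap_affine _ (by fun_prop), dirDeriv_timeDir_nsq, gradSq_nsq, frameLap_nsq, mul_zero,
    abs_zero, abs_mul, abs_neg, abs_of_nonneg hk0, abs_of_nonneg (by positivity)]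
  refine ⟨by positivity, ?_, ?_⟩
  · calc (-k) ^ 2 * (4 * nsq p) = 4 * (k * (nsq p * k)) := by ring
      _ ≤ 4 * (1 * 2) := by
        have := mul_nonneg (nsq_nonneg p) hk0
        gcongr
        linarith
      _ ≤ 8 + 2 * n := by linarith [n.cast_nonneg (α := ℝ)]
  · linarith [mul_le_mul_of_nonneg_right hk1 (by positivity : (0 : ℝ) ≤ 2 * n)]

theorem exists_parabolicBdd_smoothTransition_time (n : ℕ) (L : ℝ) : ∃ C,
    ParabolicBdd (dir (n := n)) timeDir C (fun p => smoothTransition (2 - time p / L)) := by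
  obtain ⟨C, hC⟩ := exists_parabolicBdd_smoothTransition_comp (dir (n := n)) timeDir |1 / L|
  refine ⟨C, hC _ (by fun_prop) fun p _ => ?_⟩
  rw [show (fun p : SpaceTime n => 2 - time p / L) = fun p => -(1 / L) * time p + 2 from
      funext fun p => by ring, dirDeriv_affine (by fun_prop), gradSq_affine _ (by fun_prop),
    frameLap_affine _ (by fun_prop), dirDeriv_timeDir_time, gradSq_time, frameLap_time, mul_zero,
    mul_zero, mul_one, abs_neg, abs_zero]
  exact ⟨le_rfl, abs_nonneg _, abs_nonneg _⟩

theorem exists_parabolicBdd_cutoff (o : Fin n) (δ L : ℝ) :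
    ∃ C, ∀ r, 1 ≤ r → ParabolicBdd dir timeDir C (cutoff o δ r L) := by
  obtain ⟨C₁, h₁⟩ := exists_parabolicBdd_smoothTransition_crd o δ
  obtain ⟨C₂, h₂⟩ := exists_parabolicBdd_smoothTransition_nsq n
  obtain ⟨C₃, h₃⟩ := exists_parabolicBdd_smoothTransition_time n L
  exact ⟨_, fun r hr => (h₁.mul (h₂ r hr)).mul h₃⟩

end Cutoff

end SpaceTime

theorem BackwardHeatBound.congr {X : Type*} [NormedAddCommGroup X] [NormedSpace ℝ X] {ι : Type*}
    [Fintype ι] {e : ι → X} {s : X} {c : ℝ} {u v : X → ℝ} {p : X}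
    (hP : BackwardHeatBound e s c u p) (h : v =ᶠ[𝓝 p] u) : BackwardHeatBound e s c v p := by
  rwa [BackwardHeatBound, backwardHeat_congr e s h, gradSq_congr e h, h.eq_of_nhds]

theorem one_add_mul_exp_neg_le (x : ℝ) :
    (1 + x) * Real.exp (-(x / 100)) ≤ 200 * Real.exp (-(x / 200)) := by
  have hlin : 1 + x ≤ 200 * Real.exp (x / 200) := by linarith [Real.add_one_le_exp (x / 200)]
  calc (1 + x) * Real.exp (-(x / 100)) ≤ 200 * Real.exp (x / 200) * Real.exp (-(x / 100)) := by
        gcongr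
    _ = 200 * Real.exp (-(x / 200)) := by rw [mul_assoc, ← Real.exp_add]; congr 2; ring

namespace SpaceTime

section Absorption

variable {n : ℕ} {o : Fin n} {γ δ r μ L c : ℝ} {p : SpaceTime n}

theorem weightSlope_le {t : ℝ} (hμ : 1 ≤ μ) (hL : 64 * μ * L ≤ 1) (hγ : 0 ≤ γ)
    (ht : |L - t| ≤ L) : weightSlope γ μ L t ≤ γ * (2 * L) := by
  refine mul_le_mul_of_nonneg_left ?_ hγ
  have hsq : 16 * μ * (L - t) ^ 2 ≤ 16 * μ * L ^ 2 :=
    mul_le_mul_of_nonneg_left (sq_le_sq' (neg_le_of_abs_le ht) (le_of_abs_le ht)) (by positivity)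
  nlinarith [le_of_abs_le ht, (abs_nonneg _).trans ht]

theorem weightSlope_nonpos {t : ℝ} (hμ : 1 ≤ μ) (hL : 64 * μ * L ≤ 1) (hγ : 0 ≤ γ)
    (htL : L ≤ t) (ht : |L - t| ≤ L) : weightSlope γ μ L t ≤ 0 := by
  have hfactor : weightSlope γ μ L t = -(γ * ((t - L) * (1 - 16 * μ * (t - L)))) := by
    rw [weightSlope]
    ring
  have hsmall : 16 * μ * (t - L) ≤ 16 * μ * L :=
    mul_le_mul_of_nonneg_left (by linarith [neg_le_of_abs_le ht]) (by positivity)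
  have := mul_nonneg hγ (mul_nonneg (sub_nonneg.mpr htL)
    (by linarith : 0 ≤ 1 - 16 * μ * (t - L)))
  linarith

theorem crd_le_norm (o : Fin n) (p : SpaceTime n) : crd o p ≤ ‖p.1‖ :=
  le_of_sq_le_sq ((crd_sq_le o p).trans_eq (nsq_eq p)) (norm_nonneg _)

theorem weightSlope_mul_crd_le (hμ : 1 ≤ μ) (hL : 64 * μ * L ≤ 1) (hγ : 0 ≤ γ)
    (hr : 400 * γ * L ≤ r) (ht : |L - time p| ≤ L) (hl : 0 ≤ crd o p) (hδ : 0 ≤ δ)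
    (h : crd o p ≤ 2 * δ ∨ r ^ 2 ≤ nsq p ∨ L ≤ time p) :
    2 * (weightSlope γ μ L (time p) * crd o p) ≤ 8 * γ * L * δ + nsq p / 100 := by
  have hL0 : 0 ≤ L := (abs_nonneg _).trans ht
  have hslope := mul_le_mul_of_nonneg_right (weightSlope_le hμ hL hγ ht) hl
  have hγL : 0 ≤ γ * L := mul_nonneg hγ hL0
  have hγLδ : 0 ≤ γ * L * δ := mul_nonneg hγL hδ
  rcases h with hcrd | hnsq | htime
  · linarith [mul_le_mul_of_nonneg_left hcrd hγL, nsq_nonneg p]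
  · rw [nsq_eq] at hnsq ⊢
    have hnorm : r ≤ ‖p.1‖ := le_of_sq_le_sq hnsq (norm_nonneg _)
    have hquad := mul_le_mul_of_nonneg_right (hr.trans hnorm) (norm_nonneg p.1)
    linarith [mul_le_mul_of_nonneg_left (crd_le_norm o p) hγL]
  · linarith [mul_nonpos_of_nonpos_of_nonneg (weightSlope_nonpos hμ hL hγ htime ht) hl,
      nsq_nonneg p]

theorem exp_weight_sq_le (hμ : 1 ≤ μ) (hL : 64 * μ * L ≤ 1) (hγ : 0 ≤ γ) (hr : 400 * γ * L ≤ r)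
    (ht : |L - time p| ≤ L) (hl : 0 ≤ crd o p) (hδ : 0 ≤ δ)
    (h : crd o p ≤ 2 * δ ∨ r ^ 2 ≤ nsq p ∨ L ≤ time p) :
    Real.exp (weight o γ μ L p) ^ 2 ≤
      Real.exp (8 * γ * L * δ) * Real.exp (-(nsq p / 100)) := by
  have hslope := weightSlope_mul_crd_le hμ hL hγ hr ht hl hδ h
  have hL1 : L ≤ 1 := by nlinarith [(abs_nonneg _).trans ht]
  have hcurv : nsq p / 100 ≤ -weightCurv L (time p) * nsq p := by
    rw [weightCurv]
    nlinarith [nsq_nonneg p, neg_le_of_abs_le ht]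
  rw [← Real.exp_nat_mul, ← Real.exp_add, Real.exp_le_exp, weight, quad]
  push_cast
  linarith

theorem expConj_cutoff_mul_sq_le_of_cutoff_eq_one {u : SpaceTime n → ℝ} (hu : ContDiff ℝ ∞ u)
    (hμ : 1 + c ^ 2 ≤ μ) (hL0 : 0 < L) (hL : 64 * μ * L ≤ 1) (hδ : 0 < δ) (hr : 0 < r)
    (hγ : 0 ≤ γ) (hγδ : 1 + 2 * μ ^ 2 + c ^ 2 ≤ γ * δ) (ht0 : 0 ≤ time p) (htL : time p < L)
    (hl : 2 * δ < crd o p) (hN : nsq p < r ^ 2) (hP : BackwardHeatBound dir timeDir c u p) :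
    expConj (weight o γ μ L) (fun q => cutoff o δ r L q * u q) p ^ 2 ≤
      carlemanBulk dir timeDir (weight o γ μ L) μ (fun q => cutoff o δ r L q * u q) p := by
  have hev : (fun q => cutoff o δ r L q * u q) =ᶠ[𝓝 p] u := by
    filter_upwards [(isOpen_lt continuous_const (continuous_crd o)).mem_nhds hl,
      (isOpen_lt continuous_nsq continuous_const).mem_nhds hN,
      (isOpen_lt continuous_time continuous_const).mem_nhds htL] with q hlq hNq htq
    rw [cutoff_eq_one hδ hr hL0 (le_of_lt hlq) (le_of_lt hNq) (le_of_lt htq), one_mul]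
  have hμ0 : 0 ≤ μ := by linarith [sq_nonneg c]
  refine sq_le_carlemanBulk_weight (by fun_prop) hμ ?_ htL.le hγ (by linarith) ?_ (hP.congr hev)
  · linarith [mul_nonneg hμ0 ht0]
  · exact hγδ.trans (mul_le_mul_of_nonneg_left (by linarith) hγ)

theorem expConj_mul_sq_le {B : ℝ} {χ u : SpaceTime n → ℝ} (hχ : ParabolicBdd dir timeDir B χ)
    (hχ1 : |χ p| ≤ 1) (hu : ContDiff ℝ ∞ u) (hμ : 1 ≤ μ) (hL : 64 * μ * |L - time p| ≤ 1)
    (hγ : 1 ≤ γ) (hP : BackwardHeatBound dir timeDir c u p) :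
    expConj (weight o γ μ L) (fun q => χ q * u q) p ^ 2 ≤
      carlemanBulk dir timeDir (weight o γ μ L) μ (fun q => χ q * u q) p +
        (1 + 64 * μ ^ 2 + (6 * B ^ 2 * c ^ 2 + 12 * B ^ 2 + 12 * B)) * (γ ^ 2 * (1 + nsq p)) *
          (Real.exp (weight o γ μ L p) ^ 2 * (gradSq dir u p + u p ^ 2)) := by
  obtain ⟨D, hD⟩ : ∃ D, D = 6 * B ^ 2 * c ^ 2 + 12 * B ^ 2 + 12 * B := ⟨_, rfl⟩
  obtain ⟨F, hF⟩ : ∃ F, F = Real.exp (weight o γ μ L p) ^ 2 * (gradSq dir u p + u p ^ 2) :=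
    ⟨_, rfl⟩
  have hbulk := neg_le_carlemanBulk_weight (o := o) hμ hL hγ (hχ.sq_backwardHeat_mul_le hu hP)
  rw [← hD] at hbulk ⊢
  rw [← hF]
  have hG := gradSq_nonneg dir u p
  have hB := hχ.nonneg
  have hD0 : 0 ≤ D := by rw [hD]; positivity
  have hF0 : 0 ≤ F := by rw [hF]; positivity
  have hconj : expConj (weight o γ μ L) (fun q => χ q * u q) p ^ 2 ≤ F := by
    rw [hF, expConj, mul_pow, mul_pow]
    have := mul_le_mul_of_nonneg_right (sq_le_one_iff_abs_le_one _ |>.mpr hχ1) (sq_nonneg (u p))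
    exact mul_le_mul_of_nonneg_left (by linarith) (sq_nonneg _)
  have hγN : 1 ≤ γ ^ 2 * (1 + nsq p) := by nlinarith [nsq_nonneg p]
  have hzeroth := mul_le_mul_of_nonneg_left hconj
    (by positivity : 0 ≤ 1 + 64 * μ ^ 2 * (γ ^ 2 * (1 + nsq p)))
  have habsorb := mul_le_mul_of_nonneg_right
    (le_mul_of_one_le_right (by positivity : 0 ≤ 1 + D) hγN) hF0
  have hDF : 0 ≤ D * F := by positivity
  have hscale : 1 / 2 * Real.exp (weight o γ μ L p) ^ 2 * (D * (gradSq dir u p + u p ^ 2)) =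
      1 / 2 * (D * F) := by rw [hF]; ring
  linarith

theorem exists_expConj_cutoff_mul_sq_le (o : Fin n) (hμ : 1 + c ^ 2 ≤ μ) (hL0 : 0 < L)
    (hL : 64 * μ * L ≤ 1) (hδ : 0 < δ) :
    ∃ C, 0 ≤ C ∧ ∀ γ r, 1 ≤ γ → 1 + 2 * μ ^ 2 + c ^ 2 ≤ γ * δ → 1 ≤ r → 400 * γ * L ≤ r →
      ∀ u : SpaceTime n → ℝ, ContDiff ℝ ∞ u → ∀ p, 0 ≤ time p → time p ≤ 2 * L →
      δ ≤ crd o p → BackwardHeatBound dir timeDir c u p →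
      expConj (weight o γ μ L) (fun q => cutoff o δ r L q * u q) p ^ 2 ≤
        carlemanBulk dir timeDir (weight o γ μ L) μ (fun q => cutoff o δ r L q * u q) p +
          C * γ ^ 2 * Real.exp (8 * γ * L * δ) *
            (Real.exp (-(nsq p / 200)) * (gradSq dir u p + u p ^ 2)) := by
  obtain ⟨B, hB⟩ := exists_parabolicBdd_cutoff o δ L
  have hB0 := (hB 1 le_rfl).nonneg
  have hμ1 : 1 ≤ μ := by linarith [sq_nonneg c]
  obtain ⟨C, hC⟩ : ∃ C, C = 1 + 64 * μ ^ 2 + (6 * B ^ 2 * c ^ 2 + 12 * B ^ 2 + 12 * B) := ⟨_, rfl⟩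
  have hC0 : 0 ≤ C := by rw [hC]; positivity
  refine ⟨200 * C, by positivity, fun γ r hγ hγδ hr1 hr u hu p ht0 htL hl hP => ?_⟩
  have hG := gradSq_nonneg dir u p
  have ht : |L - time p| ≤ L := abs_le.mpr ⟨by linarith, by linarith⟩
  by_cases hgood : 2 * δ < crd o p ∧ nsq p < r ^ 2 ∧ time p < L
  · refine (expConj_cutoff_mul_sq_le_of_cutoff_eq_one hu hμ hL0 hL hδ (by linarith)
      (by linarith) hγδ ht0 hgood.2.2 hgood.1 hgood.2.1 hP).trans (le_add_of_nonneg_right ?_)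
    positivity
  rw [not_and_or, not_and_or, not_lt, not_lt, not_lt] at hgood
  have hexp := exp_weight_sq_le hμ1 hL (by linarith) hr ht (by linarith) hδ.le hgood
  have hχ : |cutoff o δ r L p| ≤ 1 := by
    rw [abs_of_nonneg (cutoff_nonneg o δ r L p)]
    exact cutoff_le_one o δ r L p
  refine (expConj_mul_sq_le (hB r hr1) hχ hu hμ1
    ((mul_le_mul_of_nonneg_left ht (by positivity)).trans hL) hγ hP).trans
    (add_le_add_right ?_ _)
  have hN := nsq_nonneg p
  rw [← hC]
  calc C * (γ ^ 2 * (1 + nsq p)) * (Real.exp (weight o γ μ L p) ^ 2 * (gradSq dir u p + u p ^ 2))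
      ≤ C * (γ ^ 2 * (1 + nsq p)) * (Real.exp (8 * γ * L * δ) * Real.exp (-(nsq p / 100)) *
          (gradSq dir u p + u p ^ 2)) := by gcongr
    _ = C * γ ^ 2 * Real.exp (8 * γ * L * δ) * (gradSq dir u p + u p ^ 2) *
          ((1 + nsq p) * Real.exp (-(nsq p / 100))) := by ring
    _ ≤ C * γ ^ 2 * Real.exp (8 * γ * L * δ) * (gradSq dir u p + u p ^ 2) *
          (200 * Real.exp (-(nsq p / 200))) :=
        mul_le_mul_of_nonneg_left (one_add_mul_exp_neg_le _) (by positivity)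
    _ = _ := by ring

end Absorption

variable {n : ℕ} {o : Fin n} {δ r c μ L ε B M : ℝ} {p : SpaceTime n}

section TimeCutoff

/-- The cutoff function away from the initial time: it vanishes where `t ≤ ε` and equals `1` where
`t ≥ 2ε`. -/
noncomputable def timeCutoff (ε : ℝ) (p : SpaceTime n) : ℝ :=
  smoothTransition (time p / ε - 1)

@[fun_prop]
theorem contDiff_timeCutoff (ε : ℝ) : ContDiff ℝ ∞ (timeCutoff ε : SpaceTime n → ℝ) := by
  unfold timeCutoff
  fun_prop

theorem timeCutoff_nonneg (ε : ℝ) (p : SpaceTime n) : 0 ≤ timeCutoff ε p :=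
  smoothTransition.nonneg _

theorem timeCutoff_le_one (ε : ℝ) (p : SpaceTime n) : timeCutoff ε p ≤ 1 :=
  smoothTransition.le_one _

theorem timeCutoff_eq_one (hε : 0 < ε) (h : 2 * ε ≤ time p) : timeCutoff ε p = 1 :=
  smoothTransition.one_of_one_le (by linarith [(le_div_iff₀ hε).mpr h])

theorem timeCutoff_eq_zero (hε : 0 < ε) (h : time p ≤ ε) : timeCutoff ε p = 0 :=
  smoothTransition.zero_of_nonpos (by linarith [(div_le_one hε).mpr h])

theorem dirDeriv_dir_timeCutoff (ε : ℝ) (i : Fin n) (p : SpaceTime n) :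
    dirDeriv (dir i) (timeCutoff ε) p = 0 :=
  dirDeriv_dir_comp_time (a := fun t => smoothTransition (t / ε - 1)) (by fun_prop) i

theorem dirDeriv_timeDir_timeCutoff (ε : ℝ) (p : SpaceTime n) :
    dirDeriv timeDir (timeCutoff ε) p = deriv smoothTransition (time p / ε - 1) * ε⁻¹ := by
  rw [show (timeCutoff ε : SpaceTime n → ℝ) = fun p => smoothTransition (ε⁻¹ * time p + -1) from
      funext fun p => by rw [timeCutoff]; ring_nf,
    dirDeriv_comp (by fun_prop) (by fun_prop), dirDeriv_affine (by fun_prop),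
    dirDeriv_timeDir_time]
  ring_nf

theorem dirDeriv_timeDir_timeCutoff_nonneg (hε : 0 ≤ ε) (p : SpaceTime n) :
    0 ≤ dirDeriv timeDir (timeCutoff ε) p := by
  rw [dirDeriv_timeDir_timeCutoff]
  exact mul_nonneg smoothTransition.monotone.deriv_nonneg (inv_nonneg.mpr hε)

end TimeCutoff

section Gaussian

theorem integrableOn_exp_neg_nsq {a : ℝ} (ha : 0 < a) (t₁ t₂ : ℝ) :
    IntegrableOn (fun p : SpaceTime n => Real.exp (-(nsq p / a))) (time ⁻¹' Icc t₁ t₂) := by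
  have hspace : Integrable fun x : EuclideanSpace ℝ (Fin n) => Real.exp (-(‖x‖ ^ 2 / a)) := by
    have h := (GaussianFourier.integrable_cexp_neg_mul_sq_norm_add (V := EuclideanSpace ℝ (Fin n))
      (b := ((1 / a : ℝ) : ℂ)) (by simpa using ha) 0 0).norm
    refine h.congr (ae_of_all _ fun x => ?_)
    simp only [Complex.norm_exp]
    congr 1
    simp [← Complex.ofReal_pow]
    ring_nf
  have hslab : time ⁻¹' Icc t₁ t₂ = (univ : Set (EuclideanSpace ℝ (Fin n))) ×ˢ Icc t₁ t₂ := by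
    rw [univ_prod]
    rfl
  rw [hslab, IntegrableOn, Measure.volume_eq_prod, ← Measure.prod_restrict, Measure.restrict_univ]
  simpa only [nsq_eq] using hspace.comp_fst (volume.restrict (Icc t₁ t₂))

theorem exp_neg_nsq_le_one (p : SpaceTime n) : Real.exp (-(nsq p / 400)) ≤ 1 :=
  Real.exp_le_one_iff.mpr (by linarith [nsq_nonneg p])

theorem gradSq_exp_neg_nsq_le (p : SpaceTime n) :
    gradSq dir (fun q : SpaceTime n => Real.exp (-(nsq q / 400))) p
      ≤ Real.exp (-(nsq p / 400)) := by
  have hlin : Real.exp (-(nsq p / 400)) * nsq p ≤ 400 := by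
    have := mul_le_mul_of_nonneg_left (Real.add_one_le_exp (nsq p / 400))
      (Real.exp_nonneg (-(nsq p / 400)))
    rw [← Real.exp_add, neg_add_cancel, Real.exp_zero] at this
    linarith [Real.exp_nonneg (-(nsq p / 400))]
  rw [show (fun q : SpaceTime n => Real.exp (-(nsq q / 400))) =
      fun q => Real.exp (-(1 / 400) * nsq q + 0) from funext fun q => by ring_nf,
    gradSq_comp _ Real.differentiableAt_exp (by fun_prop), gradSq_affine _ (by fun_prop),
    gradSq_nsq, Real.deriv_exp, show -(1 / 400) * nsq p + 0 = -(nsq p / 400) by ring]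
  have := mul_le_mul_of_nonneg_left hlin (Real.exp_nonneg (-(nsq p / 400)))
  linarith [Real.exp_nonneg (-(nsq p / 400))]

/-- A Gaussian weight with a time cutoff. -/
noncomputable def gaussianWt (ε : ℝ) (p : SpaceTime n) : ℝ :=
  timeCutoff ε p * Real.exp (-(nsq p / 400))

@[fun_prop]
theorem contDiff_gaussianWt (ε : ℝ) : ContDiff ℝ ∞ (gaussianWt ε : SpaceTime n → ℝ) := by
  unfold gaussianWt
  fun_prop

theorem sq_gaussianWt_le (ε : ℝ) (p : SpaceTime n) :
    gaussianWt ε p ^ 2 ≤ Real.exp (-(nsq p / 400)) := by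
  have hle : gaussianWt ε p ≤ Real.exp (-(nsq p / 400)) :=
    mul_le_of_le_one_left (Real.exp_nonneg _) (timeCutoff_le_one ε p)
  have hnonneg : 0 ≤ gaussianWt ε p := mul_nonneg (timeCutoff_nonneg ε p) (Real.exp_nonneg _)
  rw [sq]
  exact (mul_le_of_le_one_left hnonneg (hle.trans (exp_neg_nsq_le_one p))).trans hle

theorem gradSq_gaussianWt_le (ε : ℝ) (p : SpaceTime n) :
    gradSq dir (gaussianWt ε) p ≤ 2 * Real.exp (-(nsq p / 400)) := by
  have hζ : timeCutoff ε p ^ 2 ≤ 1 := pow_le_one₀ (timeCutoff_nonneg ε p) (timeCutoff_le_one ε p)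
  have hzero : gradSq dir (timeCutoff ε) p = 0 := by simp [gradSq, dirDeriv_dir_timeCutoff]
  have hmul := gradSq_mul_le dir (f := timeCutoff ε) (p := p)
    (g := fun q => Real.exp (-(nsq q / 400))) (by fun_prop) (by fun_prop)
  rw [hzero, mul_zero, zero_add, mul_assoc] at hmul
  exact hmul.trans (mul_le_mul_of_nonneg_left ((mul_le_of_le_one_left (gradSq_nonneg _ _ _)
    hζ).trans (gradSq_exp_neg_nsq_le p)) two_pos.le)

theorem gaussianWt_mul_dirDeriv_timeDir_nonneg (hε : 0 ≤ ε) (p : SpaceTime n) :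
    0 ≤ gaussianWt ε p * dirDeriv timeDir (gaussianWt ε) p := by
  have hG : dirDeriv timeDir (fun q : SpaceTime n => Real.exp (-(nsq q / 400))) p = 0 := by
    rw [show (fun q : SpaceTime n => Real.exp (-(nsq q / 400))) =
        fun q => Real.exp (-(1 / 400) * nsq q + 0) from funext fun q => by ring_nf,
      dirDeriv_exp (by fun_prop), dirDeriv_affine (by fun_prop), dirDeriv_timeDir_nsq, mul_zero,
      mul_zero]
  have hζ := timeCutoff_nonneg ε p
  have hζt := dirDeriv_timeDir_timeCutoff_nonneg hε p
  unfold gaussianWt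
  rw [dirDeriv_mul (by fun_prop) (by fun_prop), hG]
  positivity

/-- The left-hand side is the weight which the Caccioppoli inequality puts on `u²`. -/
theorem caccioppoli_weight_mul_gaussianWt_le {χ : SpaceTime n → ℝ} {K : ℝ}
    (hχ : ParabolicBdd dir timeDir B χ) (hε : 0 ≤ ε) (hK : 0 ≤ K) (p : SpaceTime n) :
    -2 * (χ p * gaussianWt ε p) * dirDeriv timeDir (fun q => χ q * gaussianWt ε q) p
        + K * (χ p * gaussianWt ε p) ^ 2 + 8 * gradSq dir (fun q => χ q * gaussianWt ε q) p
      ≤ ((K + 34) * B ^ 2 + 16 * B) * Real.exp (-(nsq p / 400)) := by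
  have hB := hχ.nonneg
  have hχs := hχ.smooth
  have hχsq := hχ.sq_le p
  have := Real.exp_nonneg (-(nsq p / 400))
  have hg := sq_gaussianWt_le ε p
  have hsq : (χ p * gaussianWt ε p) ^ 2 ≤ B ^ 2 * Real.exp (-(nsq p / 400)) := by
    rw [mul_pow]
    gcongr
  have htime : -2 * (χ p * gaussianWt ε p) * dirDeriv timeDir (fun q => χ q * gaussianWt ε q) p
      ≤ 2 * (B ^ 2 * Real.exp (-(nsq p / 400))) := by
    have hχt : -(χ p * dirDeriv timeDir χ p) ≤ B ^ 2 :=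
      calc -(χ p * dirDeriv timeDir χ p) ≤ |χ p| * |dirDeriv timeDir χ p| := by
            rw [← abs_mul]
            exact neg_le_abs _
        _ ≤ B * B := mul_le_mul (hχ.abs_le p) (hχ.abs_dirDeriv_le p) (abs_nonneg _) hB
        _ = B ^ 2 := (sq B).symm
    have hsign := mul_nonneg (sq_nonneg (χ p)) (gaussianWt_mul_dirDeriv_timeDir_nonneg hε p)
    have hbound := (mul_le_mul_of_nonneg_right hχt (sq_nonneg (gaussianWt ε p))).trans
      (mul_le_mul_of_nonneg_left hg (sq_nonneg B))
    rw [dirDeriv_mul (by fun_prop) (by fun_prop)]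
    linarith
  have hgrad : gradSq dir (fun q => χ q * gaussianWt ε q) p
      ≤ 2 * (Real.exp (-(nsq p / 400)) * B) + 2 * (B ^ 2 * (2 * Real.exp (-(nsq p / 400)))) := by
    refine (gradSq_mul_le dir (hχs.differentiable (by simp) p) (by fun_prop)).trans ?_
    rw [mul_assoc, mul_assoc]
    have := hχ.gradSq_le p
    have := gradSq_gaussianWt_le ε p
    gcongr
    exacts [gradSq_nonneg _ _ _, gradSq_nonneg _ _ _]
  linarith [mul_le_mul_of_nonneg_left hsq hK]

end Gaussian

section Energy

theorem isCompact_box (o : Fin n) (δ R a b : ℝ) :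
    IsCompact {p : SpaceTime n | δ ≤ crd o p ∧ nsq p ≤ R ∧ a ≤ time p ∧ time p ≤ b} := by
  have hclosed : IsClosed
      {p : SpaceTime n | δ ≤ crd o p ∧ nsq p ≤ R ∧ a ≤ time p ∧ time p ≤ b} :=
    (isClosed_le continuous_const (continuous_crd o)).inter <|
      (isClosed_le continuous_nsq continuous_const).inter <|
      (isClosed_le continuous_const continuous_time).inter <|
      isClosed_le continuous_time continuous_const
  refine .of_isClosed_subset ((isCompact_closedBall (0 : EuclideanSpace ℝ (Fin n)) √R).prod
    (isCompact_Icc (a := a) (b := b))) hclosed fun p hp => ⟨?_, hp.2.2⟩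
  rw [mem_closedBall_zero_iff]
  exact Real.le_sqrt_of_sq_le (nsq_eq p ▸ hp.2.1)

/-- The compact set on which a solution enters the estimates. -/
def energyBox (o : Fin n) (δ r L ε : ℝ) : Set (SpaceTime n) :=
  {p | δ / 2 ≤ crd o p ∧ nsq p ≤ 8 * r ^ 2 ∧ ε / 2 ≤ time p ∧ time p ≤ 4 * L}

/-- The Gaussian weight of the local energy estimate, supported in `energyBox o δ r L ε`. -/
noncomputable def energyWt (o : Fin n) (δ r L ε : ℝ) (p : SpaceTime n) : ℝ :=
  cutoff o (δ / 2) (2 * r) (2 * L) p * gaussianWt (ε / 2) p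

@[fun_prop]
theorem contDiff_energyWt (o : Fin n) (δ r L ε : ℝ) : ContDiff ℝ ∞ (energyWt o δ r L ε) := by
  unfold energyWt
  fun_prop

theorem energyWt_eq_zero (hδ : 0 < δ) (hr : 0 < r) (hL : 0 < L) (hε : 0 < ε)
    (hp : p ∉ energyBox o δ r L ε) : energyWt o δ r L ε p = 0 := by
  rw [energyWt]
  by_cases ht : ε / 2 ≤ time p
  · rw [cutoff_eq_zero (half_pos hδ) (by positivity) (by positivity), zero_mul]
    contrapose! hp
    exact ⟨hp.1.le, by linarith [hp.2.1], ht, by linarith [hp.2.2]⟩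
  · rw [gaussianWt, timeCutoff_eq_zero (half_pos hε) (le_of_not_ge ht), zero_mul, mul_zero]

theorem energyWt_eventuallyEq_zero (hδ : 0 < δ) (hr : 0 < r) (hL : 0 < L) (hε : 0 < ε)
    (hp : p ∉ energyBox o δ r L ε) : energyWt o δ r L ε =ᶠ[𝓝 p] fun _ => 0 := by
  filter_upwards [(isCompact_box o _ _ _ _).isClosed.isOpen_compl.mem_nhds hp] with q hq
  exact energyWt_eq_zero hδ hr hL hε hq

theorem hasCompactSupport_energyWt (hδ : 0 < δ) (hr : 0 < r) (hL : 0 < L) (hε : 0 < ε) :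
    HasCompactSupport (energyWt o δ r L ε) :=
  .intro (isCompact_box o _ _ _ _) fun _ hp => energyWt_eq_zero hδ hr hL hε hp

theorem sq_energyWt (hδ : 0 < δ) (hr : 0 < r) (hL : 0 < L) (hε : 0 < ε) (hl : δ ≤ crd o p)
    (hN : nsq p ≤ 4 * r ^ 2) (ht : ε ≤ time p) (htL : time p ≤ 2 * L) :
    energyWt o δ r L ε p ^ 2 = Real.exp (-(nsq p / 200)) := by
  rw [energyWt, gaussianWt, cutoff_eq_one (half_pos hδ) (by positivity) (by positivity)
    (by linarith) (by linarith) htL, timeCutoff_eq_one (half_pos hε) (by linarith), one_mul,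
    one_mul, ← Real.exp_nat_mul]
  congr 1
  push_cast
  ring

theorem integrable_energyWt_sq_mul (hδ : 0 < δ) (hr : 0 < r) (hL : 0 < L) (hε : 0 < ε)
    {f : SpaceTime n → ℝ} (hf : Continuous f) :
    Integrable fun p => energyWt o δ r L ε p ^ 2 * f p :=
  integrable_of_eq_zero_of_eventuallyEq
    (((contDiff_energyWt o δ r L ε).continuous.pow 2).mul hf)
    (hasCompactSupport_energyWt hδ hr hL hε) fun p hp => by rw [hp.eq_of_nhds]; ring

theorem exists_integral_energyWt_le (o : Fin n) (hc : 0 ≤ c) (hδ : 0 < δ) (hL : 0 < L) (M : ℝ) :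
    ∃ J, 0 ≤ J ∧ ∀ r ε, 1 ≤ r → 0 < ε → ∀ U : SpaceTime n → ℝ, ContDiff ℝ ∞ U →
      (∀ p ∈ energyBox o δ r L ε, |U p| ≤ M ∧ BackwardHeatBound dir timeDir c U p) →
      ∫ p, energyWt o δ r L ε p ^ 2 * (gradSq dir U p + U p ^ 2) ≤ J := by
  obtain ⟨B, hB⟩ := exists_parabolicBdd_cutoff o (δ / 2) (2 * L)
  have hB0 := (hB 1 le_rfl).nonneg
  obtain ⟨D, hD⟩ : ∃ D, D = (2 * (c ^ 2 + c) + 1 + 34) * B ^ 2 + 16 * B := ⟨_, rfl⟩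
  have hD0 : 0 ≤ D := hD ▸ by positivity
  let N : SpaceTime n → ℝ := fun p => M ^ 2 * D *
    (time ⁻¹' Icc 0 (4 * L)).indicator (fun q => Real.exp (-(nsq q / 400))) p
  have hN : Integrable N :=
    ((integrableOn_exp_neg_nsq (a := 400) (by norm_num) 0 (4 * L)).integrable_indicator
      (measurableSet_Icc.preimage continuous_time.measurable)).const_mul (M ^ 2 * D)
  have hN0 (p : SpaceTime n) : 0 ≤ N p :=
    mul_nonneg (by positivity) (indicator_nonneg (fun _ _ => Real.exp_nonneg _) p)
  refine ⟨∫ p, N p, integral_nonneg hN0, fun r ε hr hε U hU hP => ?_⟩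
  have hr0 : 0 < r := zero_lt_one.trans_le hr
  obtain ⟨g, hg⟩ : ∃ g, g = energyWt o δ r L ε := ⟨_, rfl⟩
  have hgs : ContDiff ℝ ∞ g := hg ▸ contDiff_energyWt o δ r L ε
  have hgc : HasCompactSupport g := hg ▸ hasCompactSupport_energyWt hδ hr0 hL hε
  obtain ⟨hW, hle⟩ := caccioppoli_inequality (ν := volume) (s := timeDir) hU hgs hgc hc fun p hp =>
    (hP p (not_imp_comm.mp (fun h => hg ▸ energyWt_eq_zero hδ hr0 hL hε h) hp)).2
  rw [← hg]
  refine hle.trans (integral_mono hW hN fun p => ?_)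
  by_cases hp : p ∈ energyBox o δ r L ε
  · have hUM : U p ^ 2 ≤ M ^ 2 :=
      sq_le_sq' (neg_le_of_abs_le (hP p hp).1) (le_of_abs_le (hP p hp).1)
    have hmem : p ∈ time ⁻¹' Icc 0 (4 * L) := ⟨by linarith [hp.2.2.1], hp.2.2.2⟩
    have hweight := caccioppoli_weight_mul_gaussianWt_le (hB (2 * r) (by linarith))
      (half_pos hε).le (by positivity : 0 ≤ 2 * (c ^ 2 + c) + 1) p
    have hgE : g = fun q => cutoff o (δ / 2) (2 * r) (2 * L) q * gaussianWt (ε / 2) q := hg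
    simp only [N, indicator_of_mem hmem, mul_assoc (M ^ 2)]
    rw [← hD] at hweight
    simp only [hgE]
    exact (mul_le_mul_of_nonneg_left hweight (sq_nonneg _)).trans
      (mul_le_mul_of_nonneg_right hUM (by positivity))
  · have hzero : g =ᶠ[𝓝 p] fun _ => 0 := hg ▸ energyWt_eventuallyEq_zero hδ hr0 hL hε hp
    rw [gradSq_congr dir hzero, gradSq_const, hzero.eq_of_nhds]
    simpa using hN0 p

end Energy

section TruncatedCarleman

theorem cutoff_mul_eventuallyEq_zero (hδ : 0 < δ) (hr : 0 < r) (hL : 0 < L) (U : SpaceTime n → ℝ)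
    (hp : ¬(δ ≤ crd o p ∧ nsq p ≤ 2 * r ^ 2 ∧ time p ≤ 2 * L)) :
    (fun q => cutoff o δ r L q * U q) =ᶠ[𝓝 p] fun _ => 0 := by
  have hclosed : IsClosed
      {p : SpaceTime n | δ ≤ crd o p ∧ nsq p ≤ 2 * r ^ 2 ∧ time p ≤ 2 * L} :=
    (isClosed_le continuous_const (continuous_crd o)).inter <|
      (isClosed_le continuous_nsq continuous_const).inter <|
      isClosed_le continuous_time continuous_const
  filter_upwards [hclosed.isOpen_compl.mem_nhds hp] with q hq
  rw [cutoff_eq_zero hδ hr hL, zero_mul]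
  contrapose! hq
  rw [notMem_compl_iff]
  exact ⟨hq.1.le, hq.2.1.le, hq.2.2.le⟩

theorem timeCutoff_eventuallyEq_zero (hε : 0 < ε) (hp : time p < ε) :
    timeCutoff ε =ᶠ[𝓝 p] fun _ => 0 := by
  filter_upwards [(isOpen_lt continuous_time continuous_const).mem_nhds hp] with q hq
  exact timeCutoff_eq_zero hε (le_of_lt hq)

theorem timeCutoff_mul_sq_expConj_le {γ A q : ℝ} {U : SpaceTime n → ℝ} (hμ : 1 ≤ μ)
    (hL0 : 0 < L) (hL : 64 * μ * L ≤ 1) (hγ : 1 ≤ γ) (hδ : 0 < δ) (hr : 0 < r) (hε : 0 < ε)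
    (hA : 0 ≤ A) (hq : 0 ≤ q) :
    let w := fun p => cutoff o δ r L p * U p
    let v := expConj (weight o γ μ L) w
    (ε ≤ time p → p ∈ energyBox o δ r L ε → δ ≤ crd o p → time p ≤ 2 * L → v p ^ 2 ≤
      carlemanBulk dir timeDir (weight o γ μ L) μ w p + A * (Real.exp (-(nsq p / 200)) * q)) →
    timeCutoff ε p * v p ^ 2 ≤
      timeCutoff ε p * carlemanBulk dir timeDir (weight o γ μ L) μ w p
        + dirDeriv timeDir (timeCutoff ε) p * (gradSq dir v p
          - carlemanPotential dir timeDir (weight o γ μ L) μ p * v p ^ 2)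
        + A * (energyWt o δ r L ε p ^ 2 * q)
        + 64 * μ ^ 2 * γ ^ 2 * (dirDeriv timeDir (timeCutoff ε) p * ((1 + nsq p) * v p ^ 2)) := by
  intro w v h
  have herror : 0 ≤ A * (energyWt o δ r L ε p ^ 2 * q) := by positivity
  rcases lt_or_ge (time p) ε with ht | ht
  · have hzero := timeCutoff_eventuallyEq_zero hε ht
    rw [dirDeriv_congr hzero, dirDeriv_const, hzero.eq_of_nhds]
    simpa using herror
  by_cases hp : δ ≤ crd o p ∧ nsq p ≤ 2 * r ^ 2 ∧ time p ≤ 2 * L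
  · obtain ⟨hl, hN, htL⟩ := hp
    have hr2 := sq_nonneg r
    have hest := h ht ⟨by linarith, by linarith, by linarith, by linarith⟩ hl htL
    rw [← sq_energyWt hδ hr hL0 hε hl (by linarith) ht htL] at hest
    have habs : 64 * μ * |L - time p| ≤ 1 :=
      (mul_le_mul_of_nonneg_left (abs_le.mpr ⟨by linarith, by linarith⟩) (by positivity)).trans hL
    have hζt := dirDeriv_timeDir_timeCutoff_nonneg hε.le p
    have hpotential := mul_le_mul_of_nonneg_left (mul_le_mul_of_nonneg_right
      (carlemanPotential_weight_le (o := o) hμ habs hγ) (sq_nonneg (v p))) hζt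
    linarith [mul_le_mul_of_nonneg_left hest (timeCutoff_nonneg ε p),
      mul_le_mul_of_nonneg_right (timeCutoff_le_one ε p) herror,
      mul_nonneg hζt (gradSq_nonneg dir v p)]
  · have hw0 := cutoff_mul_eventuallyEq_zero hδ hr hL0 U hp
    have hv0 : v =ᶠ[𝓝 p] fun _ => 0 := expConj_eventuallyEq_zero hw0
    rw [carlemanBulk_eq_zero hw0, gradSq_congr dir hv0, gradSq_const, hv0.eq_of_nhds]
    simpa using herror

theorem exists_integral_expConj_sq_le (o : Fin n) (hc : 0 ≤ c) (hμ : 1 + c ^ 2 ≤ μ) (hL0 : 0 < L)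
    (hL : 64 * μ * L ≤ 1) (hδ : 0 < δ) (M : ℝ) :
    ∃ C, 0 ≤ C ∧ ∀ γ r ε, 1 ≤ γ → 1 + 2 * μ ^ 2 + c ^ 2 ≤ γ * δ → 1 ≤ r → 400 * γ * L ≤ r →
      0 < ε → ∀ U : SpaceTime n → ℝ, ContDiff ℝ ∞ U → HasCompactSupport U →
      (∀ p ∈ energyBox o δ r L ε, |U p| ≤ M ∧ BackwardHeatBound dir timeDir c U p) →
      let v := expConj (weight o γ μ L) (fun q => cutoff o δ r L q * U q)
      ∫ p, timeCutoff ε p * v p ^ 2 ≤ C * γ ^ 2 * Real.exp (8 * γ * L * δ) +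
        64 * μ ^ 2 * γ ^ 2 * ∫ p, dirDeriv timeDir (timeCutoff ε) p * ((1 + nsq p) * v p ^ 2) := by
  obtain ⟨C, hC0, hC⟩ := exists_expConj_cutoff_mul_sq_le o hμ hL0 hL hδ
  obtain ⟨J, hJ0, hJ⟩ := exists_integral_energyWt_le o hc hδ hL0 M
  refine ⟨C * J, by positivity, fun γ r ε hγ hγδ hr hγr hε U hU hUc hP => ?_⟩
  intro v
  have hr0 : 0 < r := zero_lt_one.trans_le hr
  have hw : ContDiff ℝ ∞ fun q => cutoff o δ r L q * U q := by fun_prop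
  have hwc : HasCompactSupport fun q => cutoff o δ r L q * U q := hUc.mul_left
  have hv : ContDiff ℝ ∞ v := contDiff_expConj contDiff_weight hw
  have hvc : HasCompactSupport v := hasCompactSupport_expConj hwc
  obtain ⟨hI, hI0⟩ := carleman_inequality (ν := volume) hw hwc contDiff_weight
    (contDiff_timeCutoff ε) (timeCutoff_nonneg ε) (dirDeriv_dir_timeCutoff ε)
    (dirDeriv_dir_frameLap_quad contDiff_weightSlope contDiff_weightCurv) timeDir μ
    (φ := weight o γ μ L)
  have hinterior := integrable_energyWt_sq_mul (o := o) hδ hr0 hL0 hε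
    (f := fun p => gradSq dir U p + U p ^ 2) (ContDiff.continuous (n := ∞) (by fun_prop))
  have hinitial : Integrable fun p =>
      dirDeriv timeDir (timeCutoff ε) p * ((1 + nsq p) * v p ^ 2) :=
    integrable_of_eq_zero_of_eventuallyEq (ContDiff.continuous (n := ∞) (by fun_prop)) hvc
      fun p hp => by rw [hp.eq_of_nhds]; ring
  have hleft : Integrable fun p => timeCutoff ε p * v p ^ 2 :=
    integrable_of_eq_zero_of_eventuallyEq (ContDiff.continuous (n := ∞) (by fun_prop)) hvc
      fun p hp => by rw [hp.eq_of_nhds]; ring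
  have hmono := integral_mono hleft ((hI.add (hinterior.const_mul
    (C * γ ^ 2 * Real.exp (8 * γ * L * δ)))).add (hinitial.const_mul (64 * μ ^ 2 * γ ^ 2)))
    fun p => timeCutoff_mul_sq_expConj_le (q := gradSq dir U p + U p ^ 2)
      (by linarith [sq_nonneg c]) hL0 hL hγ hδ hr0 hε (by positivity)
      (add_nonneg (gradSq_nonneg _ _ _) (sq_nonneg _)) fun ht hbox hl htL =>
      hC γ r hγ hγδ hr hγr U hU p (hε.le.trans ht) htL hl (hP p hbox).2
  rw [integral_add' (hI.add (hinterior.const_mul _)) (hinitial.const_mul _),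
    integral_add' hI (hinterior.const_mul _), integral_const_mul, integral_const_mul] at hmono
  have := mul_le_mul_of_nonneg_left (hJ r ε hr hε U hU hP)
    (by positivity : 0 ≤ C * γ ^ 2 * Real.exp (8 * γ * L * δ))
  linarith

end TruncatedCarleman

end SpaceTime

section InitialLayer

theorem tendsto_inv_mul_setIntegral_Icc {g : ℝ → ℝ} (hg : Tendsto g (𝓝[>] 0) (𝓝 0)) :
    Tendsto (fun ε => ε⁻¹ * ∫ t in Icc ε (2 * ε), g t) (𝓝[>] 0) (𝓝 0) := by
  rw [Metric.tendsto_nhdsWithin_nhds] at hg ⊢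
  intro η hη
  obtain ⟨d, hd, hgd⟩ := hg (η / 2) (half_pos hη)
  refine ⟨d / 2, half_pos hd, fun {ε} hε hεd => ?_⟩
  rw [mem_Ioi] at hε
  rw [dist_zero_right, Real.norm_of_nonneg hε.le] at hεd
  have hsmall : ∀ t ∈ Icc ε (2 * ε), ‖g t‖ ≤ η / 2 := fun t ht => by
    have ht0 : 0 < t := hε.trans_le ht.1
    rw [← dist_zero_right]
    refine (hgd ht0 ?_).le
    rw [dist_zero_right, Real.norm_of_nonneg ht0.le]
    linarith [ht.2]
  have hint := norm_setIntegral_le_of_norm_le_const (μ := volume) measure_Icc_lt_top hsmall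
  rw [Real.volume_real_Icc_of_le (by linarith)] at hint
  rw [dist_zero_right, norm_mul, Real.norm_of_nonneg (inv_nonneg.mpr hε.le)]
  calc ε⁻¹ * ‖∫ t in Icc ε (2 * ε), g t‖ ≤ ε⁻¹ * (η / 2 * (2 * ε - ε)) := by gcongr
    _ = η / 2 := by field_simp; ring
    _ < η := half_lt_self hη

theorem tendsto_inv_mul_integral_prod_Icc {X : Type*} [MeasurableSpace X] {ν : Measure X}
    [IsFiniteMeasure ν] {F : X × ℝ → ℝ} {B : ℝ} (hF : Measurable F) (hFB : ∀ p, ‖F p‖ ≤ B)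
    (hF0 : ∀ x, Tendsto (fun t => F (x, t)) (𝓝[>] 0) (𝓝 0)) :
    Tendsto (fun ε => ε⁻¹ * ∫ p, F p ∂ν.prod (volume.restrict (Icc ε (2 * ε))))
      (𝓝[>] 0) (𝓝 0) := by
  have hiter (ε : ℝ) : ε⁻¹ * ∫ p, F p ∂ν.prod (volume.restrict (Icc ε (2 * ε)))
      = ∫ x, (ε⁻¹ * ∫ t in Icc ε (2 * ε), F (x, t)) ∂ν := by
    rw [integral_prod _ (.of_bound hF.aestronglyMeasurable B (ae_of_all _ hFB)),
      integral_const_mul]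
  simp only [hiter]
  rw [show 𝓝 (0 : ℝ) = 𝓝 (∫ _, 0 ∂ν) by rw [integral_zero]]
  refine tendsto_integral_filter_of_dominated_convergence (fun _ => B)
    (Eventually.of_forall fun ε => ?_) ?_ (integrable_const B)
    (ae_of_all _ fun x => tendsto_inv_mul_setIntegral_Icc (hF0 x))
  · exact (hF.stronglyMeasurable.integral_prod_right'.const_mul ε⁻¹).aestronglyMeasurable
  · filter_upwards [self_mem_nhdsWithin] with ε hε
    rw [mem_Ioi] at hε
    refine ae_of_all _ fun x => ?_
    have hint := norm_setIntegral_le_of_norm_le_const (μ := volume) (s := Icc ε (2 * ε))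
      measure_Icc_lt_top fun t _ => hFB (x, t)
    rw [Real.volume_real_Icc_of_le (by linarith)] at hint
    rw [norm_mul, Real.norm_of_nonneg (inv_nonneg.mpr hε.le)]
    calc ε⁻¹ * ‖∫ t in Icc ε (2 * ε), F (x, t)‖ ≤ ε⁻¹ * (B * (2 * ε - ε)) := by gcongr
      _ = B := by field_simp; ring

end InitialLayer

theorem exists_contDiff_eventuallyEq {X : Type*} [NormedAddCommGroup X] [NormedSpace ℝ X]
    [FiniteDimensional ℝ X] {K O : Set X} (hK : IsCompact K) (hO : IsOpen O) (hKO : K ⊆ O)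
    {f : X → ℝ} (hf : ContDiffOn ℝ ∞ f O) :
    ∃ U : X → ℝ, ContDiff ℝ ∞ U ∧ HasCompactSupport U ∧ ∀ p ∈ K, U =ᶠ[𝓝 p] f := by
  obtain ⟨K', hK', hKK', hK'O⟩ := exists_compact_between hK hO hKO
  obtain ⟨χ, hχ1, hχ0, -⟩ := exists_contMDiffMap_one_nhds_of_subset_interior (n := ⊤)
    (modelWithCornersSelf ℝ X) hK.isClosed hKK'
  refine ⟨fun p => χ p * f p, contDiff_iff_contDiffAt.mpr fun p => ?_,
    .intro hK' fun p hp => by rw [hχ0 p hp, zero_mul], fun p hp => ?_⟩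
  · by_cases hp : p ∈ O
    · exact χ.contMDiff.contDiff.contDiffAt.mul (hf.contDiffAt (hO.mem_nhds hp))
    · refine contDiffAt_const (c := 0) |>.congr_of_eventuallyEq ?_
      filter_upwards [hK'.isClosed.isOpen_compl.mem_nhds fun h => hp (hK'O h)] with q hq
      rw [hχ0 q hq, zero_mul]
  · filter_upwards [eventually_nhdsSet_iff_forall.mp hχ1 p hp] with q hq
    rw [hq, one_mul]

namespace SpaceTime

variable {n : ℕ} {o : Fin n} {c M T γ μ L δ ρ ε ε₀ r : ℝ} {f : SpaceTime n → ℝ} {p : SpaceTime n}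

section Vanishing

theorem dirDeriv_timeDir_timeCutoff_eq_zero (hε : 0 < ε) (h : time p ∉ Icc ε (2 * ε)) :
    dirDeriv timeDir (timeCutoff ε) p = 0 := by
  rw [dirDeriv_timeDir_timeCutoff, deriv_smoothTransition_of_notMem, zero_mul]
  contrapose! h
  rw [mem_Icc, sub_nonneg, le_div_iff₀ hε, sub_le_iff_le_add, div_le_iff₀ hε] at h
  exact ⟨by linarith [h.1], by linarith [h.2]⟩

theorem volume_setOf_norm_sq_le_lt_top (R : ℝ) :
    volume {x : EuclideanSpace ℝ (Fin n) | ‖x‖ ^ 2 ≤ R} < ⊤ :=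
  (measure_mono fun _ hx => mem_closedBall_zero_iff.mpr (Real.le_sqrt_of_sq_le hx)).trans_lt
    (measure_closedBall_lt_top (r := √R))

theorem tendsto_integral_dirDeriv_timeCutoff {F k : SpaceTime n → ℝ} {M R B : ℝ}
    (hF : Measurable F) (hFM : ∀ p, |F p| ≤ M)
    (hF0 : ∀ x, Tendsto (fun t => F (x, t)) (𝓝[>] 0) (𝓝 0))
    (hk : ∀ p, 0 ≤ time p → time p ≤ 1 → |k p| ≤ B) (hkR : ∀ p, R < nsq p → k p = 0) :
    Tendsto (fun ε => ∫ p, dirDeriv timeDir (timeCutoff ε) p * (k p * F p ^ 2))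
      (𝓝[>] 0) (𝓝 0) := by
  obtain ⟨A, hA⟩ := exists_abs_deriv_smoothTransition_le
  let D : Set (EuclideanSpace ℝ (Fin n)) := {x | ‖x‖ ^ 2 ≤ R}
  have hD : MeasurableSet D := measurableSet_le (by fun_prop) measurable_const
  have : IsFiniteMeasure (volume.restrict D) :=
    isFiniteMeasure_restrict.mpr (volume_setOf_norm_sq_le_lt_top R).ne
  have hFsq (p : SpaceTime n) : ‖F p ^ 2‖ ≤ M ^ 2 := by
    rw [Real.norm_of_nonneg (sq_nonneg _), ← sq_abs]
    exact pow_le_pow_left₀ (abs_nonneg _) (hFM p) 2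
  have hlim := (tendsto_inv_mul_integral_prod_Icc (ν := volume.restrict D) (hF.pow_const 2) hFsq
    fun x => by simpa using (hF0 x).pow 2).const_mul (A * B)
  rw [mul_zero] at hlim
  refine squeeze_zero_norm' ?_ hlim
  filter_upwards [Ioo_mem_nhdsGT (show (0 : ℝ) < 1 / 2 by norm_num)] with ε ⟨hε, hε1⟩
  have hS : MeasurableSet (D ×ˢ Icc ε (2 * ε)) := hD.prod measurableSet_Icc
  have hint : IntegrableOn (fun p => F p ^ 2) (D ×ˢ Icc ε (2 * ε)) := by
    rw [IntegrableOn, Measure.volume_eq_prod, ← Measure.prod_restrict]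
    exact .of_bound (hF.pow_const 2).aestronglyMeasurable (M ^ 2) (ae_of_all _ hFsq)
  rw [Measure.prod_restrict, ← Measure.volume_eq_prod, ← integral_indicator hS, ← mul_assoc,
    ← integral_const_mul]
  refine norm_integral_le_of_norm_le ((hint.integrable_indicator hS).const_mul _)
    (ae_of_all _ fun p => ?_)
  by_cases hp : p ∈ D ×ˢ Icc ε (2 * ε)
  · have hkB := hk p (hε.le.trans hp.2.1) (hp.2.2.trans (by linarith))
    have hσ := (hA (time p / ε - 1)).1
    rw [indicator_of_mem hp, norm_mul, norm_mul, Real.norm_of_nonneg (sq_nonneg (F p)),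
      dirDeriv_timeDir_timeCutoff, norm_mul, Real.norm_of_nonneg (inv_nonneg.mpr hε.le),
      Real.norm_eq_abs, Real.norm_eq_abs]
    have hA0 := (abs_nonneg _).trans hσ
    calc |deriv smoothTransition (time p / ε - 1)| * ε⁻¹ * (|k p| * F p ^ 2)
        ≤ A * ε⁻¹ * (B * F p ^ 2) := by gcongr
      _ = A * B * ε⁻¹ * F p ^ 2 := by ring
  · rw [indicator_of_notMem hp, mul_zero]
    refine (norm_eq_zero.mpr ?_).le
    by_cases ht : time p ∈ Icc ε (2 * ε)
    · rw [hkR p (not_le.mp fun h => hp ⟨(nsq_eq p).symm.trans_le h, ht⟩), zero_mul, mul_zero]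
    · rw [dirDeriv_timeDir_timeCutoff_eq_zero hε ht, zero_mul]

end Vanishing

end SpaceTime

theorem nonpos_of_eventually_exp_mul_le {A C a b : ℝ} (ha : 0 < a)
    (h : ∀ᶠ γ in atTop, Real.exp (2 * a * γ - b) * A ≤ C * γ ^ 2 * Real.exp (a * γ)) : A ≤ 0 := by
  have hlim := (tendsto_rpow_mul_exp_neg_mul_atTop_nhds_zero 2 a ha).const_mul (C * Real.exp b)
  rw [mul_zero] at hlim
  refine ge_of_tendsto hlim ?_
  filter_upwards [h] with γ hγ
  rw [Real.rpow_two]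
  calc A = Real.exp (-(2 * a * γ - b)) * (Real.exp (2 * a * γ - b) * A) := by
        rw [← mul_assoc, ← Real.exp_add, neg_add_cancel, Real.exp_zero, one_mul]
    _ ≤ Real.exp (-(2 * a * γ - b)) * (C * γ ^ 2 * Real.exp (a * γ)) := by gcongr
    _ = C * γ ^ 2 * (Real.exp (-(2 * a * γ - b)) * Real.exp (a * γ)) := by ring
    _ = C * γ ^ 2 * (Real.exp b * Real.exp (-a * γ)) := by
        rw [← Real.exp_add, ← Real.exp_add]
        ring_nf
    _ = C * Real.exp b * (γ ^ 2 * Real.exp (-a * γ)) := by ring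

namespace SpaceTime

variable {n : ℕ} {o : Fin n} {c M T γ μ L δ ρ ε ε₀ r : ℝ} {f : SpaceTime n → ℝ} {p : SpaceTime n}

section SlabSolution

/-- The part of the time slab `0 < t < T` over the half-space `0 < x_o`. -/
def slab (o : Fin n) (T : ℝ) : Set (SpaceTime n) :=
  {p | 0 < crd o p ∧ 0 < time p ∧ time p < T}

theorem isOpen_slab (o : Fin n) (T : ℝ) : IsOpen (slab o T) :=
  (isOpen_lt continuous_const (continuous_crd o)).inter <|
    (isOpen_lt continuous_const continuous_time).inter <|
    isOpen_lt continuous_time continuous_const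

/-- A bounded solution of the backward differential inequality over a half-space with vanishing
initial values; it is the time reversal of the solutions in `HasBU`. -/
structure IsSlabSol (o : Fin n) (c M T : ℝ) (f : SpaceTime n → ℝ) : Prop where
  smooth : ContDiffOn ℝ ∞ f (slab o T)
  abs_le : ∀ p ∈ slab o T, |f p| ≤ M
  heat : ∀ p ∈ slab o T, BackwardHeatBound dir timeDir c f p
  initial : ∀ x : EuclideanSpace ℝ (Fin n), 0 < x o →
    Tendsto (fun t => f (x, t)) (𝓝[>] 0) (𝓝 0)

/-- The region on which a single application of the Carleman inequality yields vanishing. -/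
def vanishBox (o : Fin n) (δ ρ ε₀ L : ℝ) : Set (SpaceTime n) :=
  {p | 16 * δ < crd o p ∧ nsq p < ρ ^ 2 ∧ ε₀ < time p ∧ time p < L / 2}

theorem isOpen_vanishBox (o : Fin n) (δ ρ ε₀ L : ℝ) : IsOpen (vanishBox o δ ρ ε₀ L) :=
  (isOpen_lt continuous_const (continuous_crd o)).inter <|
    (isOpen_lt continuous_nsq continuous_const).inter <|
    (isOpen_lt continuous_const continuous_time).inter <|
    isOpen_lt continuous_time continuous_const

theorem volume_vanishBox_lt_top (o : Fin n) (δ ρ ε₀ L : ℝ) :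
    volume (vanishBox o δ ρ ε₀ L) < ⊤ :=
  (isCompact_box o (16 * δ) (ρ ^ 2) ε₀ (L / 2)).measure_lt_top.trans_le' <|
    measure_mono fun _ hp => ⟨hp.1.le, hp.2.1.le, hp.2.2.1.le, hp.2.2.2.le⟩

theorem vanishBox_subset_slab (hδ : 0 < δ) (hε₀ : 0 < ε₀) (hL : 0 < L) (hLT : 4 * L < T) :
    vanishBox o δ ρ ε₀ L ⊆ slab o T := fun _ hp =>
  ⟨by linarith [hp.1], hε₀.trans hp.2.2.1, by linarith [hp.2.2.2]⟩

theorem energyBox_subset_slab (hδ : 0 < δ) (hε : 0 < ε) (hLT : 4 * L < T) :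
    energyBox o δ r L ε ⊆ slab o T := fun _ hp =>
  ⟨by linarith [hp.1], by linarith [hp.2.2.1], by linarith [hp.2.2.2]⟩

theorem le_two_mul_weight (hγ : 0 ≤ γ) (hμ : 0 ≤ μ) (hδ : 0 < δ) (hε₀ : 0 < ε₀) (hL : L ≤ 1)
    (hp : p ∈ vanishBox o δ ρ ε₀ L) :
    16 * γ * L * δ - ρ ^ 2 / 10 ≤ 2 * weight o γ μ L p := by
  obtain ⟨hx, hN, ht, htL⟩ := hp
  have hL0 : 0 < L := by linarith
  have hslope : γ * (L / 2) ≤ weightSlope γ μ L (time p) := by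
    rw [weightSlope]
    have : 0 ≤ 16 * μ * (L - time p) ^ 2 := by positivity
    gcongr
    linarith
  have hlinear : γ * (L / 2) * (16 * δ) ≤ weightSlope γ μ L (time p) * crd o p :=
    mul_le_mul hslope hx.le (by positivity) (hslope.trans' (by positivity))
  have hcurv : -weightCurv L (time p) * nsq p ≤ 3 / 100 * ρ ^ 2 := by
    have : -weightCurv L (time p) ≤ 3 / 100 := by rw [weightCurv]; linarith
    have := nsq_nonneg p
    gcongr
  rw [weight, quad]
  linarith [sq_nonneg ρ]

theorem IsSlabSol.measurable_indicator (hf : IsSlabSol o c M T f) :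
    Measurable ((slab o T).indicator f) := by
  classical
  rw [← piecewise_eq_indicator]
  exact hf.smooth.continuousOn.measurable_piecewise continuousOn_const
    (isOpen_slab o T).measurableSet

theorem IsSlabSol.abs_indicator_le (hf : IsSlabSol o c M T f) (p : SpaceTime n) :
    |(slab o T).indicator f p| ≤ |M| := by
  by_cases hp : p ∈ slab o T
  · rw [indicator_of_mem hp]
    exact (hf.abs_le p hp).trans (le_abs_self M)
  · rw [indicator_of_notMem hp, abs_zero]
    exact abs_nonneg M

theorem IsSlabSol.tendsto_indicator (hf : IsSlabSol o c M T f) (hT : 0 < T)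
    (x : EuclideanSpace ℝ (Fin n)) :
    Tendsto (fun t => (slab o T).indicator f (x, t)) (𝓝[>] 0) (𝓝 0) := by
  by_cases hx : 0 < x o
  · refine (hf.initial x hx).congr' ?_
    filter_upwards [Ioo_mem_nhdsGT hT] with t ht
    rw [indicator_of_mem (show (x, t) ∈ slab o T from ⟨hx, ht.1, ht.2⟩)]
  · refine tendsto_const_nhds.congr fun t => ?_
    rw [indicator_of_notMem fun h => hx h.1]

theorem IsSlabSol.tendsto_integral_initialTerm (hf : IsSlabSol o c M T f) (hT : 0 < T) (hδ : 0 < δ)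
    (hr : 0 < r) (hL : 0 < L) (γ μ : ℝ) :
    let v := expConj (weight o γ μ L) (fun q => cutoff o δ r L q * (slab o T).indicator f q)
    Tendsto (fun ε => ∫ p, dirDeriv timeDir (timeCutoff ε) p * ((1 + nsq p) * v p ^ 2))
      (𝓝[>] 0) (𝓝 0) := by
  intro v
  obtain ⟨k, hk⟩ : ∃ k : SpaceTime n → ℝ,
    k = fun p => (1 + nsq p) * (Real.exp (weight o γ μ L p) * cutoff o δ r L p) ^ 2 := ⟨_, rfl⟩
  have hkc : Continuous k := by
    have := (contDiff_weight (o := o) (γ := γ) (μ := μ) (L := L)).continuous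
    have := (contDiff_cutoff o δ r L).continuous
    rw [hk]
    fun_prop
  have hk0 : ∀ p, ¬(δ ≤ crd o p ∧ nsq p ≤ 2 * r ^ 2) → k p = 0 := fun p hp => by
    rw [not_and_or, not_le, not_le] at hp
    simp only [hk]
    rw [cutoff_eq_zero hδ hr hL (hp.imp le_of_lt fun h => .inl h.le)]
    ring
  obtain ⟨B, hB⟩ := (isCompact_box o δ (2 * r ^ 2) 0 1).exists_bound_of_continuousOn
    hkc.continuousOn
  refine (tendsto_integral_dirDeriv_timeCutoff (k := k) (B := max B 0) (R := 2 * r ^ 2)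
    hf.measurable_indicator hf.abs_indicator_le (hf.tendsto_indicator hT) (fun p h0 h1 => ?_)
    fun p hp => hk0 p fun h => hp.not_ge h.2).congr fun ε => ?_
  · by_cases hp : δ ≤ crd o p ∧ nsq p ≤ 2 * r ^ 2
    · exact (hB p ⟨hp.1, hp.2, h0, h1⟩).trans (le_max_left B 0)
    · rw [hk0 p hp, abs_zero]
      exact le_max_right B 0
  · refine integral_congr_ae (ae_of_all _ fun p => ?_)
    simp only [v, expConj, hk]
    ring

theorem IsSlabSol.exists_integral_expConj_sq_le (hf : IsSlabSol o c M T f) (hc : 0 ≤ c)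
    (hμ : 1 + c ^ 2 ≤ μ) (hL0 : 0 < L) (hL : 64 * μ * L ≤ 1) (hLT : 4 * L < T) (hδ : 0 < δ) :
    ∃ C, ∀ γ r ε, 1 ≤ γ → 1 + 2 * μ ^ 2 + c ^ 2 ≤ γ * δ → 1 ≤ r → 400 * γ * L ≤ r → 0 < ε →
      let v := expConj (weight o γ μ L) (fun q => cutoff o δ r L q * (slab o T).indicator f q)
      (Integrable fun p => timeCutoff ε p * v p ^ 2) ∧
      ∫ p, timeCutoff ε p * v p ^ 2 ≤ C * γ ^ 2 * Real.exp (8 * γ * L * δ) +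
        64 * μ ^ 2 * γ ^ 2 * ∫ p, dirDeriv timeDir (timeCutoff ε) p * ((1 + nsq p) * v p ^ 2) := by
  obtain ⟨C, -, hC⟩ := SpaceTime.exists_integral_expConj_sq_le o hc hμ hL0 hL hδ M
  refine ⟨C, fun γ r ε hγ hγδ hr hγr hε => ?_⟩
  intro v
  have hr0 : 0 < r := zero_lt_one.trans_le hr
  have hsub := energyBox_subset_slab (o := o) (r := r) hδ hε hLT
  obtain ⟨U, hU, hUc, hUf⟩ := exists_contDiff_eventuallyEq (isCompact_box o _ _ _ _)
    (isOpen_slab o T) hsub hf.smooth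
  have hest := hC γ r ε hγ hγδ hr hγr hε U hU hUc fun p hp =>
    ⟨by rw [(hUf p hp).eq_of_nhds]; exact hf.abs_le p (hsub hp),
      (hf.heat p (hsub hp)).congr (hUf p hp)⟩
  obtain ⟨v', hv'⟩ : ∃ v', v' = expConj (weight o γ μ L) (fun q => cutoff o δ r L q * U q) :=
    ⟨_, rfl⟩
  have hvv' : ∀ p, ε ≤ time p → v' p = v p := fun p ht => by
    simp only [hv', v, expConj]
    by_cases hp : crd o p ≤ δ ∨ 2 * r ^ 2 ≤ nsq p ∨ 2 * L ≤ time p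
    · rw [cutoff_eq_zero hδ hr0 hL0 hp]
      ring
    · simp only [not_or, not_le] at hp
      have hbox : p ∈ energyBox o δ r L ε :=
        ⟨by linarith [hp.1], by linarith [hp.2.1, sq_nonneg r], by linarith, by linarith [hp.2.2]⟩
      rw [indicator_of_mem (hsub hbox), (hUf p hbox).eq_of_nhds]
  have hleft (p : SpaceTime n) : timeCutoff ε p * v' p ^ 2 = timeCutoff ε p * v p ^ 2 := by
    rcases lt_or_ge (time p) ε with ht | ht
    · rw [timeCutoff_eq_zero hε ht.le, zero_mul, zero_mul]
    · rw [hvv' p ht]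
  have hinitial (p : SpaceTime n) : dirDeriv timeDir (timeCutoff ε) p * ((1 + nsq p) * v' p ^ 2)
      = dirDeriv timeDir (timeCutoff ε) p * ((1 + nsq p) * v p ^ 2) := by
    rcases lt_or_ge (time p) ε with ht | ht
    · rw [dirDeriv_timeDir_timeCutoff_eq_zero hε fun h => ht.not_ge h.1, zero_mul, zero_mul]
    · rw [hvv' p ht]
  have hint : Integrable fun p => timeCutoff ε p * v' p ^ 2 := by
    have hvc : HasCompactSupport v' := hv' ▸ hasCompactSupport_expConj hUc.mul_left
    have hvs : ContDiff ℝ ∞ v' := hv' ▸ contDiff_expConj contDiff_weight (by fun_prop)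
    exact integrable_of_eq_zero_of_eventuallyEq (ContDiff.continuous (n := ∞) (by fun_prop)) hvc
      fun p hp => by rw [hp.eq_of_nhds]; ring
  simp only [← hv', hleft, hinitial] at hest hint
  exact ⟨hint, hest⟩

theorem IsSlabSol.integrableOn_sq (hf : IsSlabSol o c M T f) (hδ : 0 < δ) (hε₀ : 0 < ε₀)
    (hL : 0 < L) (hLT : 4 * L < T) :
    IntegrableOn (fun p => f p ^ 2) (vanishBox o δ ρ ε₀ L) := by
  have hsub := vanishBox_subset_slab (o := o) (ρ := ρ) hδ hε₀ hL hLT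
  have hmeas := (isOpen_vanishBox o δ ρ ε₀ L).measurableSet
  refine .of_bound (volume_vanishBox_lt_top ..)
    (((hf.smooth.continuousOn.mono hsub).pow 2).aestronglyMeasurable hmeas) (M ^ 2) ?_
  filter_upwards [ae_restrict_mem hmeas] with p hp
  rw [Real.norm_of_nonneg (sq_nonneg _), ← sq_abs]
  exact pow_le_pow_left₀ (abs_nonneg _) (hf.abs_le p (hsub hp)) 2

theorem IsSlabSol.integral_vanishBox_le_integral_expConj (hf : IsSlabSol o c M T f) (hγ : 0 ≤ γ)
    (hμ : 0 ≤ μ) (hL0 : 0 < L) (hL1 : L ≤ 1) (hLT : 4 * L < T) (hδ : 0 < δ) (hr : 0 < r)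
    (hρ : |ρ| ≤ r) (hε : 0 < ε) (hεε₀ : 2 * ε ≤ ε₀) :
    let v := expConj (weight o γ μ L) (fun q => cutoff o δ r L q * (slab o T).indicator f q)
    (Integrable fun p => timeCutoff ε p * v p ^ 2) →
    Real.exp (16 * γ * L * δ - ρ ^ 2 / 10) * ∫ p in vanishBox o δ ρ ε₀ L, f p ^ 2
      ≤ ∫ p, timeCutoff ε p * v p ^ 2 := by
  intro v hv
  have hε₀ : 0 < ε₀ := by linarith
  have hmeas := (isOpen_vanishBox o δ ρ ε₀ L).measurableSet
  rw [← integral_const_mul]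
  refine (setIntegral_mono_on ((hf.integrableOn_sq hδ hε₀ hL0 hLT).const_mul _) hv.integrableOn
    hmeas fun p hp => ?_).trans (setIntegral_le_integral hv (ae_of_all _ fun p =>
    mul_nonneg (timeCutoff_nonneg ε p) (sq_nonneg _)))
  have hN : nsq p ≤ r ^ 2 :=
    hp.2.1.le.trans (sq_abs ρ ▸ pow_le_pow_left₀ (abs_nonneg ρ) hρ 2)
  simp only [v, expConj]
  rw [timeCutoff_eq_one hε (hεε₀.trans hp.2.2.1.le), indicator_of_mem
    (vanishBox_subset_slab hδ hε₀ hL0 hLT hp), cutoff_eq_one hδ hr hL0 (by linarith [hp.1]) hN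
    (by linarith [hp.2.2.2]), one_mul, one_mul, mul_pow, ← Real.exp_nat_mul]
  gcongr
  exact le_two_mul_weight hγ hμ hδ hε₀ hL1 hp

theorem IsSlabSol.exists_integral_vanishBox_le (hf : IsSlabSol o c M T f) (hc : 0 ≤ c)
    (hμ : 1 + c ^ 2 ≤ μ) (hL0 : 0 < L) (hL : 64 * μ * L ≤ 1) (hLT : 4 * L < T) (hδ : 0 < δ)
    (hε₀ : 0 < ε₀) (ρ : ℝ) :
    ∃ C, ∀ γ, 1 ≤ γ → 1 + 2 * μ ^ 2 + c ^ 2 ≤ γ * δ →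
      Real.exp (16 * γ * L * δ - ρ ^ 2 / 10) * ∫ p in vanishBox o δ ρ ε₀ L, f p ^ 2
        ≤ C * γ ^ 2 * Real.exp (8 * γ * L * δ) := by
  obtain ⟨C, hC⟩ := hf.exists_integral_expConj_sq_le hc hμ hL0 hL hLT hδ
  refine ⟨C, fun γ hγ hγδ => ?_⟩
  have hμ1 : 1 ≤ μ := by linarith [sq_nonneg c]
  have hL1 : L ≤ 1 := by nlinarith
  obtain ⟨r, hr1, hrγ, hrρ⟩ : ∃ r, 1 ≤ r ∧ 400 * γ * L ≤ r ∧ |ρ| ≤ r :=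
    ⟨max 1 (max (400 * γ * L) |ρ|), le_max_left _ _, (le_max_left _ _).trans (le_max_right _ _),
      (le_max_right _ _).trans (le_max_right _ _)⟩
  have hr0 : 0 < r := zero_lt_one.trans_le hr1
  have hlim := ((hf.tendsto_integral_initialTerm (by linarith) hδ hr0 hL0 γ μ).const_mul
    (64 * μ ^ 2 * γ ^ 2)).const_add (C * γ ^ 2 * Real.exp (8 * γ * L * δ))
  rw [mul_zero, add_zero] at hlim
  refine ge_of_tendsto hlim ?_
  filter_upwards [Ioo_mem_nhdsGT (half_pos hε₀)] with ε ⟨hε, hεε₀⟩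
  obtain ⟨hint, hle⟩ := hC γ r ε hγ hγδ hr1 hrγ hε
  exact (hf.integral_vanishBox_le_integral_expConj (by linarith) (by linarith) hL0 hL1 hLT hδ hr0
    hrρ hε (by linarith) hint).trans hle

theorem IsSlabSol.eq_zero_of_mem_vanishBox (hf : IsSlabSol o c M T f) (hc : 0 ≤ c)
    (hμ : 1 + c ^ 2 ≤ μ) (hL0 : 0 < L) (hL : 64 * μ * L ≤ 1) (hLT : 4 * L < T) (hδ : 0 < δ)
    (hε₀ : 0 < ε₀) (hp : p ∈ vanishBox o δ ρ ε₀ L) : f p = 0 := by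
  obtain ⟨C, hC⟩ := hf.exists_integral_vanishBox_le hc hμ hL0 hL hLT hδ hε₀ ρ
  have hcont : ContinuousOn (fun p => f p ^ 2) (vanishBox o δ ρ ε₀ L) :=
    (hf.smooth.continuousOn.mono (vanishBox_subset_slab hδ hε₀ hL0 hLT)).pow 2
  have hnonpos : ∫ p in vanishBox o δ ρ ε₀ L, f p ^ 2 ≤ 0 := by
    refine nonpos_of_eventually_exp_mul_le (C := C) (b := ρ ^ 2 / 10)
      (by positivity : 0 < 8 * L * δ) ?_
    filter_upwards [eventually_ge_atTop 1,
      eventually_ge_atTop ((1 + 2 * μ ^ 2 + c ^ 2) / δ)] with γ hγ hγδ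
    have := hC γ hγ ((div_le_iff₀ hδ).mp hγδ)
    rwa [show 2 * (8 * L * δ) * γ = 16 * γ * L * δ by ring,
      show 8 * L * δ * γ = 8 * γ * L * δ by ring]
  have hzero := (integral_eq_zero_iff_of_nonneg (fun _ => sq_nonneg _)
    (hf.integrableOn_sq hδ hε₀ hL0 hLT)).mp
    (hnonpos.antisymm (integral_nonneg fun _ => sq_nonneg _))
  exact pow_eq_zero_iff two_ne_zero |>.mp
    (Measure.eqOn_open_of_ae_eq hzero (isOpen_vanishBox ..) hcont continuousOn_const hp)

theorem IsSlabSol.eq_zero_of_time_lt (hf : IsSlabSol o c M T f) (hc : 0 ≤ c) (hL0 : 0 < L)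
    (hL : 64 * (1 + c ^ 2) * L ≤ 1) (hLT : 4 * L < T) (hp : 0 < crd o p) (ht : 0 < time p)
    (htL : time p < L / 2) : f p = 0 :=
  hf.eq_zero_of_mem_vanishBox hc le_rfl hL0 hL hLT (δ := crd o p / 32) (by positivity)
    (ε₀ := time p / 2) (by positivity) (ρ := nsq p + 1)
    ⟨by linarith, by nlinarith [nsq_nonneg p], by linarith, htL⟩

theorem IsSlabSol.shift (hf : IsSlabSol o c M T f) {s : ℝ} (hs : 0 ≤ s)
    (hinit : ∀ x : EuclideanSpace ℝ (Fin n), 0 < x o →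
      Tendsto (fun t => f (x, t)) (𝓝[>] s) (𝓝 0)) :
    IsSlabSol o c M (T - s) (fun p => f (p + (0, s))) := by
  have hmem : ∀ p ∈ slab o (T - s), p + (0, s) ∈ slab o T := by
    rintro p ⟨hx, ht, htT⟩
    simp only [slab, crd, time, mem_ofPred_eq, Prod.fst_add, Prod.snd_add, add_zero] at hx ht htT ⊢
    exact ⟨hx, by linarith, by linarith⟩
  refine ⟨hf.smooth.comp (contDiff_id.add contDiff_const).contDiffOn hmem,
    fun p hp => hf.abs_le _ (hmem p hp), fun p hp => ?_, fun x hx => ?_⟩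
  · simpa only [BackwardHeatBound, backwardHeat, frameLap, gradSq, dirDeriv_comp_add_right]
      using hf.heat _ (hmem p hp)
  · have hshift : Tendsto (fun t : ℝ => t + s) (𝓝[>] 0) (𝓝[>] s) := by
      refine tendsto_nhdsWithin_iff.mpr ⟨((continuous_add_const s).tendsto' 0 s
        (zero_add s)).mono_left nhdsWithin_le_nhds, ?_⟩
      filter_upwards [self_mem_nhdsWithin] with t ht using lt_add_of_pos_left s ht
    refine ((hinit x hx).comp hshift).congr fun t => ?_
    simp only [Function.comp_apply, Prod.mk_add_mk, add_zero]

theorem IsSlabSol.tendsto_nhdsGT (hf : IsSlabSol o c M T f) {s : ℝ} (hs : 0 ≤ s) (hsT : s < T)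
    (hzero : ∀ x : EuclideanSpace ℝ (Fin n), 0 < x o → 0 < s → f (x, s) = 0)
    (x : EuclideanSpace ℝ (Fin n)) (hx : 0 < x o) :
    Tendsto (fun t => f (x, t)) (𝓝[>] s) (𝓝 0) := by
  rcases hs.eq_or_lt with rfl | hs0
  · exact hf.initial x hx
  · have hcont : ContinuousAt f (x, s) :=
      hf.smooth.continuousOn.continuousAt ((isOpen_slab o T).mem_nhds ⟨hx, hs0, hsT⟩)
    have hslice : ContinuousAt (fun t => f (x, t)) s :=
      ContinuousAt.comp (f := fun t : ℝ => (x, t)) hcont (by fun_prop)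
    rw [← hzero x hx hs0]
    exact hslice.tendsto.mono_left nhdsWithin_le_nhds

theorem IsSlabSol.eq_zero_of_time_le (hf : IsSlabSol o c M T f) {t₁ : ℝ} (hc : 0 ≤ c) (hL0 : 0 < L)
    (hL : 64 * (1 + c ^ 2) * L ≤ 1) (hLT : 4 * L < T - t₁) (k : ℕ) (hp : 0 < crd o p)
    (ht : 0 < time p) (htk : time p ≤ k * (L / 4)) (htt : time p ≤ t₁) : f p = 0 := by
  induction k generalizing p with
  | zero =>
    rw [Nat.cast_zero, zero_mul] at htk
    exact absurd ht htk.not_gt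
  | succ k ih =>
    obtain ⟨s, hs⟩ : ∃ s, s = k * (L / 4) := ⟨_, rfl⟩
    rw [← hs] at ih
    rcases le_or_gt (time p) s with h | h
    · exact ih hp ht h htt
    have hs0 : 0 ≤ s := hs ▸ by positivity
    have hinit := hf.tendsto_nhdsGT hs0 (by linarith)
      fun x hx hs' => ih (p := (x, s)) hx hs' le_rfl (h.le.trans htt)
    have := (hf.shift hs0 hinit).eq_zero_of_time_lt hc hL0 hL (by linarith)
      (p := p - (0, s)) (by simpa [crd] using hp) (by simpa [time] using h) (by
        push_cast at htk
        change time p - s < L / 2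
        linarith)
    rwa [sub_add_cancel] at this

theorem IsSlabSol.eq_zero (hf : IsSlabSol o c M T f) (hc : 0 ≤ c) (hp : p ∈ slab o T) :
    f p = 0 := by
  obtain ⟨hx, ht, htT⟩ := hp
  obtain ⟨L, hL0, hL, hLT⟩ : ∃ L, 0 < L ∧ L ≤ 1 / (64 * (1 + c ^ 2)) ∧ L ≤ (T - time p) / 8 :=
    ⟨min (1 / (64 * (1 + c ^ 2))) ((T - time p) / 8), lt_min (by positivity) (by linarith),
      min_le_left _ _, min_le_right _ _⟩
  obtain ⟨k, hk⟩ := exists_nat_ge (time p / (L / 4))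
  rw [le_div_iff₀ (by positivity)] at hL
  exact hf.eq_zero_of_time_le hc hL0 (by linarith) (by linarith) k hx ht
    ((div_le_iff₀ (by positivity)).mp hk) le_rfl

end SlabSolution

end SpaceTime

theorem norm_gradient_eq_sqrt {n : ℕ} (h : EuclideanSpace ℝ (Fin n) → ℝ)
    (x : EuclideanSpace ℝ (Fin n)) :
    ‖gradient h x‖ = √(∑ i, fderiv ℝ h x (EuclideanSpace.single i 1) ^ 2) := by
  have hcoord (i : Fin n) : gradient h x i = fderiv ℝ h x (EuclideanSpace.single i 1) := by
    rw [← InnerProductSpace.toDual_symm_apply, ← gradient, EuclideanSpace.inner_single_right]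
    simp
  rw [EuclideanSpace.norm_eq]
  simp only [hcoord, Real.norm_eq_abs, sq_abs]

namespace SpaceTime

variable {n : ℕ}

section Slices

variable {g : SpaceTime n → ℝ} {x : EuclideanSpace ℝ (Fin n)} {t : ℝ}

theorem fderiv_slice (hg : DifferentiableAt ℝ g (x, t)) (i : Fin n) :
    fderiv ℝ (fun y => g (y, t)) x (EuclideanSpace.single i 1) = dirDeriv (dir i) g (x, t) := by
  have hslice : HasFDerivAt (fun y => g (y, t)) _ x :=
    hg.hasFDerivAt.comp x (hasFDerivAt_prodMk_left x t)
  rw [hslice.fderiv]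
  rfl

theorem deriv_slice (hg : DifferentiableAt ℝ g (x, t)) :
    deriv (fun s => g (x, s)) t = dirDeriv timeDir g (x, t) := by
  have hslice : HasFDerivAt (fun s => g (x, s)) _ t :=
    hg.hasFDerivAt.comp t (hasFDerivAt_prodMk_right x t)
  rw [hslice.hasDerivAt.deriv]
  rfl

theorem norm_gradient_slice (hg : DifferentiableAt ℝ g (x, t)) :
    ‖gradient (fun y => g (y, t)) x‖ = √(gradSq dir g (x, t)) := by
  simp only [norm_gradient_eq_sqrt, gradSq, fderiv_slice hg]

theorem lap_slice (hg : ContDiffAt ℝ ∞ g (x, t)) :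
    lap (fun y => g (y, t)) x = frameLap dir g (x, t) := by
  have hdiff : ∀ᶠ q in 𝓝 (x, t), DifferentiableAt ℝ g q :=
    ((hg.of_le (m := 1) (by simp)).eventually (by simp)).mono
      fun q hq => hq.differentiableAt one_ne_zero
  have hslice : Tendsto (fun y : EuclideanSpace ℝ (Fin n) => (y, t)) (𝓝 x) (𝓝 (x, t)) :=
    Continuous.tendsto (by fun_prop) x
  rw [lap, frameLap]
  refine Finset.sum_congr rfl fun i _ => ?_
  have hfst : DifferentiableAt ℝ (dirDeriv (dir i) g) (x, t) :=
    ((hg.fderiv_right (m := ∞) le_rfl).clm_apply contDiffAt_const).differentiableAt (by simp)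
  rw [← fderiv_slice hfst]
  congr 1
  refine Filter.EventuallyEq.fderiv_eq ?_
  filter_upwards [hslice.eventually hdiff] with y hy using fderiv_slice hy i

end Slices

section TimeReflection

/-- The reversal of time on `[0, T]`, turning a terminal condition into an initial one. -/
def timeReflection (T : ℝ) (p : SpaceTime n) : SpaceTime n := (p.1, T - p.2)

theorem contDiff_timeReflection (T : ℝ) : ContDiff ℝ ∞ (timeReflection (n := n) T) :=
  contDiff_fst.prodMk (contDiff_const.sub contDiff_snd)

theorem timeReflection_mem_slab {o : Fin n} {T : ℝ} {p : SpaceTime n} (hp : p ∈ slab o T) :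
    timeReflection T p ∈ slab o T :=
  ⟨hp.1, sub_pos.mpr hp.2.2, sub_lt_self T hp.2.1⟩

variable (g : SpaceTime n → ℝ) (T : ℝ)

theorem dirDeriv_comp_timeReflection (v : SpaceTime n) :
    dirDeriv v (fun p => g (timeReflection T p)) =
      fun p => dirDeriv (v.1, -v.2) g (timeReflection T p) := by
  let A : SpaceTime n ≃L[ℝ] SpaceTime n :=
    (ContinuousLinearEquiv.refl ℝ _).prodCongr (ContinuousLinearEquiv.neg ℝ)
  have hA (p : SpaceTime n) : timeReflection T p = A p + (0, T) := by
    ext <;> simp [A, timeReflection, sub_eq_neg_add]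
  simp only [hA, dirDeriv_comp_equiv A fun q => g (q + (0, T)), dirDeriv_comp_add_right]
  rfl

theorem dirDeriv_dir_comp_timeReflection (i : Fin n) :
    dirDeriv (dir i) (fun p => g (timeReflection T p)) =
      fun p => dirDeriv (dir i) g (timeReflection T p) := by
  simp only [dirDeriv_comp_timeReflection, dir, neg_zero]

theorem dirDeriv_timeDir_comp_timeReflection (p : SpaceTime n) :
    dirDeriv timeDir (fun p => g (timeReflection T p)) p =
      -dirDeriv timeDir g (timeReflection T p) := by
  rw [← dirDeriv_neg_left, dirDeriv_comp_timeReflection]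
  simp [timeDir]

theorem backwardHeatBound_comp_timeReflection {c : ℝ} {p q : SpaceTime n}
    (hq : timeReflection T p = q)
    (h : |dirDeriv timeDir g q - frameLap dir g q| ≤ c * (√(gradSq dir g q) + |g q|)) :
    BackwardHeatBound dir timeDir c (fun p => g (timeReflection T p)) p := by
  subst hq
  rw [abs_sub_comm, ← neg_add_eq_sub] at h
  simpa only [BackwardHeatBound, backwardHeat, frameLap, gradSq,
    dirDeriv_dir_comp_timeReflection, dirDeriv_timeDir_comp_timeReflection] using h

end TimeReflection

theorem hasBU_halfSpace (o : Fin n) : HasBU n {x | 0 < x o} := by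
  rintro T - c hc u hu ⟨M, hM⟩ hheat hlim x hx t ht
  set g : SpaceTime n → ℝ := fun p => u p.1 p.2
  have hsmooth : ContDiffOn ℝ ∞ g (slab o T) := hu
  have hsol : IsSlabSol o c M T (fun p => g (timeReflection T p)) := by
    refine ⟨hsmooth.comp (contDiff_timeReflection T).contDiffOn fun p => timeReflection_mem_slab,
      fun p hp => ?_, fun p hp => ?_, fun x hx => ?_⟩
    · have hq := timeReflection_mem_slab hp
      exact hM _ hq.1 _ hq.2
    · obtain ⟨⟨y, s⟩, hpq⟩ : ∃ q, timeReflection T p = q := ⟨_, rfl⟩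
      have hq : (y, s) ∈ slab o T := hpq ▸ timeReflection_mem_slab hp
      have hg := hsmooth.contDiffAt ((isOpen_slab o T).mem_nhds hq)
      have hg' := hg.differentiableAt (by simp)
      refine backwardHeatBound_comp_timeReflection g T hpq ?_
      rw [← deriv_slice hg', ← lap_slice hg, ← norm_gradient_slice hg']
      exact hheat _ hq.1 _ hq.2
    · have hrev : Tendsto (fun t : ℝ => T - t) (𝓝[>] 0) (𝓝[<] T) := by
        refine tendsto_nhdsWithin_iff.mpr ⟨((continuous_const.sub continuous_id).tendsto' 0 T
          (sub_zero T)).mono_left nhdsWithin_le_nhds, ?_⟩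
        filter_upwards [self_mem_nhdsWithin] with t ht using sub_lt_self T ht
      exact (hlim x hx).comp hrev
  have h := hsol.eq_zero hc (timeReflection_mem_slab (p := (x, t)) ⟨hx, ht⟩)
  simpa [timeReflection, g] using h

end SpaceTime

section Isometry

theorem frameLap_comp_equiv {X Y ι : Type*} [NormedAddCommGroup X] [NormedSpace ℝ X]
    [NormedAddCommGroup Y] [NormedSpace ℝ Y] [Fintype ι] (A : X ≃L[ℝ] Y) (e : ι → X) (f : Y → ℝ)
    (x : X) : frameLap e (fun y => f (A y)) x = frameLap (fun i => A (e i)) f (A x) := by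
  simp only [frameLap, dirDeriv_comp_equiv]

theorem frameLap_orthonormalBasis {E ι : Type*} [NormedAddCommGroup E] [InnerProductSpace ℝ E]
    [FiniteDimensional ℝ E] [Fintype ι] (b : OrthonormalBasis ι ℝ E) {f : E → ℝ} {x : E}
    (hf : DifferentiableAt ℝ (fderiv ℝ f) x) :
    frameLap b f x = Laplacian.laplacian f x := by
  rw [InnerProductSpace.laplacian_eq_iteratedFDeriv_orthonormalBasis f b]
  refine Finset.sum_congr rfl fun i _ => ?_
  unfold dirDeriv
  simp [iteratedFDeriv_two_apply, fderiv_clm_apply hf (differentiableAt_const _)]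

variable {n : ℕ}

theorem lap_eq_frameLap (f : EuclideanSpace ℝ (Fin n) → ℝ) (x : EuclideanSpace ℝ (Fin n)) :
    lap f x = frameLap (fun i => EuclideanSpace.single i 1) f x :=
  rfl

theorem lap_comp_isometry (A : EuclideanSpace ℝ (Fin n) ≃ₗᵢ[ℝ] EuclideanSpace ℝ (Fin n))
    {f : EuclideanSpace ℝ (Fin n) → ℝ} {x : EuclideanSpace ℝ (Fin n)}
    (hf : DifferentiableAt ℝ (fderiv ℝ f) (A x)) :
    lap (fun y => f (A y)) x = lap f (A x) := by
  have hbasis : ⇑(EuclideanSpace.basisFun (Fin n) ℝ) = fun i => EuclideanSpace.single i 1 :=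
    funext (EuclideanSpace.basisFun_apply _ ℝ)
  rw [lap_eq_frameLap, lap_eq_frameLap, ← hbasis, frameLap_orthonormalBasis _ hf,
    ← frameLap_orthonormalBasis ((EuclideanSpace.basisFun (Fin n) ℝ).map A) hf]
  exact frameLap_comp_equiv A.toContinuousLinearEquiv _ f x

theorem norm_gradient_comp_isometry {E F : Type*} [NormedAddCommGroup E] [InnerProductSpace ℝ E]
    [CompleteSpace E] [NormedAddCommGroup F] [InnerProductSpace ℝ F] [CompleteSpace F]
    (A : E ≃ₗᵢ[ℝ] F) (f : F → ℝ) (x : E) :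
    ‖gradient (fun y => f (A y)) x‖ = ‖gradient f (A x)‖ := by
  rw [gradient, gradient, LinearIsometryEquiv.norm_map, LinearIsometryEquiv.norm_map,
    show (fun y => f (A y)) = f ∘ A.toContinuousLinearEquiv from rfl,
    ContinuousLinearEquiv.comp_right_fderiv]
  exact ContinuousLinearMap.opNorm_comp_linearIsometryEquiv _ A

theorem hasBU_of_isometry {Ω Ω' : Set (EuclideanSpace ℝ (Fin n))} (h : HasBU n Ω)
    (hΩ' : IsOpen Ω')
    (hcov : ∀ x ∈ Ω', ∃ A : EuclideanSpace ℝ (Fin n) ≃ₗᵢ[ℝ] EuclideanSpace ℝ (Fin n),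
      A.symm x ∈ Ω ∧ ∀ y ∈ Ω, A y ∈ Ω') : HasBU n Ω' := by
  intro T hT c hc u hu ⟨M, hM⟩ hheat hlim x hx t ht
  obtain ⟨A, hAx, hA⟩ := hcov x hx
  rw [← A.apply_symm_apply x]
  refine h T hT c hc (fun y => u (A y)) ?_ ⟨M, fun y hy => hM _ (hA y hy)⟩ (fun y hy s hs => ?_)
    (fun y hy => hlim _ (hA y hy)) _ hAx t ht
  · exact hu.comp (f := fun p : EuclideanSpace ℝ (Fin n) × ℝ => (A p.1, p.2))
      ((A.contDiff.comp contDiff_fst).prodMk contDiff_snd).contDiffOn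
      fun p hp => ⟨hA _ hp.1, hp.2⟩
  · have hslice : ContDiffAt ℝ ∞ (fun z => u z s) (A y) :=
      (hu.contDiffAt ((hΩ'.prod isOpen_Ioo).mem_nhds ⟨hA y hy, hs⟩)).comp (A y)
        (f := fun z => (z, s)) (contDiffAt_id.prodMk contDiffAt_const)
    have hdiff : DifferentiableAt ℝ (fderiv ℝ (fun z => u z s)) (A y) :=
      (hslice.fderiv_right (m := ∞) le_rfl).differentiableAt (by simp)
    rw [lap_comp_isometry A hdiff, norm_gradient_comp_isometry A (fun z => u z s)]
    exact hheat _ (hA y hy) s hs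

end Isometry

section Angle

open InnerProductGeometry

variable {V : Type*} [NormedAddCommGroup V] [InnerProductSpace ℝ V] {x e : V}

theorem lineMap_ne_zero_of_angle_lt_pi (hx : x ≠ 0) (he : e ≠ 0) (hπ : angle e x < π) {s : ℝ}
    (hs : s ∈ Icc (0 : ℝ) 1) : AffineMap.lineMap e x s ≠ 0 := by
  intro h
  have hbtw : Sbtw ℝ e 0 x := ⟨⟨s, hs, h⟩, he.symm, hx.symm⟩
  have hangle := hbtw.angle₁₂₃_eq_pi
  rw [EuclideanGeometry.angle, vsub_eq_sub, vsub_eq_sub, sub_zero, sub_zero] at hangle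
  exact hπ.ne hangle

theorem exists_angle_eq (hx : x ≠ 0) (he : e ≠ 0) (hπ : angle e x < π) {δ : ℝ} (h0 : 0 ≤ δ)
    (h1 : δ ≤ angle e x) : ∃ w, w ≠ 0 ∧ angle e w = δ ∧ angle w x = angle e x - δ := by
  have hne := fun s hs => lineMap_ne_zero_of_angle_lt_pi hx he hπ (s := s) hs
  have hcont : ContinuousOn (fun s : ℝ => angle e (AffineMap.lineMap e x s)) (Icc 0 1) :=
    fun s hs => (ContinuousAt.comp (f := fun s : ℝ => (e, AffineMap.lineMap e x s))
      (continuousAt_angle (x := (e, AffineMap.lineMap e x s)) he (hne s hs))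
      (by fun_prop)).continuousWithinAt
  obtain ⟨s, hs, rfl⟩ := intermediate_value_Icc zero_le_one hcont
    (show δ ∈ Icc _ _ by simpa [angle_self he] using ⟨h0, h1⟩)
  refine ⟨_, hne s hs, rfl, ?_⟩
  rw [angle_eq_angle_add_add_angle_add_of_mem_span (x := e) (z := x) (hne s hs)
    (Submodule.mem_span_pair.mpr ⟨⟨1 - s, sub_nonneg.mpr hs.2⟩, ⟨s, hs.1⟩,
      (AffineMap.lineMap_apply_module e x s).symm⟩)]
  ring

theorem exists_angle_le_of_angle_lt_add (hx : x ≠ 0) (he : e ≠ 0) (hπ : angle e x < π) {a b : ℝ}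
    (ha : 0 ≤ a) (hb : 0 < b) (hab : angle e x < a + b) :
    ∃ w : V, ‖w‖ = 1 ∧ angle e w ≤ a ∧ angle w x < b := by
  obtain ⟨w, hw, hew, hwx⟩ := exists_angle_eq hx he hπ (le_min ha (angle_nonneg e x))
    (min_le_right _ _)
  have hpos : 0 < ‖w‖⁻¹ := inv_pos.mpr (norm_pos_iff.mpr hw)
  refine ⟨‖w‖⁻¹ • w, norm_smul_inv_norm (𝕜 := ℝ) hw, ?_, ?_⟩
  · rw [angle_smul_right_of_pos _ _ hpos, hew]
    exact min_le_left _ _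
  · rw [angle_smul_left_of_pos _ _ hpos, hwx, sub_lt_comm, lt_min_iff]
    constructor <;> linarith

end Angle

section Cone

open InnerProductGeometry

variable {n : ℕ} [NeZero n]

theorem isOpen_cone (θ : ℝ) : IsOpen (cone n θ) :=
  isOpen_lt (by fun_prop) (by fun_prop)

theorem mem_cone_iff_angle {θ : ℝ} (h0 : 0 < θ) (h1 : θ < 2 * π) {x : EuclideanSpace ℝ (Fin n)} :
    x ∈ cone n θ ↔ x ≠ 0 ∧ angle x (EuclideanSpace.single 0 1) < θ / 2 := by
  rw [cone, mem_ofPred_eq]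
  rcases eq_or_ne x 0 with rfl | hx
  · simp
  have hcos := cos_angle_mul_norm_mul_norm x (EuclideanSpace.single (0 : Fin n) (1 : ℝ))
  rw [EuclideanSpace.inner_single_right, PiLp.norm_single, norm_one, mul_one, conj_trivial,
    one_mul] at hcos
  rw [← hcos, mul_comm, mul_lt_mul_iff_left₀ (norm_pos_iff.mpr hx),
    strictAntiOn_cos.lt_iff_gt ⟨by linarith, by linarith⟩ ⟨angle_nonneg _ _, angle_le_pi _ _⟩,
    and_iff_right hx]

theorem hasBU_cone_mono {θ θ' : ℝ} (h0 : 0 < θ) (h1 : θ ≤ θ') (h2 : θ' < 2 * π)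
    (h : HasBU n (cone n θ)) : HasBU n (cone n θ') := by
  refine hasBU_of_isometry h (isOpen_cone θ') fun x hx => ?_
  obtain ⟨hx0, hxe⟩ := (mem_cone_iff_angle (h0.trans_le h1) h2).mp hx
  set e : EuclideanSpace ℝ (Fin n) := EuclideanSpace.single 0 1
  have he : ‖e‖ = 1 := by simp [e]
  rw [angle_comm] at hxe
  obtain ⟨w, hw, hew, hwx⟩ := exists_angle_le_of_angle_lt_add (a := (θ' - θ) / 2) (b := θ / 2)
    hx0 (norm_ne_zero_iff.mp (he.trans_ne one_ne_zero)) (by linarith) (by linarith) (by linarith)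
    (by linarith)
  set A := (ℝ ∙ (e - w))ᗮ.reflection
  have hA : A e = w := Submodule.reflection_sub (he.trans hw.symm)
  have hangle (y) : angle (A y) w = angle y e := hA ▸ A.toLinearIsometry.angle_map y e
  refine ⟨A, (mem_cone_iff_angle h0 (by linarith)).mpr ⟨by simpa using hx0, ?_⟩, fun y hy => ?_⟩
  · rwa [← hangle, A.apply_symm_apply, angle_comm]
  · obtain ⟨hy0, hye⟩ := (mem_cone_iff_angle h0 (by linarith)).mp hy
    refine (mem_cone_iff_angle (h0.trans_le h1) h2).mpr ⟨by simpa using hy0, ?_⟩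
    calc angle (A y) e ≤ angle (A y) w + angle w e := angle_le_angle_add_angle _ _ _
      _ < θ / 2 + (θ' - θ) / 2 := add_lt_add_of_lt_of_le (hangle y ▸ hye) (angle_comm w e ▸ hew)
      _ = θ' / 2 := by ring

theorem hasBU_cone_pi : HasBU n (cone n π) := by
  have hcone : cone n π = {x | 0 < x 0} := by simp [cone]
  rw [hcone]
  exact SpaceTime.hasBU_halfSpace 0

end Cone

section ComplexGaussian

/-- The complex Gaussian `τ^(-1/2) exp (-ζ² / τ)`, a solution of `∂_ζ² G = 4 ∂_τ G`. If
`L` is a complex linear form on `ℝⁿ` with `∑ᵢ (L eᵢ)² = -1/4`, then `G (L x + a, 1 - t)` solves the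
heat equation forward in `t`. -/
noncomputable def complexGaussian (ζ : ℂ) (τ : ℝ) : ℂ :=
  Complex.exp (-(Real.log τ / 2 : ℝ) - ζ ^ 2 * (τ⁻¹ : ℝ))

theorem hasDerivAt_complexGaussian (τ : ℝ) (ζ : ℂ) :
    HasDerivAt (fun z => complexGaussian z τ) (-2 * ζ * (τ⁻¹ : ℝ) * complexGaussian ζ τ) ζ := by
  refine ((((hasDerivAt_pow 2 ζ).mul_const ((τ⁻¹ : ℝ) : ℂ)).const_sub
    (-((Real.log τ / 2 : ℝ) : ℂ))).cexp).congr_deriv ?_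
  rw [complexGaussian]
  push_cast
  ring

theorem hasDerivAt_deriv_complexGaussian (τ : ℝ) (ζ : ℂ) :
    HasDerivAt (fun z => -2 * z * (τ⁻¹ : ℝ) * complexGaussian z τ)
      ((-2 * (τ⁻¹ : ℝ) + 4 * ζ ^ 2 * (τ⁻¹ : ℝ) ^ 2) * complexGaussian ζ τ) ζ := by
  refine ((((hasDerivAt_id ζ).const_mul (-2)).mul_const ((τ⁻¹ : ℝ) : ℂ)).mul
    (hasDerivAt_complexGaussian τ ζ)).congr_deriv ?_
  simp only [id]
  ring

theorem hasDerivAt_complexGaussian_time (ζ : ℂ) {τ : ℝ} (hτ : τ ≠ 0) :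
    HasDerivAt (complexGaussian ζ)
      ((-2 * (τ⁻¹ : ℝ) + 4 * ζ ^ 2 * (τ⁻¹ : ℝ) ^ 2) / 4 * complexGaussian ζ τ) τ := by
  have h : HasDerivAt (complexGaussian ζ) (complexGaussian ζ τ * _) τ :=
    (((hasDerivAt_log hτ).div_const 2).ofReal_comp.neg.sub
      ((hasDerivAt_inv hτ).ofReal_comp.const_mul (ζ ^ 2))).cexp
  refine h.congr_deriv ?_
  push_cast
  ring

theorem re_complexGaussian_ofReal_pos (r τ : ℝ) : 0 < (complexGaussian r τ).re := by
  have h : complexGaussian r τ = (Real.exp (-(Real.log τ / 2) - r ^ 2 * τ⁻¹) : ℝ) := by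
    rw [complexGaussian]
    push_cast
    rfl
  rw [h, Complex.ofReal_re]
  exact Real.exp_pos _

theorem norm_complexGaussian_le {ζ : ℂ} {τ δ : ℝ} (hτ : 0 < τ) (hδ : 0 < δ)
    (h : δ ≤ (ζ ^ 2).re) : ‖complexGaussian ζ τ‖ ≤ √τ / δ := by
  have hsqrt : 0 < √τ := Real.sqrt_pos.mpr hτ
  have hexp : δ * τ⁻¹ ≤ Real.exp ((ζ ^ 2).re * τ⁻¹) :=
    calc δ * τ⁻¹ ≤ (ζ ^ 2).re * τ⁻¹ := by gcongr
      _ ≤ Real.exp ((ζ ^ 2).re * τ⁻¹) := by linarith [Real.add_one_le_exp ((ζ ^ 2).re * τ⁻¹)]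
  have hnorm : ‖complexGaussian ζ τ‖ = (√τ * Real.exp ((ζ ^ 2).re * τ⁻¹))⁻¹ := by
    rw [complexGaussian, Complex.norm_exp, Complex.sub_re, Complex.neg_re, Complex.ofReal_re,
      Complex.re_mul_ofReal, ← Real.log_sqrt hτ.le, ← neg_add', Real.exp_neg, Real.exp_add,
      Real.exp_log hsqrt]
  calc ‖complexGaussian ζ τ‖ ≤ (√τ * (δ * τ⁻¹))⁻¹ := by rw [hnorm]; gcongr
    _ = √τ / δ := by
      rw [mul_inv, mul_inv, inv_inv]
      nth_rewrite 2 [← Real.mul_self_sqrt hτ.le]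
      field_simp

end ComplexGaussian

section Counterexample

section RealPart

variable {X : Type*} [NormedAddCommGroup X] [NormedSpace ℝ X] (L : X →L[ℝ] ℂ) (a : ℂ)

theorem dirDeriv_re_comp {H : ℂ → ℂ} {d : ℂ} {x : X} (hH : HasDerivAt H d (L x + a)) (v : X) :
    dirDeriv v (fun y => (H (L y + a)).re) x = (d * L v).re := by
  have h : HasFDerivAt (fun y => (H (L y + a)).re) _ x :=
    Complex.reCLM.hasFDerivAt.comp x
      ((hH.hasFDerivAt.restrictScalars ℝ).comp x (L.hasFDerivAt.add_const a))
  rw [dirDeriv, h.fderiv]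
  simp [mul_comm]

theorem frameLap_re_comp {ι : Type*} [Fintype ι] (e : ι → X) {H H₁ H₂ : ℂ → ℂ}
    (h1 : ∀ z, HasDerivAt H (H₁ z) z) (h2 : ∀ z, HasDerivAt H₁ (H₂ z) z) (x : X) :
    frameLap e (fun y => (H (L y + a)).re) x = (H₂ (L x + a) * ∑ i, L (e i) ^ 2).re := by
  rw [Finset.mul_sum, Complex.re_sum, frameLap]
  refine Finset.sum_congr rfl fun i _ => ?_
  rw [funext fun y => dirDeriv_re_comp L a (h1 (L y + a)) (e i),
    dirDeriv_re_comp L a (H := fun z => H₁ z * L (e i)) ((h2 _).mul_const _), mul_assoc, pow_two]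

end RealPart

variable {n : ℕ} (L : EuclideanSpace ℝ (Fin n) →L[ℝ] ℂ) (a : ℂ)

theorem deriv_eq_lap_re_complexGaussian (hL : ∑ i, L (EuclideanSpace.single i 1) ^ 2 = -1 / 4)
    (x : EuclideanSpace ℝ (Fin n)) {t : ℝ} (ht : t < 1) :
    deriv (fun s => (complexGaussian (L x + a) (1 - s)).re) t =
      lap (fun y => (complexGaussian (L y + a) (1 - t)).re) x := by
  have htime : HasDerivAt (fun s => (complexGaussian (L x + a) (1 - s)).re) _ t :=
    Complex.reCLM.hasFDerivAt.comp_hasDerivAt t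
      ((hasDerivAt_complexGaussian_time (L x + a) (sub_pos.mpr ht).ne').scomp t
        ((hasDerivAt_id t).const_sub 1))
  rw [htime.deriv, lap_eq_frameLap, frameLap_re_comp L a _ (hasDerivAt_complexGaussian (1 - t))
    (hasDerivAt_deriv_complexGaussian (1 - t)), hL, Complex.reCLM_apply, neg_one_smul]
  ring_nf

theorem contDiffOn_re_complexGaussian (Ω : Set (EuclideanSpace ℝ (Fin n))) :
    ContDiffOn ℝ ∞ (fun p : SpaceTime n => (complexGaussian (L p.1 + a) (1 - p.2)).re)
      (Ω ×ˢ Ioo 0 1) := by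
  have hτ : ContDiffOn ℝ ∞ (fun p : SpaceTime n => 1 - p.2) (Ω ×ˢ Ioo 0 1) :=
    (contDiff_const.sub contDiff_snd).contDiffOn
  have hτ0 : ∀ p ∈ Ω ×ˢ Ioo (0 : ℝ) 1, 1 - p.2 ≠ 0 := fun p hp => (sub_pos.mpr hp.2.2).ne'
  have hζ : ContDiffOn ℝ ∞ (fun p : SpaceTime n => (L p.1 + a) ^ 2) (Ω ×ˢ Ioo 0 1) :=
    (((L.contDiff.comp contDiff_fst).add contDiff_const).pow 2).contDiffOn
  exact Complex.reCLM.contDiff.comp_contDiffOn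
    ((Complex.ofRealCLM.contDiff.comp_contDiffOn ((hτ.log hτ0).div_const 2)).neg.sub
      (hζ.mul (Complex.ofRealCLM.contDiff.comp_contDiffOn (hτ.inv hτ0)))).cexp

variable {L a}

theorem not_hasBU_of_le_re_sq {Ω : Set (EuclideanSpace ℝ (Fin n))} {δ : ℝ}
    (hL : ∑ i, L (EuclideanSpace.single i 1) ^ 2 = -1 / 4) (hδ : 0 < δ)
    (hΩ : ∀ x ∈ Ω, δ ≤ ((L x + a) ^ 2).re) {x₀ : EuclideanSpace ℝ (Fin n)} (hx₀ : x₀ ∈ Ω)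
    {r : ℝ} (hr : L x₀ + a = r) : ¬ HasBU n Ω := by
  intro h
  have hbound (x) (hx : x ∈ Ω) (t : ℝ) (ht : t ∈ Ioo (0 : ℝ) 1) :
      |(complexGaussian (L x + a) (1 - t)).re| ≤ √(1 - t) / δ :=
    (Complex.abs_re_le_norm _).trans (norm_complexGaussian_le (sub_pos.mpr ht.2) hδ (hΩ x hx))
  have hlim : Tendsto (fun t : ℝ => √(1 - t) / δ) (𝓝[<] 1) (𝓝 0) :=
    (Continuous.tendsto' (by fun_prop) 1 0 (by simp)).mono_left nhdsWithin_le_nhds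
  have hzero := h 1 one_pos 0 le_rfl (fun x t => (complexGaussian (L x + a) (1 - t)).re)
    (contDiffOn_re_complexGaussian L a Ω) ⟨1 / δ, fun x hx t ht => (hbound x hx t ht).trans ?_⟩
    (fun x _ t ht => ?_) (fun x hx => squeeze_zero_norm' ?_ hlim) x₀ hx₀ (1 / 2) (by norm_num)
  · rw [hr] at hzero
    exact (re_complexGaussian_ofReal_pos r _).ne' hzero
  · have : √(1 - t) ≤ 1 := Real.sqrt_le_one.mpr (by linarith [ht.1])
    gcongr
  · rw [deriv_eq_lap_re_complexGaussian L a hL x ht.2, sub_self, abs_zero, zero_mul]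
  · filter_upwards [Ioo_mem_nhdsLT zero_lt_one] with t ht using hbound x hx t ht

end Counterexample

section NarrowCone

variable {n : ℕ} [NeZero n] {j : Fin n}

/-- The complex linear form `x ↦ α x₁ + i β xⱼ` on `ℝⁿ`. -/
noncomputable def complexForm (j : Fin n) (α β : ℝ) : EuclideanSpace ℝ (Fin n) →L[ℝ] ℂ :=
  (EuclideanSpace.proj 0 : EuclideanSpace ℝ (Fin n) →L[ℝ] ℝ).smulRight (α : ℂ) +
    (EuclideanSpace.proj j : EuclideanSpace ℝ (Fin n) →L[ℝ] ℝ).smulRight (β * Complex.I)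

theorem complexForm_apply (α β : ℝ) (x : EuclideanSpace ℝ (Fin n)) :
    complexForm j α β x = (α * x 0 : ℝ) + (β * x j : ℝ) * Complex.I := by
  simp only [complexForm, add_apply, ContinuousLinearMap.smulRight_apply, PiLp.proj_apply,
    Complex.real_smul]
  push_cast
  ring

theorem sum_complexForm_single_sq (hj : j ≠ 0) (α β : ℝ) :
    ∑ i, complexForm j α β (EuclideanSpace.single i 1) ^ 2 = (α ^ 2 - β ^ 2 : ℝ) := by
  rw [Finset.sum_eq_add 0 j hj.symm]
  · simp only [complexForm_apply, PiLp.single_apply, hj, hj.symm, if_true, if_false]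
    simp [mul_pow, sub_eq_add_neg]
  · intro i _ hi
    simp [complexForm_apply, hi.1.symm, hi.2.symm]
  · simp
  · simp

theorem re_complexForm_add_sq (α β a : ℝ) (x : EuclideanSpace ℝ (Fin n)) :
    ((complexForm j α β x + a) ^ 2).re = (α * x 0 + a) ^ 2 - (β * x j) ^ 2 := by
  rw [complexForm_apply, sq, Complex.mul_re]
  simp
  ring

theorem sq_add_sq_le_norm_sq (hj : j ≠ 0) (x : EuclideanSpace ℝ (Fin n)) :
    x 0 ^ 2 + x j ^ 2 ≤ ‖x‖ ^ 2 := by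
  rw [EuclideanSpace.norm_sq_eq, ← Finset.sum_pair hj.symm (f := fun i => x i ^ 2)]
  simp only [Real.norm_eq_abs, sq_abs]
  exact Finset.sum_le_sum_of_subset_of_nonneg (Finset.subset_univ _) fun i _ _ => sq_nonneg _

theorem cos_sq_mul_le_of_mem_cone (hj : j ≠ 0) {θ : ℝ} (hθ : 0 ≤ cos (θ / 2))
    {x : EuclideanSpace ℝ (Fin n)} (hx : x ∈ cone n θ) :
    cos (θ / 2) ^ 2 * x j ^ 2 ≤ sin (θ / 2) ^ 2 * x 0 ^ 2 := by
  have hcone : cos (θ / 2) ^ 2 * (x 0 ^ 2 + x j ^ 2) ≤ x 0 ^ 2 :=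
    calc cos (θ / 2) ^ 2 * (x 0 ^ 2 + x j ^ 2) ≤ cos (θ / 2) ^ 2 * ‖x‖ ^ 2 := by
          gcongr; exact sq_add_sq_le_norm_sq hj x
      _ = (‖x‖ * cos (θ / 2)) ^ 2 := by ring
      _ ≤ x 0 ^ 2 := pow_le_pow_left₀ (by positivity) hx.le 2
  rw [sin_sq]
  linarith

theorem not_hasBU_cone (hn : 2 ≤ n) {θ : ℝ} (h0 : 0 < θ) (h1 : θ < π / 2) :
    ¬ HasBU n (cone n θ) := by
  obtain ⟨j, hj⟩ : ∃ j : Fin n, j ≠ 0 := ⟨⟨1, hn⟩, by simp [Fin.ext_iff]⟩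
  have hcosθ : 0 < cos θ := cos_pos_of_mem_Ioo ⟨by linarith, h1⟩
  have hcos : 0 < cos (θ / 2) := cos_pos_of_mem_Ioo ⟨by linarith, by linarith⟩
  have hsin : 0 < sin (θ / 2) := sin_pos_of_pos_of_lt_pi (by linarith) (by linarith)
  set l := (2 * √(cos θ))⁻¹
  have hls : 0 < (l * sin (θ / 2)) ^ 2 := by positivity
  have hscale : (l * sin (θ / 2)) ^ 2 - (l * cos (θ / 2)) ^ 2 = -1 / 4 := by
    have hdouble : sin (θ / 2) ^ 2 - cos (θ / 2) ^ 2 = -cos θ := by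
      rw [← mul_div_cancel₀ θ two_ne_zero, cos_two_mul', mul_div_cancel_left₀ _ two_ne_zero]
      ring
    rw [mul_pow, mul_pow, ← mul_sub, hdouble, inv_pow, mul_pow, sq_sqrt hcosθ.le]
    field_simp
    norm_num
  refine not_hasBU_of_le_re_sq (L := complexForm j (l * sin (θ / 2)) (l * cos (θ / 2)))
    (a := (l * sin (θ / 2) : ℝ)) (δ := (l * sin (θ / 2)) ^ 2) ?_ hls
    (fun x hx => ?_) (x₀ := EuclideanSpace.single 0 1) (r := 2 * (l * sin (θ / 2))) ?_ ?_
  · rw [sum_complexForm_single_sq hj, hscale]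
    norm_num
  · have hx0 : 0 ≤ x 0 := (show 0 ≤ ‖x‖ * cos (θ / 2) by positivity).trans hx.le
    have hxj := mul_le_mul_of_nonneg_left (cos_sq_mul_le_of_mem_cone hj hcos.le hx) (sq_nonneg l)
    rw [re_complexForm_add_sq]
    nlinarith [mul_nonneg hls.le hx0]
  · have : cos (θ / 2) < 1 := by
      rw [← cos_zero]
      exact cos_lt_cos_of_nonneg_of_le_pi le_rfl (by linarith) (by linarith)
    simpa [cone] using this
  · rw [complexForm_apply]
    simp [hj]
    ring

end NarrowCone

end BackwardUniqueness

/-- There is a critical angle `θ₀ ∈ [π/2, π]` such that (BU) holds for cones of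
opening angle `θ ∈ (θ₀, 2π)` and fails for cones of opening angle `θ ∈ (0, θ₀)`. -/
theorem exists_critical_angle (n : ℕ) [NeZero n] (hn : 2 ≤ n) :
    ∃ θ₀ ∈ Set.Icc (π / 2) π,
      (∀ θ ∈ Set.Ioo θ₀ (2 * π), HasBU n (cone n θ)) ∧
      (∀ θ ∈ Set.Ioo 0 θ₀, ¬ HasBU n (cone n θ)) := by
  set S := {θ | 0 < θ ∧ HasBU n (cone n θ)}
  have hπ : π ∈ S := ⟨pi_pos, BackwardUniqueness.hasBU_cone_pi⟩
  have hlow : ∀ θ ∈ S, π / 2 ≤ θ := fun θ hθ =>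
    not_lt.mp fun h => BackwardUniqueness.not_hasBU_cone hn hθ.1 h hθ.2
  have hbdd : BddBelow S := ⟨_, hlow⟩
  refine ⟨sInf S, ⟨le_csInf ⟨π, hπ⟩ hlow, csInf_le hbdd hπ⟩, fun θ hθ => ?_, fun θ hθ h => ?_⟩
  · obtain ⟨θ', hθ', hlt⟩ := exists_lt_of_csInf_lt ⟨π, hπ⟩ hθ.1
    exact BackwardUniqueness.hasBU_cone_mono hθ'.1 hlt.le hθ.2 hθ'.2
  · exact (csInf_le hbdd ⟨hθ.1, h⟩).not_gt hθ.2
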